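/- arXiv:1206.0268 — 5 statements merged into one kernel-verified Lean document; each statement's English description precedes it below -/
import Mathlib

section
/- Let c ∈ (0,1), δ > 0, and let Ψ_δ : ℝ → ℝ be continuously differentiable with bounded derivative. A function R ∈ W^{2,∞}(ℝ) solves the travelling wave equation c²R''(x) = Δ₁(R − Ψ'_δ ∘ R)(x) for almost every x ∈ ℝ if and only if there exists a constant μ ∈ ℝ such that M R = A²(Ψ'_δ ∘ R) + μ holds (almost) everywhere on ℝ. -/
open MeasureTheory Real Filter Topology

/-- The averaging operator `(A F)(x) = ∫_{x-1/2}^{x+1/2} F(s) ds`. -/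
noncomputable def Aop (F : ℝ → ℝ) : ℝ → ℝ := fun x => ∫ s in (x - 1/2)..(x + 1/2), F s

/-- The operator `M F = A(A F) - c² F`. -/
noncomputable def Mop (c : ℝ) (F : ℝ → ℝ) : ℝ → ℝ := fun x => Aop (Aop F) x - c ^ 2 * F x

/-- The discrete Laplacian `Δ₁ F(x) = F(x+1) - 2 F(x) + F(x-1)`. -/
def Delta1 (F : ℝ → ℝ) : ℝ → ℝ := fun x => F (x + 1) - 2 * F x + F (x - 1)

/-- Membership in `W^{2,∞}(ℝ)`: bounded, differentiable with bounded derivative,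
and the derivative is Lipschitz (so the second derivative exists a.e. and is bounded). -/
def IsW2inf (S : ℝ → ℝ) : Prop :=
  Differentiable ℝ S ∧ (∃ C : ℝ, ∀ x, |S x| ≤ C ∧ |deriv S x| ≤ C) ∧
    ∃ K : NNReal, LipschitzWith K (deriv S)


lemma Aop_hasDeriv {F : ℝ → ℝ} (hF : Continuous F) (x : ℝ) :
    HasDerivAt (Aop F) (F (x + 1/2) - F (x - 1/2)) x := by
  have h : ∀ y, HasDerivAt (fun u => ∫ s in (0:ℝ)..u, F s) (F y) y := fun y =>
    hF.integral_hasStrictDerivAt 0 y |>.hasDerivAt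
  have e : Aop F = fun x => (∫ s in (0:ℝ)..(x + 1/2), F s) - ∫ s in (0:ℝ)..(x - 1/2), F s := by
    funext y
    unfold Aop
    rw [intervalIntegral.integral_interval_sub_left] <;> exact hF.intervalIntegrable _ _
  rw [e]
  exact ((h (x + 1/2)).comp_add_const x (1/2)).sub ((h (x - 1/2)).comp_sub_const x (1/2))

lemma Aop_cont {F : ℝ → ℝ} (hF : Continuous F) : Continuous (Aop F) :=
  continuous_iff_continuousAt.2 fun x => (Aop_hasDeriv hF x).continuousAt

lemma Aop_bdd {F : ℝ → ℝ} {C : ℝ} (h : ∀ x, |F x| ≤ C) (x : ℝ) : |Aop F x| ≤ C := by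
  have := intervalIntegral.norm_integral_le_of_norm_le_const (a := x - 1/2) (b := x + 1/2)
    (f := F) (C := C) (fun y _ => h y)
  have e : |x + 1/2 - (x - 1/2)| = 1 := by norm_num
  rw [e, mul_one] at this
  exact this

lemma Aop_sub {F G : ℝ → ℝ} (hF : Continuous F) (hG : Continuous G) :
    Aop (fun y => F y - G y) = fun y => Aop F y - Aop G y := by
  funext x
  exact intervalIntegral.integral_sub (hF.intervalIntegrable _ _) (hG.intervalIntegrable _ _)

lemma AA_hasDeriv2 {F : ℝ → ℝ} (hF : Continuous F) (x : ℝ) :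
    HasDerivAt (fun x => Aop F (x + 1/2) - Aop F (x - 1/2)) (Delta1 F x) x := by
  have h1 := (Aop_hasDeriv hF (x + 1/2)).comp_add_const x (1/2)
  have h2 := (Aop_hasDeriv hF (x - 1/2)).comp_sub_const x (1/2)
  refine (h1.sub h2).congr_deriv ?_
  unfold Delta1
  ring_nf

theorem stmt0 (c δ : ℝ) (hc0 : 0 < c) (hc1 : c < 1) (hδ : 0 < δ)
    (Ψδ Ψd : ℝ → ℝ) (hderiv : ∀ r, HasDerivAt Ψδ (Ψd r) r)
    (hcont : Continuous Ψd) (hbd : ∃ B : ℝ, ∀ r, |Ψd r| ≤ B)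
    (R : ℝ → ℝ) (hR : IsW2inf R) :
    (∀ᵐ x ∂(volume : Measure ℝ), DifferentiableAt ℝ (deriv R) x ∧
        c ^ 2 * deriv (deriv R) x = Delta1 (fun y => R y - Ψd (R y)) x) ↔
      ∃ μ : ℝ, ∀ x, Mop c R x = Aop (Aop (fun y => Ψd (R y))) x + μ := by
  obtain ⟨hd, ⟨C, hC⟩, K, hK⟩ := hR
  obtain ⟨B, hB⟩ := hbd
  have hRc : Continuous R := hd.continuous
  have hPc : Continuous (fun y => Ψd (R y)) := hcont.comp hRc
  set G : ℝ → ℝ := fun y => R y - Ψd (R y) with hG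
  have hGc : Continuous G := hRc.sub hPc
  have hGb : ∀ x, |G x| ≤ C + B := fun x =>
    (abs_sub _ _).trans (add_le_add (hC x).1 (hB _))
  have hAA : ∀ x, Aop (Aop G) x = Aop (Aop R) x - Aop (Aop (fun y => Ψd (R y))) x := by
    intro x
    rw [hG, Aop_sub hRc hPc, Aop_sub (Aop_cont hRc) (Aop_cont hPc)]
  have hP1 := Aop_hasDeriv (Aop_cont hGc)
  have hP2 := AA_hasDeriv2 hGc
  have hH : ∀ x, HasDerivAt (fun x => c ^ 2 * R x - Aop (Aop G) x)
      (c ^ 2 * deriv R x - (Aop G (x + 1/2) - Aop G (x - 1/2))) x := fun x =>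
    ((hd x).hasDerivAt.const_mul (c ^ 2)).sub (hP1 x)
  have hDc : Continuous (Delta1 G) := by unfold Delta1; fun_prop
  constructor
  · intro h
    set Q : ℝ → ℝ := fun x => c ^ 2 * deriv R x - (Aop G (x + 1/2) - Aop G (x - 1/2)) with hQ
    have hconst : ∀ x, Q x = Q 0 := by
      intro x
      have h1 : ∫ s in (0:ℝ)..x, deriv (deriv R) s = deriv R x - deriv R 0 :=
        (hK.lipschitzOnWith (s := Set.uIcc 0 x)).absolutelyContinuousOnInterval.integral_deriv_eq_sub
      have h2 : ∫ s in (0:ℝ)..x, Delta1 G s = _ :=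
        intervalIntegral.integral_eq_sub_of_hasDerivAt (fun y _ => hP2 y)
          (hDc.intervalIntegrable _ _)
      have h3 : ∫ s in (0:ℝ)..x, c ^ 2 * deriv (deriv R) s = ∫ s in (0:ℝ)..x, Delta1 G s :=
        intervalIntegral.integral_congr_ae (h.mono fun y hy _ => hy.2)
      rw [intervalIntegral.integral_const_mul, h1, h2] at h3
      simp only [hQ]
      linarith
    set H : ℝ → ℝ := fun x => c ^ 2 * R x - Aop (Aop G) x with hHd
    have hlin : ∀ x, H x = H 0 + Q 0 * x := by
      have hz : ∀ x, HasDerivAt (fun x => H x - Q 0 * x) 0 x := by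
        intro x
        have := (hH x).sub ((hasDerivAt_id x).const_mul (Q 0))
        refine this.congr_deriv ?_
        have h5 : Q x - Q 0 * 1 = 0 := by
          rw [hconst x]; ring
        exact h5
      intro x
      have := is_const_of_deriv_eq_zero (fun y => (hz y).differentiableAt) (fun y => (hz y).deriv) x 0
      simp only [mul_zero, sub_zero] at this
      linarith
    have hHb : ∀ x, |H x| ≤ c ^ 2 * C + (C + B) := by
      intro x
      refine (abs_sub _ _).trans (add_le_add ?_ (Aop_bdd (Aop_bdd hGb) x))
      rw [abs_mul, abs_of_nonneg (sq_nonneg c)]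
      exact mul_le_mul_of_nonneg_left (hC x).1 (sq_nonneg c)
    have hQ0 : Q 0 = 0 := by
      by_contra hne
      set D := c ^ 2 * C + (C + B)
      have h1 := hlin ((2 * D + 1) / Q 0)
      rw [mul_div_cancel₀ _ hne] at h1
      have h2 := abs_le.1 (hHb ((2 * D + 1) / Q 0))
      have h3 := abs_le.1 (hHb 0)
      linarith [h2.2, h3.1]
    refine ⟨-H 0, fun x => ?_⟩
    have h1 := hlin x
    rw [hQ0, zero_mul, add_zero] at h1
    have h2 : H x = c ^ 2 * R x - Aop (Aop G) x := rfl
    have h3 := hAA x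
    unfold Mop
    linarith
  · rintro ⟨μ, hμ⟩
    have he : (fun x => c ^ 2 * R x - Aop (Aop G) x) = fun _ => -μ := by
      funext x
      have h1 := hμ x
      have h3 := hAA x
      unfold Mop at h1
      linarith
    have hR' : deriv R = fun x => (c ^ 2)⁻¹ * (Aop G (x + 1/2) - Aop G (x - 1/2)) := by
      funext x
      have h1 := hH x
      rw [he] at h1
      have h2 := h1.unique (hasDerivAt_const x (-μ))
      have hc2 : c ^ 2 ≠ 0 := by positivity
      rw [← sub_eq_zero.1 h2, inv_mul_cancel_left₀ hc2]
    refine Eventually.of_forall fun x => ?_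
    have h4 : HasDerivAt (deriv R) ((c ^ 2)⁻¹ * Delta1 G x) x := by
      rw [hR']
      exact (hP2 x).const_mul _
    refine ⟨h4.differentiableAt, ?_⟩
    rw [h4.deriv]
    field_simp
end

section
/- Let c ∈ (0,1) and let F ∈ L^∞(ℝ) satisfy (A²F)(x) = c²F(x) for almost every x ∈ ℝ. Then there exist finitely many positive real numbers k₁ < … < k_n with a(k_i)² = c² for each i, and real coefficients α_i, β_i, such that F(x) = Σ_{i=1}^n (α_i cos(k_i x) + β_i sin(k_i x)) for almost every x ∈ ℝ. In other words, every bounded kernel function of M = A² − c² is a finite linear combination of the harmonics cos(k·), sin(k·) over the positive real roots k of m(k) = a(k)² − c². -/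
open MeasureTheory Real Filter Topology

/-- The symbol `a(k) = sin(k/2)/(k/2)`, with `a(0) = 1`. -/
noncomputable def symb (k : ℝ) : ℝ := if k = 0 then 1 else Real.sin (k / 2) / (k / 2)

theorem entire_zero (H : ℂ → ℂ) (hH : Differentiable ℂ H) (C : ℝ)
    (hb : ∀ s : ℂ, ‖H s‖ * |s.re| ≤ C) : ∀ s, H s = 0 := by
  intro s
  have key : ∀ R : ℝ, ‖s‖ < R → ‖H s * (1 + s ^ 2 / (R:ℂ) ^ 2)‖ ≤ 2 * C / R := by
    intro R hR
    have hR0 : 0 < R := lt_of_le_of_lt (norm_nonneg _) hR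
    have hRC : (R:ℂ) ≠ 0 := by exact_mod_cast hR0.ne'
    refine Complex.norm_le_of_forall_mem_frontier_norm_le (U := Metric.ball (0:ℂ) R)
      (f := fun z => H z * (1 + z ^ 2 / (R:ℂ) ^ 2)) Metric.isBounded_ball ?_ ?_ ?_
    · apply Differentiable.diffContOnCl
      fun_prop
    · intro z hz
      rw [frontier_ball _ hR0.ne'] at hz
      have hz' : ‖z‖ = R := by simpa using hz
      have e : (1 + z ^ 2 / (R:ℂ) ^ 2) = z * ((2 * z.re : ℝ) : ℂ) / (R:ℂ) ^ 2 := by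
        have h1 : z * (starRingEnd ℂ) z = (R:ℂ)^2 := by
          rw [Complex.mul_conj, Complex.normSq_eq_norm_sq, hz']; push_cast; rfl
        have h2 : z + (starRingEnd ℂ) z = ((2 * z.re : ℝ) : ℂ) := Complex.add_conj z
        field_simp
        rw [← h1, ← h2]; ring
      simp only [e, norm_mul, norm_div, norm_pow, Complex.norm_real, hz', Real.norm_eq_abs,
        abs_of_pos hR0, abs_two]
      have := hb z
      have e2 : ‖H z‖ * (R * (2 * |z.re|) / R ^ 2) = 2 * (‖H z‖ * |z.re|) / R := by
        field_simp
      rw [e2]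
      gcongr
    · apply subset_closure
      simpa using hR
  have t1 : Tendsto (fun R : ℝ => ‖H s * (1 + s ^ 2 / (R:ℂ) ^ 2)‖) atTop (𝓝 ‖H s * (1 + 0)‖) := by
    apply Tendsto.norm
    apply Tendsto.const_mul
    apply Tendsto.const_add
    have : Tendsto (fun R : ℝ => ((s ^ 2 : ℂ) * (((R ^ 2)⁻¹ : ℝ) : ℂ))) atTop (𝓝 (s ^ 2 * ((0:ℝ):ℂ))) := by
      apply Tendsto.const_mul
      apply (Complex.continuous_ofReal.tendsto _).comp
      exact tendsto_inv_atTop_zero.comp (tendsto_pow_atTop two_ne_zero)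
    simpa [div_eq_mul_inv] using this
  have t2 : Tendsto (fun R : ℝ => 2 * C / R) atTop (𝓝 0) :=
    tendsto_const_nhds.div_atTop tendsto_id
  have := le_of_tendsto_of_tendsto t1 t2 (by
    filter_upwards [eventually_gt_atTop ‖s‖] with R hR using key R hR)
  simpa using this

theorem removable_finset (S : Finset ℂ) : ∀ (h : ℂ → ℂ),
    (∀ s ∉ S, DifferentiableAt ℂ h s) →
    (∀ p ∈ S, Tendsto (fun s => (s - p) * h s) (𝓝[≠] p) (𝓝 0)) →
    ∃ H : ℂ → ℂ, Differentiable ℂ H ∧ ∀ s ∉ S, H s = h s := by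
  classical
  induction S using Finset.induction_on with
  | empty => intro h h1 _; exact ⟨h, fun s => h1 s (by simp), fun _ _ => rfl⟩
  | insert p S hp ih =>
    intro h h1 h2
    set h' := Function.update h p ((𝓝[≠] p).limUnder h) with hh'
    have hev : ∀ q, ∀ᶠ s in 𝓝[≠] q, h' s = h s := by
      intro q
      by_cases hq : q = p
      · subst hq
        filter_upwards [self_mem_nhdsWithin] with s hs
        exact Function.update_of_ne hs _ _
      · apply eventually_nhdsWithin_of_eventually_nhds
        filter_upwards [isOpen_ne.mem_nhds hq] with s hs
        exact Function.update_of_ne hs _ _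
    have hdp : ∀ s ∉ S, DifferentiableAt ℂ h' s := by
      intro s hs
      by_cases hsp : s = p
      · subst hsp
        have hU : (↑S : Set ℂ)ᶜ ∈ 𝓝 s := S.finite_toSet.isClosed.isOpen_compl.mem_nhds hs
        have := Complex.differentiableOn_update_limUnder_of_isLittleO (f := h) hU
          (fun z hz => (h1 z (by
            simp only [Finset.mem_insert, not_or]
            exact ⟨hz.2, hz.1⟩)).differentiableWithinAt) (by
            rw [Asymptotics.isLittleO_iff_tendsto']
            · have h3 := h2 s (by simp)
              have h4 : Tendsto (fun z => (z - s) * h s) (𝓝[≠] s) (𝓝 0) := by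
                apply tendsto_nhdsWithin_of_tendsto_nhds
                have : ContinuousAt (fun z => (z - s) * h s) s := by fun_prop
                simpa [ContinuousAt] using this
              have h5 := h3.sub h4
              rw [sub_zero] at h5
              refine h5.congr (fun z => ?_)
              rw [div_inv_eq_mul]; ring
            · filter_upwards [self_mem_nhdsWithin] with z hz hz0
              exact absurd (sub_eq_zero.1 (inv_eq_zero.1 hz0)) hz)
        exact this.differentiableAt hU
      · have : h' =ᶠ[𝓝 s] h := by
          filter_upwards [isOpen_ne.mem_nhds hsp] with z hz
          exact Function.update_of_ne hz _ _
        exact (h1 s (by simp [hsp, hs])).congr_of_eventuallyEq this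
    obtain ⟨H, H1, H2⟩ := ih h' hdp (by
      intro q hq
      refine (h2 q (by simp [hq])).congr' ?_
      filter_upwards [hev q] with z hz
      rw [hz])
    refine ⟨H, H1, fun s hs => ?_⟩
    simp only [Finset.mem_insert, not_or] at hs
    rw [H2 s hs.2, hh', Function.update_of_ne hs.1]

theorem carleman (f : ℂ → ℂ) (S : Finset ℂ) (hS : ∀ p ∈ S, p.re = 0)
    (hd : ∀ s ∉ S, DifferentiableAt ℂ f s) (a : ℂ → ℂ)
    (hl : ∀ p ∈ S, Tendsto (fun s => (s - p) * f s) (𝓝[≠] p) (𝓝 (a p)))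
    (C : ℝ) (hb : ∀ s : ℂ, s.re ≠ 0 → ‖f s‖ * |s.re| ≤ C) :
    ∀ s ∉ S, f s = ∑ p ∈ S, a p / (s - p) := by
  classical
  obtain ⟨H, H1, H2⟩ := removable_finset S (fun s => f s - ∑ p ∈ S, a p / (s - p)) (by
    intro s hs
    refine (hd s hs).sub ?_
    refine DifferentiableAt.fun_sum (fun p hp => ?_)
    refine (differentiableAt_const _).div (by fun_prop) ?_
    rw [sub_ne_zero]; rintro rfl; exact hs hp) (by
    intro p hp
    have h1 : Tendsto (fun s => ∑ q ∈ S, (s - p) * (a q / (s - q))) (𝓝[≠] p)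
        (𝓝 (∑ q ∈ S, if q = p then a p else 0)) := by
      refine tendsto_finsetSum _ (fun q hq => ?_)
      by_cases hqp : q = p
      · subst hqp
        simp only [if_true]
        refine tendsto_const_nhds.congr' ?_
        filter_upwards [self_mem_nhdsWithin] with z hz
        have : z - q ≠ 0 := sub_ne_zero.2 hz
        field_simp
      · simp only [hqp, if_false]
        apply tendsto_nhdsWithin_of_tendsto_nhds
        have : ContinuousAt (fun s => (s - p) * (a q / (s - q))) p := by
          refine ContinuousAt.mul (by fun_prop) (ContinuousAt.div (by fun_prop) (by fun_prop) ?_)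
          exact sub_ne_zero.2 (Ne.symm hqp)
        simpa [ContinuousAt] using this
    have h2 := (hl p hp).sub h1
    rw [Finset.sum_ite_eq' S p (fun _ => a p), if_pos hp, sub_self] at h2
    refine h2.congr (fun z => ?_)
    rw [mul_sub, Finset.mul_sum])
  have hz := entire_zero H H1 (max 0 (C + ∑ p ∈ S, ‖a p‖)) (by
    intro s
    by_cases hs : s.re = 0
    · simp [hs]
    have hsS : s ∉ S := fun h => hs (hS s h)
    rw [H2 s hsS]
    apply le_max_of_le_right
    calc ‖f s - ∑ p ∈ S, a p / (s - p)‖ * |s.re|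
        ≤ (‖f s‖ + ∑ p ∈ S, ‖a p / (s - p)‖) * |s.re| := by
          gcongr
          exact (norm_sub_le _ _).trans (by gcongr; exact norm_sum_le _ _)
      _ = ‖f s‖ * |s.re| + ∑ p ∈ S, ‖a p / (s - p)‖ * |s.re| := by
          rw [add_mul, Finset.sum_mul]
      _ ≤ _ := by
          gcongr with p hp
          · exact hb s hs
          · have h1 : |s.re| ≤ ‖s - p‖ := by
              have := Complex.abs_re_le_norm (s - p)
              simpa [hS p hp] using this
            have h0 : 0 < ‖s - p‖ := lt_of_lt_of_le (abs_pos.2 hs) h1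
            rw [norm_div, div_mul_eq_mul_div, div_le_iff₀ h0]
            gcongr)
  intro s hs
  have := H2 s hs
  rw [hz s] at this
  exact (sub_eq_zero.1 this.symm)

theorem diff_laplace (μ : Measure ℝ) (g : ℝ → ℝ) (hg : Continuous g) (B : ℝ)
    (hB : ∀ x, |g x| ≤ B) (s₀ : ℂ) (ε : ℝ) (hε : 0 < ε)
    (hint : Integrable (fun x => Real.exp (-s₀.re * x + ε * |x|)) μ) :
    DifferentiableAt ℂ (fun s : ℂ => ∫ x, Complex.exp (-s * x) * (g x : ℂ) ∂μ) s₀ := by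
  have hB0 : 0 ≤ B := (abs_nonneg _).trans (hB 0)
  have hcont : ∀ s : ℂ, Continuous (fun x : ℝ => Complex.exp (-s * x) * (g x : ℂ)) := by
    intro s; fun_prop
  have := hasDerivAt_integral_of_dominated_loc_of_deriv_le (μ := μ) (𝕜 := ℂ)
    (F := fun s : ℂ => fun x : ℝ => Complex.exp (-s * x) * (g x : ℂ))
    (F' := fun s : ℂ => fun x : ℝ => (Complex.exp (-s * x) * (-x)) * (g x : ℂ))
    (x₀ := s₀) (s := Metric.ball s₀ (ε / 2))
    (bound := fun x => B * (2 / ε) * Real.exp (-s₀.re * x + ε * |x|))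
    (Metric.ball_mem_nhds _ (by positivity))
    (Eventually.of_forall fun s => (hcont s).aestronglyMeasurable)
    (by
      refine (hint.const_mul B).mono' (hcont s₀).aestronglyMeasurable (Eventually.of_forall ?_)
      intro x
      rw [norm_mul, Complex.norm_exp, Complex.norm_real, Real.norm_eq_abs, mul_comm]
      have e : (-s₀ * (x:ℂ)).re = -s₀.re * x := by simp
      rw [e]
      have : 0 ≤ ε * |x| := by positivity
      gcongr
      · exact hB x
      · linarith)
    (by
      apply Continuous.aestronglyMeasurable
      fun_prop)
    (by
      refine Eventually.of_forall ?_
      intro x s hs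
      rw [norm_mul, norm_mul, Complex.norm_exp, Complex.norm_real, Real.norm_eq_abs, norm_neg,
        Complex.norm_real, Real.norm_eq_abs]
      have e : (-s * (x:ℂ)).re = -s.re * x := by simp
      rw [e]
      have h1 : |s.re - s₀.re| ≤ ε / 2 := by
        have h2 := Complex.abs_re_le_norm (s - s₀)
        rw [Metric.mem_ball, dist_eq_norm] at hs
        simp only [Complex.sub_re] at h2
        linarith
      have h3 : -s.re * x ≤ -s₀.re * x + ε / 2 * |x| := by
        have : -(s.re - s₀.re) * x ≤ |s.re - s₀.re| * |x| := by
          rw [← abs_neg (s.re - s₀.re), ← abs_mul]; exact le_abs_self _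
        have h4 : |s.re - s₀.re| * |x| ≤ ε / 2 * |x| := by gcongr
        linarith
      have h5 : |x| ≤ 2 / ε * Real.exp (ε / 2 * |x|) := by
        have := Real.add_one_le_exp (ε / 2 * |x|)
        have h6 : |x| = 2 / ε * (ε / 2 * |x|) := by field_simp
        calc |x| = 2 / ε * (ε / 2 * |x|) := h6
          _ ≤ _ := by gcongr; linarith
      calc Real.exp (-s.re * x) * |x| * |g x|
          ≤ Real.exp (-s₀.re * x + ε / 2 * |x|) * (2 / ε * Real.exp (ε / 2 * |x|)) * B := by
            gcongr
            exact hB x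
        _ = B * (2 / ε) * (Real.exp (-s₀.re * x + ε / 2 * |x|) * Real.exp (ε / 2 * |x|)) := by ring
        _ = _ := by rw [← Real.exp_add]; congr 2; ring)
    (hint.const_mul _)
    (by
      refine Eventually.of_forall ?_
      intro x s hs
      have h1 : HasDerivAt (fun s : ℂ => -s * (x:ℂ)) (-1 * (x:ℂ)) s :=
        (hasDerivAt_id s).neg.mul_const _
      have h2 := (h1.cexp).mul_const (g x : ℂ)
      simpa using h2)
  exact this.2.differentiableAt

noncomputable def Dfun (c : ℝ) (s : ℂ) : ℂ :=
  (c:ℂ) ^ 2 * s ^ 2 - Complex.exp s - Complex.exp (-s) + 2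

noncomputable def Phi (c : ℝ) (G G' : ℝ → ℝ) (s : ℂ) (x : ℝ) : ℂ :=
  Complex.exp (-s * x) * ((c:ℂ) ^ 2 * (G' x + s * G x)) -
    (Complex.exp s * (∫ u in x..(x + 1), Complex.exp (-s * u) * (G u : ℂ)) -
      Complex.exp (-s) * (∫ u in (x - 1)..x, Complex.exp (-s * u) * (G u : ℂ)))

theorem Phi_deriv (c : ℝ) (hc : c ≠ 0) (G G' : ℝ → ℝ) (h1 : ∀ x, HasDerivAt G (G' x) x)
    (h2 : ∀ x, HasDerivAt G' ((G (x + 1) - 2 * G x + G (x - 1)) / c ^ 2) x) (s : ℂ) (x : ℝ) :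
    HasDerivAt (Phi c G G' s) (-Dfun c s * (Complex.exp (-s * x) * (G x : ℂ))) x := by
  have hG : Continuous G := continuous_iff_continuousAt.2 fun x => (h1 x).continuousAt
  set g : ℝ → ℂ := fun u => Complex.exp (-s * u) * (G u : ℂ) with hg
  have hgc : Continuous g := by rw [hg]; fun_prop
  have hP : ∀ y, HasDerivAt (fun u => ∫ v in (0:ℝ)..u, g v) (g y) y :=
    fun y => (hgc.integral_hasStrictDerivAt 0 y).hasDerivAt
  have i1 : HasDerivAt (fun x : ℝ => ∫ u in x..(x + 1), g u) (g (x + 1) - g x) x := by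
    have := ((hP (x + 1)).comp_add_const x 1).sub (hP x)
    refine this.congr_of_eventuallyEq (Eventually.of_forall fun y => ?_)
    exact (intervalIntegral.integral_interval_sub_left (hgc.intervalIntegrable _ _)
      (hgc.intervalIntegrable _ _)).symm
  have i2 : HasDerivAt (fun x : ℝ => ∫ u in (x - 1)..x, g u) (g x - g (x - 1)) x := by
    have := (hP x).sub ((hP (x - 1)).comp_sub_const x 1)
    refine this.congr_of_eventuallyEq (Eventually.of_forall fun y => ?_)
    exact (intervalIntegral.integral_interval_sub_left (hgc.intervalIntegrable _ _)
      (hgc.intervalIntegrable _ _)).symm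
  have e1 : HasDerivAt (fun x : ℝ => Complex.exp (-s * x)) (Complex.exp (-s * x) * (-s)) x := by
    have : HasDerivAt (fun x : ℝ => -s * (x:ℂ)) (-s * 1) x :=
      (Complex.ofRealCLM.hasDerivAt (x := x)).const_mul (-s)
    simpa using this.cexp
  have e2 := ((h2 x).ofReal_comp.add ((h1 x).ofReal_comp.const_mul s)).const_mul ((c:ℂ) ^ 2)
  have := (e1.mul e2).sub ((i1.const_mul (Complex.exp s)).sub (i2.const_mul (Complex.exp (-s))))
  refine HasDerivAt.congr_deriv this ?_
  have hcc : (c:ℂ) ≠ 0 := by exact_mod_cast hc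
  have q1 : Complex.exp (-s * ((x + 1 : ℝ) : ℂ)) = Complex.exp (-s * x) * Complex.exp (-s) := by
    rw [← Complex.exp_add]; congr 1; push_cast; ring
  have q2 : Complex.exp (-s * ((x - 1 : ℝ) : ℂ)) = Complex.exp (-s * x) * Complex.exp s := by
    rw [← Complex.exp_add]; congr 1; push_cast; ring
  have q3 : Complex.exp s * Complex.exp (-s) = 1 := by rw [← Complex.exp_add]; simp
  simp only [hg, q1, q2, Dfun, Pi.add_apply]
  push_cast
  field_simp
  linear_combination (- (G (x+1) : ℂ) - (G (x - 1):ℂ)) * q3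

theorem Phi_bound (c : ℝ) (G G' : ℝ → ℝ) (B : ℝ) (hB : ∀ x, |G x| ≤ B) (hB' : ∀ x, |G' x| ≤ B)
    (s : ℂ) : ∃ K : ℝ, ∀ x : ℝ, ‖Phi c G G' s x‖ ≤ K * Real.exp (-s.re * x) := by
  have hB0 : 0 ≤ B := (abs_nonneg _).trans (hB 0)
  have hn : ∀ x : ℝ, ‖Complex.exp (-s * x)‖ = Real.exp (-s.re * x) := by
    intro x; rw [Complex.norm_exp]; simp
  have hI : ∀ x a b : ℝ, a ≤ b → b ≤ a + 1 → x - 1 ≤ a → b ≤ x + 1 →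
      ‖∫ u in a..b, Complex.exp (-s * u) * (G u : ℂ)‖ ≤
        Real.exp |s.re| * B * Real.exp (-s.re * x) := by
    intro x a b hab hba h1 h2
    have := intervalIntegral.norm_integral_le_of_norm_le_const (a := a) (b := b)
      (f := fun u : ℝ => Complex.exp (-s * u) * (G u : ℂ))
      (C := Real.exp |s.re| * B * Real.exp (-s.re * x)) (by
        intro u hu
        rw [Set.uIoc_of_le hab] at hu
        rw [norm_mul, hn, Complex.norm_real, Real.norm_eq_abs]
        have h3 : |x - u| ≤ 1 := abs_le.2 ⟨by linarith [hu.2], by linarith [hu.1]⟩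
        have h4 : -s.re * u ≤ |s.re| + -s.re * x := by
          have : s.re * (x - u) ≤ |s.re| * |x - u| := by rw [← abs_mul]; exact le_abs_self _
          nlinarith [abs_nonneg s.re]
        calc Real.exp (-s.re * u) * |G u| ≤ Real.exp (|s.re| + -s.re * x) * B := by
              gcongr
              exact hB u
          _ = _ := by rw [Real.exp_add]; ring)
    refine this.trans ?_
    have h3 : |b - a| ≤ 1 := abs_le.2 ⟨by linarith, by linarith⟩
    exact mul_le_of_le_one_right (by positivity) h3
  refine ⟨c ^ 2 * (B + ‖s‖ * B) + (‖Complex.exp s‖ * (Real.exp |s.re| * B) +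
    ‖Complex.exp (-s)‖ * (Real.exp |s.re| * B)), fun x => ?_⟩
  unfold Phi
  refine (norm_sub_le _ _).trans ?_
  rw [add_mul]
  gcongr
  · rw [norm_mul, hn, mul_comm]
    gcongr
    rw [norm_mul, norm_pow, Complex.norm_real, Real.norm_eq_abs, sq_abs]
    gcongr
    refine (norm_add_le _ _).trans ?_
    rw [norm_mul, Complex.norm_real, Complex.norm_real, Real.norm_eq_abs, Real.norm_eq_abs]
    gcongr
    · exact hB' x
    · exact hB x
  · refine (norm_sub_le _ _).trans ?_
    rw [add_mul, norm_mul, norm_mul, mul_assoc ‖Complex.exp s‖, mul_assoc ‖Complex.exp (-s)‖]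
    gcongr
    · exact hI x x (x + 1) (by linarith) le_rfl (by linarith) le_rfl
    · exact hI x (x - 1) x (by linarith) (by linarith) le_rfl (by linarith)

theorem laplace_integrable_pos (G : ℝ → ℝ) (hG : Continuous G) (B : ℝ) (hB : ∀ x, |G x| ≤ B)
    (s : ℂ) (hs : 0 < s.re) :
    IntegrableOn (fun x : ℝ => Complex.exp (-s * x) * (G x : ℂ)) (Set.Ioi 0) := by
  refine Integrable.mul_bdd (c := B) (integrableOn_exp_mul_complex_Ioi (by simpa using hs) 0) ?_ ?_
  · exact Continuous.aestronglyMeasurable (by fun_prop)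
  · exact Eventually.of_forall fun x => by simpa using hB x

theorem laplace_integrable_neg (G : ℝ → ℝ) (hG : Continuous G) (B : ℝ) (hB : ∀ x, |G x| ≤ B)
    (s : ℂ) (hs : s.re < 0) :
    IntegrableOn (fun x : ℝ => Complex.exp (-s * x) * (G x : ℂ)) (Set.Iic 0) := by
  refine Integrable.mul_bdd (c := B) (integrableOn_exp_mul_complex_Iic (by simpa using hs) 0) ?_ ?_
  · exact Continuous.aestronglyMeasurable (by fun_prop)
  · exact Eventually.of_forall fun x => by simpa using hB x

theorem laplace_pos (c : ℝ) (hc : c ≠ 0) (G G' : ℝ → ℝ) (h1 : ∀ x, HasDerivAt G (G' x) x)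
    (h2 : ∀ x, HasDerivAt G' ((G (x + 1) - 2 * G x + G (x - 1)) / c ^ 2) x)
    (B : ℝ) (hB : ∀ x, |G x| ≤ B) (hB' : ∀ x, |G' x| ≤ B) (s : ℂ) (hs : 0 < s.re) :
    Dfun c s * (∫ x in Set.Ioi (0:ℝ), Complex.exp (-s * x) * (G x : ℂ)) = Phi c G G' s 0 := by
  have hG : Continuous G := continuous_iff_continuousAt.2 fun x => (h1 x).continuousAt
  obtain ⟨K, hK⟩ := Phi_bound c G G' B hB hB' s
  have := integral_Ioi_of_hasDerivAt_of_tendsto' (a := 0) (f := Phi c G G' s) (m := 0)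
    (fun x _ => Phi_deriv c hc G G' h1 h2 s x)
    ((laplace_integrable_pos G hG B hB s hs).const_mul _) (by
      refine squeeze_zero_norm hK ?_
      have : Tendsto (fun x : ℝ => K * Real.exp (-s.re * x)) atTop (𝓝 (K * 0)) := by
        refine Tendsto.const_mul _ (Real.tendsto_exp_atBot.comp ?_)
        exact tendsto_id.const_mul_atTop_of_neg (by linarith)
      simpa using this)
  rw [integral_const_mul] at this
  linear_combination -this

theorem laplace_neg (c : ℝ) (hc : c ≠ 0) (G G' : ℝ → ℝ) (h1 : ∀ x, HasDerivAt G (G' x) x)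
    (h2 : ∀ x, HasDerivAt G' ((G (x + 1) - 2 * G x + G (x - 1)) / c ^ 2) x)
    (B : ℝ) (hB : ∀ x, |G x| ≤ B) (hB' : ∀ x, |G' x| ≤ B) (s : ℂ) (hs : s.re < 0) :
    Dfun c s * (-∫ x in Set.Iic (0:ℝ), Complex.exp (-s * x) * (G x : ℂ)) = Phi c G G' s 0 := by
  have hG : Continuous G := continuous_iff_continuousAt.2 fun x => (h1 x).continuousAt
  obtain ⟨K, hK⟩ := Phi_bound c G G' B hB hB' s
  have := integral_Iic_of_hasDerivAt_of_tendsto' (a := 0) (f := Phi c G G' s) (m := 0)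
    (fun x _ => Phi_deriv c hc G G' h1 h2 s x)
    ((laplace_integrable_neg G hG B hB s hs).const_mul _) (by
      refine squeeze_zero_norm hK ?_
      have : Tendsto (fun x : ℝ => K * Real.exp (-s.re * x)) atBot (𝓝 (K * 0)) := by
        refine Tendsto.const_mul _ (Real.tendsto_exp_atBot.comp ?_)
        exact tendsto_id.const_mul_atBot (by linarith)
      simpa using this)
  rw [integral_const_mul] at this
  linear_combination this

theorem Phi_entire (c : ℝ) (G G' : ℝ → ℝ) (hG : Continuous G)
    (B : ℝ) (hB : ∀ x, |G x| ≤ B) : Differentiable ℂ (fun s => Phi c G G' s 0) := by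
  have hI : ∀ a b : ℝ, a ≤ b → Differentiable ℂ
      (fun s : ℂ => ∫ u in a..b, Complex.exp (-s * u) * (G u : ℂ)) := by
    intro a b hab s
    simp only [intervalIntegral.integral_of_le hab]
    refine diff_laplace _ G hG B hB s 1 one_pos ?_
    exact (Continuous.integrableOn_Icc (by fun_prop)).mono_set Set.Ioc_subset_Icc_self
  have i1 := hI 0 (0 + 1) (by norm_num)
  have i2 := hI (0 - 1) 0 (by norm_num)
  unfold Phi
  fun_prop

theorem laplace_diff_pos (G : ℝ → ℝ) (hG : Continuous G) (B : ℝ) (hB : ∀ x, |G x| ≤ B)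
    (s : ℂ) (hs : 0 < s.re) : DifferentiableAt ℂ
      (fun s : ℂ => ∫ x in Set.Ioi (0:ℝ), Complex.exp (-s * x) * (G x : ℂ)) s := by
  refine diff_laplace _ G hG B hB s (s.re / 2) (by positivity) ?_
  refine (integrableOn_exp_mul_Ioi (a := -(s.re / 2)) (by linarith) 0).congr_fun ?_ measurableSet_Ioi
  intro x hx
  simp only [abs_of_pos (Set.mem_Ioi.1 hx)]
  congr 1; ring

theorem laplace_diff_neg (G : ℝ → ℝ) (hG : Continuous G) (B : ℝ) (hB : ∀ x, |G x| ≤ B)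
    (s : ℂ) (hs : s.re < 0) : DifferentiableAt ℂ
      (fun s : ℂ => ∫ x in Set.Iic (0:ℝ), Complex.exp (-s * x) * (G x : ℂ)) s := by
  refine diff_laplace _ G hG B hB s (-s.re / 2) (by linarith) ?_
  refine (integrableOn_exp_mul_Iic (a := (-s.re / 2)) (by linarith) 0).congr_fun ?_ measurableSet_Iic
  intro x hx
  simp only [abs_of_nonpos (Set.mem_Iic.1 hx)]
  congr 1; ring

theorem laplace_bound_pos (G : ℝ → ℝ) (B : ℝ) (hB : ∀ x, |G x| ≤ B)
    (s : ℂ) (hs : 0 < s.re) :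
    ‖∫ x in Set.Ioi (0:ℝ), Complex.exp (-s * x) * (G x : ℂ)‖ * |s.re| ≤ B := by
  have h := norm_integral_le_of_norm_le (μ := volume.restrict (Set.Ioi (0:ℝ)))
    (f := fun x : ℝ => Complex.exp (-s * x) * (G x : ℂ))
    (g := fun x : ℝ => Real.exp (-s.re * x) * B)
    ((integrableOn_exp_mul_Ioi (by linarith) 0).mul_const B) (Eventually.of_forall fun x => by
      rw [norm_mul, Complex.norm_exp, Complex.norm_real, Real.norm_eq_abs]
      simp only [Complex.neg_re, Complex.mul_re, Complex.ofReal_re, Complex.ofReal_im, mul_zero,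
        sub_zero]
      gcongr
      exact hB x)
  rw [integral_mul_const, integral_exp_mul_Ioi (by linarith)] at h
  rw [abs_of_pos hs, ← le_div_iff₀ hs]
  refine h.trans (le_of_eq ?_)
  simp; field_simp

theorem laplace_bound_neg (G : ℝ → ℝ) (B : ℝ) (hB : ∀ x, |G x| ≤ B)
    (s : ℂ) (hs : s.re < 0) :
    ‖∫ x in Set.Iic (0:ℝ), Complex.exp (-s * x) * (G x : ℂ)‖ * |s.re| ≤ B := by
  have h := norm_integral_le_of_norm_le (μ := volume.restrict (Set.Iic (0:ℝ)))
    (f := fun x : ℝ => Complex.exp (-s * x) * (G x : ℂ))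
    (g := fun x : ℝ => Real.exp (-s.re * x) * B)
    ((integrableOn_exp_mul_Iic (by linarith) 0).mul_const B) (Eventually.of_forall fun x => by
      rw [norm_mul, Complex.norm_exp, Complex.norm_real, Real.norm_eq_abs]
      simp only [Complex.neg_re, Complex.mul_re, Complex.ofReal_re, Complex.ofReal_im, mul_zero,
        sub_zero]
      gcongr
      exact hB x)
  rw [integral_mul_const, integral_exp_mul_Iic (by linarith)] at h
  rw [abs_of_neg hs, ← le_div_iff₀ (by linarith)]
  refine h.trans (le_of_eq ?_)
  simp; field_simp

theorem Dfun_differentiable (c : ℝ) : Differentiable ℂ (Dfun c) := by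
  unfold Dfun; fun_prop

theorem Dfun_imag (c ω : ℝ) :
    Dfun c (ω * Complex.I) = ((2 - 2 * Real.cos ω - c ^ 2 * ω ^ 2 : ℝ) : ℂ) := by
  have h : Complex.exp (ω * Complex.I) + Complex.exp (-(ω * Complex.I)) = 2 * Complex.cos ω := by
    rw [Complex.cos, neg_mul]; ring
  unfold Dfun
  push_cast
  linear_combination -h + (c:ℂ) ^ 2 * ω ^ 2 * Complex.I_sq

theorem Dfun_ev (c : ℝ) (hc : c ≠ 0) (p : ℂ) : ∀ᶠ z in 𝓝[≠] p, Dfun c z ≠ 0 := by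
  have ha : AnalyticOnNhd ℂ (Dfun c) Set.univ :=
    Complex.analyticOnNhd_univ_iff_differentiable.2 (Dfun_differentiable c)
  rcases (ha p (Set.mem_univ _)).eventually_eq_zero_or_eventually_ne_zero with h | h
  · exfalso
    have h1 := ha.eqOn_zero_of_preconnected_of_eventuallyEq_zero isPreconnected_univ
      (Set.mem_univ p) h (Set.mem_univ (((2 * Real.pi : ℝ) : ℂ) * Complex.I))
    rw [Dfun_imag, Real.cos_two_pi, Pi.zero_apply] at h1
    have h2 : (2 - 2 * 1 - c ^ 2 * (2 * Real.pi) ^ 2 : ℝ) = 0 := by exact_mod_cast h1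
    have h3 : 0 < c ^ 2 * (2 * Real.pi) ^ 2 := by positivity
    linarith
  · exact h

theorem Zset_finite (c : ℝ) (hc : 0 < c) : {s : ℂ | s.re = 0 ∧ Dfun c s = 0}.Finite := by
  have hsub : {s : ℂ | s.re = 0 ∧ Dfun c s = 0} ⊆
      Metric.closedBall (0:ℂ) (2 / c) ∩ {s : ℂ | s.re = 0 ∧ Dfun c s = 0} := by
    intro s hs
    refine ⟨?_, hs⟩
    obtain ⟨h1, h2⟩ := hs
    have e : s = (s.im : ℂ) * Complex.I := by apply Complex.ext <;> simp [h1]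
    rw [e, Dfun_imag] at h2
    have h3 : (2 - 2 * Real.cos s.im - c ^ 2 * s.im ^ 2 : ℝ) = 0 := by exact_mod_cast h2
    have h4 := Real.neg_one_le_cos s.im
    have h5 : (c * |s.im|) ^ 2 ≤ 2 ^ 2 := by rw [mul_pow, sq_abs]; linarith
    have h6 : c * |s.im| ≤ 2 := (le_abs_self _).trans (abs_le_of_sq_le_sq h5 (by norm_num))
    rw [mem_closedBall_zero_iff, e, norm_mul, Complex.norm_I, mul_one, Complex.norm_real,
      Real.norm_eq_abs, le_div_iff₀ hc]
    linarith
  refine Set.Finite.subset ?_ hsub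
  refine (isCompact_closedBall (0:ℂ) (2 / c)).induction_on
    (p := fun t => (t ∩ {s : ℂ | s.re = 0 ∧ Dfun c s = 0}).Finite) ?_ ?_ ?_ ?_
  · simp
  · intro s t hst ht
    exact ht.subset (Set.inter_subset_inter_left _ hst)
  · intro s t hs ht
    rw [Set.union_inter_distrib_right]
    exact hs.union ht
  · intro x _
    have h := Dfun_ev c hc.ne' x
    rw [eventually_nhdsWithin_iff] at h
    refine ⟨{z | z ∈ ({x} : Set ℂ)ᶜ → Dfun c z ≠ 0}, mem_nhdsWithin_of_mem_nhds h, ?_⟩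
    refine (Set.finite_singleton x).subset ?_
    rintro z ⟨hz, hz1, hz2⟩
    by_contra hzx
    exact hz hzx hz2

theorem fourier_vanish (u : ℝ → ℂ) (hu : Continuous u) (M : ℝ) (hM : ∀ x, ‖u x‖ ≤ M)
    (hp : ∀ s : ℂ, 0 < s.re → ∫ x in Set.Ioi (0:ℝ), Complex.exp (-s * x) * u x = 0)
    (hn : ∀ s : ℂ, s.re < 0 → ∫ x in Set.Iic (0:ℝ), Complex.exp (-s * x) * u x = 0) :
    ∀ x, u x = 0 := by
  have hip : ∀ s : ℂ, 0 < s.re →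
      IntegrableOn (fun x : ℝ => Complex.exp (-s * x) * u x) (Set.Ioi 0) := by
    intro s hs
    refine Integrable.mul_bdd (c := M)
      (integrableOn_exp_mul_complex_Ioi (by simpa using hs) 0) ?_ ?_
    · exact Continuous.aestronglyMeasurable (by fun_prop)
    · exact Eventually.of_forall hM
  have hin : ∀ s : ℂ, s.re < 0 →
      IntegrableOn (fun x : ℝ => Complex.exp (-s * x) * u x) (Set.Iic 0) := by
    intro s hs
    refine Integrable.mul_bdd (c := M)
      (integrableOn_exp_mul_complex_Iic (by simpa using hs) 0) ?_ ?_
    · exact Continuous.aestronglyMeasurable (by fun_prop)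
    · exact Eventually.of_forall hM
  set v : ℝ → ℂ := fun x => Complex.exp (-((|x| : ℝ) : ℂ)) * u x with hv
  have hvc : Continuous v := by
    rw [hv]
    have : Continuous (fun x : ℝ => |x|) := continuous_abs
    fun_prop
  have evp : ∀ ξ : ℝ, Set.EqOn (fun x : ℝ => Complex.exp (-(1 + 2 * Real.pi * ξ * Complex.I) * x) * u x)
      (fun x : ℝ => Complex.exp (((-2 * Real.pi * x * ξ : ℝ) : ℂ) * Complex.I) • v x) (Set.Ioi 0) := by
    intro ξ x hx
    simp only [hv, smul_eq_mul, ← mul_assoc, ← Complex.exp_add]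
    rw [abs_of_pos (Set.mem_Ioi.1 hx)]
    congr 2
    push_cast; ring
  have evn : ∀ ξ : ℝ, Set.EqOn (fun x : ℝ => Complex.exp (-(-1 + 2 * Real.pi * ξ * Complex.I) * x) * u x)
      (fun x : ℝ => Complex.exp (((-2 * Real.pi * x * ξ : ℝ) : ℂ) * Complex.I) • v x) (Set.Iic 0) := by
    intro ξ x hx
    simp only [hv, smul_eq_mul, ← mul_assoc, ← Complex.exp_add]
    rw [abs_of_nonpos (Set.mem_Iic.1 hx)]
    congr 2
    push_cast; ring
  have rp : ∀ ξ : ℝ, 0 < (1 + 2 * Real.pi * ξ * Complex.I : ℂ).re := by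
    intro ξ; simp
  have rn : ∀ ξ : ℝ, (-1 + 2 * Real.pi * ξ * Complex.I : ℂ).re < 0 := by
    intro ξ; simp
  have jp : ∀ ξ : ℝ, IntegrableOn (fun x : ℝ => Complex.exp (((-2 * Real.pi * x * ξ : ℝ) : ℂ) * Complex.I) • v x) (Set.Ioi 0) :=
    fun ξ => (hip _ (rp ξ)).congr_fun (evp ξ) measurableSet_Ioi
  have jn : ∀ ξ : ℝ, IntegrableOn (fun x : ℝ => Complex.exp (((-2 * Real.pi * x * ξ : ℝ) : ℂ) * Complex.I) • v x) (Set.Iic 0) :=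
    fun ξ => (hin _ (rn ξ)).congr_fun (evn ξ) measurableSet_Iic
  have hvi : Integrable v := by
    rw [← integrableOn_univ, ← Set.Iic_union_Ioi (a := (0:ℝ))]
    exact IntegrableOn.union (by simpa using jn 0) (by simpa using jp 0)
  have hF : FourierTransform.fourier v = (fun _ : ℝ => (0:ℂ)) := by
    funext ξ
    rw [Real.fourier_real_eq_integral_exp_smul]
    rw [← intervalIntegral.integral_Iic_add_Ioi (jn ξ) (jp ξ),
      ← setIntegral_congr_fun measurableSet_Ioi (evp ξ),
      ← setIntegral_congr_fun measurableSet_Iic (evn ξ), hp _ (rp ξ), hn _ (rn ξ), add_zero]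
  intro x
  have h := hvi.fourierInv_fourier_eq (by rw [hF]; exact integrable_zero _ _ _) (v := x)
    hvc.continuousAt
  rw [hF, Real.fourierInv_eq'] at h
  simp only [smul_zero, integral_zero] at h
  have h2 : Complex.exp (-((|x| : ℝ) : ℂ)) * u x = 0 := h.symm
  exact (mul_eq_zero.1 h2).resolve_left (Complex.exp_ne_zero _)

theorem core (c : ℝ) (hc : 0 < c) (G G' : ℝ → ℝ) (h1 : ∀ x, HasDerivAt G (G' x) x)
    (h2 : ∀ x, HasDerivAt G' ((G (x + 1) - 2 * G x + G (x - 1)) / c ^ 2) x)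
    (B : ℝ) (hB : ∀ x, |G x| ≤ B) (hB' : ∀ x, |G' x| ≤ B) :
    ∃ S : Finset ℂ, (∀ p ∈ S, p.re = 0 ∧ Dfun c p = 0) ∧
      ∃ a : ℂ → ℂ, ∀ x : ℝ, (G x : ℂ) = ∑ p ∈ S, a p * Complex.exp (p * x) := by
  classical
  have hG : Continuous G := continuous_iff_continuousAt.2 fun x => (h1 x).continuousAt
  set S := (Zset_finite c hc).toFinset with hSdef
  have hS : ∀ p, p ∈ S ↔ p.re = 0 ∧ Dfun c p = 0 := by intro p; simp [hSdef]
  set Lp : ℂ → ℂ := fun s => ∫ x in Set.Ioi (0:ℝ), Complex.exp (-s * x) * (G x : ℂ) with hLp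
  set Lm : ℂ → ℂ := fun s => ∫ x in Set.Iic (0:ℝ), Complex.exp (-s * x) * (G x : ℂ) with hLm
  set E : ℂ → ℂ := fun s => Phi c G G' s 0 with hE
  have hEd : Differentiable ℂ E := Phi_entire c G G' hG B hB
  have hDd := Dfun_differentiable c
  set f : ℂ → ℂ := fun s => if 0 < s.re then Lp s else if s.re < 0 then -Lm s else E s / Dfun c s
    with hf
  have fp : ∀ s : ℂ, 0 < s.re → f s = Lp s := fun s hs => by simp [hf, hs]
  have fn : ∀ s : ℂ, s.re < 0 → f s = -Lm s := fun s hs => by simp [hf, hs, not_lt.2 hs.le]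
  have fE : ∀ s, Dfun c s ≠ 0 → f s = E s / Dfun c s := by
    intro s hs
    rcases lt_trichotomy s.re 0 with h | h | h
    · rw [fn s h, eq_div_iff hs, mul_comm]
      exact laplace_neg c hc.ne' G G' h1 h2 B hB hB' s h
    · simp [hf, h]
    · rw [fp s h, eq_div_iff hs, mul_comm]
      exact laplace_pos c hc.ne' G G' h1 h2 B hB hB' s h
  have hfb : ∀ s : ℂ, s.re ≠ 0 → ‖f s‖ * |s.re| ≤ B := by
    intro s hs
    rcases lt_or_gt_of_ne hs with h | h
    · rw [fn s h, norm_neg]; exact laplace_bound_neg G B hB s h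
    · rw [fp s h]; exact laplace_bound_pos G B hB s h
  have hfd : ∀ s ∉ S, DifferentiableAt ℂ f s := by
    intro s hs
    rcases lt_trichotomy s.re 0 with h | h | h
    · refine (laplace_diff_neg G hG B hB s h).neg.congr_of_eventuallyEq ?_
      filter_upwards [(isOpen_lt Complex.continuous_re continuous_const).mem_nhds h] with z hz
      exact fn z hz
    · have hD : Dfun c s ≠ 0 := fun h0 => hs ((hS s).2 ⟨h, h0⟩)
      refine ((hEd s).div (hDd s) hD).congr_of_eventuallyEq ?_
      filter_upwards [hDd.continuous.continuousAt.eventually_ne hD] with z hz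
      exact fE z hz
    · refine (laplace_diff_pos G hG B hB s h).congr_of_eventuallyEq ?_
      filter_upwards [(isOpen_lt continuous_const Complex.continuous_re).mem_nhds h] with z hz
      exact fp z hz
  have hlim : ∀ p, ∃ a, p ∈ S → Tendsto (fun s => (s - p) * f s) (𝓝[≠] p) (𝓝 a) := by
    intro p
    by_cases hp : p ∈ S
    swap
    · exact ⟨0, fun h => absurd h hp⟩
    have hpre := ((hS p).1 hp).1
    have hm : MeromorphicAt f p := by
      have : MeromorphicAt (fun s => E s / Dfun c s) p :=
        (hEd.analyticAt p).meromorphicAt.div (hDd.analyticAt p).meromorphicAt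
      refine this.congr ?_
      filter_upwards [Dfun_ev c hc.ne' p] with z hz
      exact (fE z hz).symm
    have hm2 : MeromorphicAt (fun s => (s - p) * f s) p := by
      refine MeromorphicAt.mul (f := fun s => s - p) ?_ hm
      have : Differentiable ℂ (fun s : ℂ => s - p) := by fun_prop
      exact (this.analyticAt p).meromorphicAt
    have hge : 0 ≤ meromorphicOrderAt (fun s => (s - p) * f s) p := by
      by_contra hlt
      have hco := (tendsto_cobounded_iff_meromorphicOrderAt_neg hm2).2 (not_le.1 hlt)
      have hseq : Tendsto (fun t : ℝ => p + (t:ℂ)) (𝓝[>] 0) (𝓝[≠] p) := by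
        refine tendsto_nhdsWithin_iff.2 ⟨?_, ?_⟩
        · apply tendsto_nhdsWithin_of_tendsto_nhds
          have : Continuous (fun t : ℝ => p + (t:ℂ)) := by fun_prop
          simpa using this.tendsto 0
        · filter_upwards [self_mem_nhdsWithin] with t ht
          have : t ≠ 0 := (Set.mem_Ioi.1 ht).ne'
          simpa using this
      have h3 := tendsto_norm_cobounded_atTop.comp (hco.comp hseq)
      have h4 := (h3.eventually_gt_atTop B).and self_mem_nhdsWithin
      obtain ⟨t, ht1, ht2⟩ := h4.exists
      have ht : 0 < t := ht2
      have hb := hfb (p + t) (by simp [hpre, ht.ne'])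
      simp only [Function.comp, add_sub_cancel_left, norm_mul, Complex.norm_real,
        Real.norm_eq_abs] at ht1
      simp only [Complex.add_re, hpre, Complex.ofReal_re, zero_add] at hb
      rw [mul_comm] at hb
      linarith
    obtain ⟨a, ha⟩ := (tendsto_nhds_iff_meromorphicOrderAt_nonneg hm2).2 hge
    exact ⟨a, fun _ => ha⟩
  choose a ha using hlim
  have hcar := carleman f S (fun p hp => ((hS p).1 hp).1) hfd a (fun p hp => ha p hp) B hfb
  refine ⟨S, fun p hp => (hS p).1 hp, a, ?_⟩
  have hnS : ∀ s : ℂ, s.re ≠ 0 → s ∉ S := fun s hs h => hs ((hS s).1 h).1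
  have hexp : ∀ p ∈ S, ∀ x : ℝ, ‖Complex.exp (p * x)‖ = 1 := by
    intro p hp x
    rw [Complex.norm_exp]; simp [((hS p).1 hp).1]
  have hmul : ∀ (s : ℂ) (x : ℝ), Complex.exp (-s * x) * (∑ p ∈ S, a p * Complex.exp (p * x)) =
      ∑ p ∈ S, a p * Complex.exp ((p - s) * x) := by
    intro s x
    rw [Finset.mul_sum]
    refine Finset.sum_congr rfl fun p _ => ?_
    have : Complex.exp ((p - s) * x) = Complex.exp (-s * x) * Complex.exp (p * x) := by
      rw [← Complex.exp_add]; congr 1; ring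
    rw [this]; ring
  have hvan := fourier_vanish (fun x => (G x : ℂ) - ∑ p ∈ S, a p * Complex.exp (p * x))
    (by fun_prop) (B + ∑ p ∈ S, ‖a p‖) (by
      intro x
      refine (norm_sub_le _ _).trans ?_
      gcongr
      · simpa using hB x
      · refine (norm_sum_le _ _).trans (Finset.sum_le_sum fun p hp => ?_)
        rw [norm_mul, hexp p hp, mul_one]) (by
      intro s hs
      have hre : ∀ p ∈ S, (p - s).re < 0 := by
        intro p hp; simp [((hS p).1 hp).1, hs]
      have hi : ∀ p ∈ S, IntegrableOn (fun x : ℝ => a p * Complex.exp ((p - s) * x)) (Set.Ioi 0) :=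
        fun p hp => (integrableOn_exp_mul_complex_Ioi (hre p hp) 0).const_mul _
      simp only [mul_sub, hmul]
      rw [integral_sub (laplace_integrable_pos G hG B hB s hs) (integrable_finsetSum _ hi),
        integral_finsetSum _ hi]
      have h3 := hcar s (hnS s hs.ne')
      rw [fp s hs] at h3
      rw [sub_eq_zero]
      refine h3.trans (Finset.sum_congr rfl fun p hp => ?_)
      rw [integral_const_mul, integral_exp_mul_complex_Ioi (hre p hp)]
      simp only [Complex.ofReal_zero, mul_zero, Complex.exp_zero]
      rw [← neg_sub p s, div_neg, neg_div, mul_neg, mul_one_div]) (by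
      intro s hs
      have hre : ∀ p ∈ S, 0 < (p - s).re := by
        intro p hp; simp [((hS p).1 hp).1, hs]
      have hi : ∀ p ∈ S, IntegrableOn (fun x : ℝ => a p * Complex.exp ((p - s) * x)) (Set.Iic 0) :=
        fun p hp => (integrableOn_exp_mul_complex_Iic (hre p hp) 0).const_mul _
      simp only [mul_sub, hmul]
      rw [integral_sub (laplace_integrable_neg G hG B hB s hs) (integrable_finsetSum _ hi),
        integral_finsetSum _ hi]
      have h3 := hcar s (hnS s hs.ne)
      rw [fn s hs] at h3
      rw [sub_eq_zero]
      have h4 : Lm s = -∑ p ∈ S, a p / (s - p) := by rw [← h3, neg_neg]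
      refine h4.trans ?_
      rw [← Finset.sum_neg_distrib]
      refine Finset.sum_congr rfl fun p hp => ?_
      rw [integral_const_mul, integral_exp_mul_complex_Iic (hre p hp)]
      simp only [Complex.ofReal_zero, mul_zero, Complex.exp_zero]
      rw [← neg_sub p s, div_neg, neg_neg, mul_one_div])
  intro x
  exact sub_eq_zero.1 (hvan x)

theorem Aop_deriv (h : ℝ → ℝ) (hc : Continuous h) (x : ℝ) :
    HasDerivAt (Aop h) (h (x + 1/2) - h (x - 1/2)) x := by
  have hP : ∀ y, HasDerivAt (fun u => ∫ v in (0:ℝ)..u, h v) (h y) y :=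
    fun y => (hc.integral_hasStrictDerivAt 0 y).hasDerivAt
  have := ((hP (x + 1/2)).comp_add_const x (1/2)).sub ((hP (x - 1/2)).comp_sub_const x (1/2))
  refine this.congr_of_eventuallyEq (Eventually.of_forall fun y => ?_)
  exact (intervalIntegral.integral_interval_sub_left (hc.intervalIntegrable _ _)
      (hc.intervalIntegrable _ _)).symm

theorem Aop_bound (h : ℝ → ℝ) (B : ℝ) (hB : ∀ᵐ x ∂(volume : Measure ℝ), |h x| ≤ B) (x : ℝ) :
    |Aop h x| ≤ B := by
  have := intervalIntegral.norm_integral_le_of_norm_le_const_ae (a := x - 1/2) (b := x + 1/2)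
    (f := h) (C := B) (hB.mono fun y hy _ => hy)
  have e : |x + 1/2 - (x - 1/2)| = 1 := by norm_num
  rw [e, mul_one] at this
  exact this

theorem Aop_continuous (F : ℝ → ℝ) (hmeas : Measurable F) (B : ℝ)
    (hB : ∀ᵐ x ∂(volume : Measure ℝ), |F x| ≤ B) : Continuous (Aop F) := by
  have hi : ∀ a b : ℝ, IntervalIntegrable F volume a b := by
    intro a b
    rw [intervalIntegrable_iff]
    refine Measure.integrableOn_of_bounded (M := B) (by simp) hmeas.aestronglyMeasurable ?_
    exact ae_restrict_of_ae hB
  have hP := intervalIntegral.continuous_primitive hi 0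
  have e : Aop F = fun x => (∫ v in (0:ℝ)..(x + 1/2), F v) - ∫ v in (0:ℝ)..(x - 1/2), F v := by
    funext x
    exact (intervalIntegral.integral_interval_sub_left (hi _ _) (hi _ _)).symm
  rw [e]
  exact (hP.comp (by fun_prop : Continuous fun x : ℝ => x + 1/2)).sub
    (hP.comp (by fun_prop : Continuous fun x : ℝ => x - 1/2))

theorem Aop_harm (k a b x : ℝ) : Aop (fun x => a * Real.cos (k * x) + b * Real.sin (k * x)) x =
    symb k * (a * Real.cos (k * x) + b * Real.sin (k * x)) := by
  unfold Aop symb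
  by_cases hk : k = 0
  · subst hk
    simp
    ring
  · rw [if_neg hk]
    have hd : ∀ y : ℝ, HasDerivAt (fun y => (a * Real.sin (k * y) - b * Real.cos (k * y)) / k)
        (a * Real.cos (k * y) + b * Real.sin (k * y)) y := by
      intro y
      have h0 : HasDerivAt (fun y : ℝ => k * y) k y := by
        simpa using (hasDerivAt_id y).const_mul k
      have := ((h0.sin.const_mul a).sub (h0.cos.const_mul b)).div_const k
      refine this.congr_deriv ?_
      field_simp
      ring
    rw [intervalIntegral.integral_eq_sub_of_hasDerivAt (fun y _ => hd y)
      (Continuous.intervalIntegrable (by fun_prop) _ _)]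
    have e1 : k * (x + 1/2) = k * x + k / 2 := by ring
    have e2 : k * (x - 1/2) = k * x - k / 2 := by ring
    rw [e1, e2, Real.sin_add, Real.sin_sub, Real.cos_add, Real.cos_sub]
    field_simp
    ring

theorem Aop_sum (T : Finset ℝ) (a b : ℝ → ℝ) :
    Aop (fun x => ∑ k ∈ T, (a k * Real.cos (k * x) + b k * Real.sin (k * x))) =
    fun x => ∑ k ∈ T, (symb k * a k * Real.cos (k * x) + symb k * b k * Real.sin (k * x)) := by
  funext x
  have : ∀ k ∈ T, symb k * a k * Real.cos (k * x) + symb k * b k * Real.sin (k * x) =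
      Aop (fun x => a k * Real.cos (k * x) + b k * Real.sin (k * x)) x := by
    intro k _; rw [Aop_harm]; ring
  rw [Finset.sum_congr rfl this]
  unfold Aop
  rw [intervalIntegral.integral_finsetSum]
  intro k _
  exact Continuous.intervalIntegrable (by fun_prop) _ _

theorem symb_of_root (c k : ℝ) (hk : k ≠ 0) (h : Dfun c (k * Complex.I) = 0) :
    symb k ^ 2 = c ^ 2 := by
  rw [Dfun_imag] at h
  have h3 : (2 - 2 * Real.cos k - c ^ 2 * k ^ 2 : ℝ) = 0 := by exact_mod_cast h
  have h4 : Real.cos k = 1 - 2 * Real.sin (k / 2) ^ 2 := by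
    have := Real.cos_two_mul (k / 2)
    rw [show 2 * (k / 2) = k by ring] at this
    rw [this, Real.cos_sq']; ring
  unfold symb
  rw [if_neg hk]
  rw [div_pow, div_eq_iff (by positivity)]
  rw [h4] at h3
  linarith

theorem Dfun_even (c : ℝ) (s : ℂ) : Dfun c (-s) = Dfun c s := by
  unfold Dfun; rw [neg_neg]; ring

/-- every bounded kernel function of `M = A² - c²` is a finite linear
combination of the harmonics `cos(k·)`, `sin(k·)` over the positive real roots `k`
of `m(k) = a(k)² - c²`. -/
theorem stmt2 (c : ℝ) (hc0 : 0 < c) (hc1 : c < 1) (F : ℝ → ℝ)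
    (hmeas : Measurable F) (hbd : ∃ B : ℝ, ∀ᵐ x ∂(volume : Measure ℝ), |F x| ≤ B)
    (hker : ∀ᵐ x ∂(volume : Measure ℝ), Aop (Aop F) x = c ^ 2 * F x) :
    ∃ (n : ℕ) (k : Fin n → ℝ), StrictMono k ∧ (∀ i, 0 < k i ∧ (symb (k i)) ^ 2 = c ^ 2) ∧
      ∃ α β : Fin n → ℝ, ∀ᵐ x ∂(volume : Measure ℝ),
        F x = ∑ i, (α i * Real.cos (k i * x) + β i * Real.sin (k i * x)) := by
  classical
  obtain ⟨B, hB⟩ := hbd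
  have hB0 : 0 ≤ B := (abs_nonneg _).trans (Aop_bound F B hB 0)
  have hc2 : 0 < c ^ 2 := by positivity
  set A1 := Aop F with hA1
  have hA1c : Continuous A1 := Aop_continuous F hmeas B hB
  have hA1b : ∀ x, |A1 x| ≤ B := Aop_bound F B hB
  set G : ℝ → ℝ := fun x => Aop A1 x / c ^ 2 with hG
  set G' : ℝ → ℝ := fun x => (A1 (x + 1/2) - A1 (x - 1/2)) / c ^ 2 with hG'
  have hFG : ∀ᵐ x ∂(volume : Measure ℝ), F x = G x := by
    filter_upwards [hker] with x hx
    rw [hG]; simp only; rw [hx]; field_simp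
  have hAG : Aop G = A1 := by
    funext x
    refine (intervalIntegral.integral_congr_ae ?_).symm
    exact hFG.mono fun y hy _ => hy
  have h1 : ∀ x, HasDerivAt G (G' x) x := fun x => (Aop_deriv A1 hA1c x).div_const _
  have hGc : Continuous G := continuous_iff_continuousAt.2 fun x => (h1 x).continuousAt
  have h2 : ∀ x, HasDerivAt G' ((G (x + 1) - 2 * G x + G (x - 1)) / c ^ 2) x := by
    intro x
    have hd : ∀ y, HasDerivAt A1 (G (y + 1/2) - G (y - 1/2)) y := by
      intro y; rw [← hAG]; exact Aop_deriv G hGc y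
    have := (((hd (x + 1/2)).comp_add_const x (1/2)).sub
      ((hd (x - 1/2)).comp_sub_const x (1/2))).div_const (c ^ 2)
    refine this.congr_deriv ?_
    rw [show x + 1/2 + 1/2 = x + 1 by ring, show x + 1/2 - 1/2 = x by ring,
      show x - 1/2 + 1/2 = x by ring, show x - 1/2 - 1/2 = x - 1 by ring]
    ring
  have hGb : ∀ x, |G x| ≤ 2 * B / c ^ 2 := by
    intro x
    rw [hG]; simp only
    rw [abs_div, abs_of_pos hc2]
    gcongr
    have := Aop_bound A1 B (Eventually.of_forall hA1b) x
    linarith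
  have hGb' : ∀ x, |G' x| ≤ 2 * B / c ^ 2 := by
    intro x
    rw [hG']; simp only
    rw [abs_div, abs_of_pos hc2]
    gcongr
    have := abs_sub (A1 (x + 1/2)) (A1 (x - 1/2))
    linarith [hA1b (x + 1/2), hA1b (x - 1/2)]
  obtain ⟨S, hS, a, ha⟩ := core c hc0 G G' h1 h2 _ hGb hGb'
  set T := S.image (fun p => |p.im|) with hT
  set al : ℝ → ℝ := fun k => ∑ p ∈ S with |p.im| = k, (a p).re with hal
  set be : ℝ → ℝ := fun k => ∑ p ∈ S with |p.im| = k, -((a p).im * SignType.sign p.im) with hbe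
  have hGT : ∀ x, G x = ∑ k ∈ T, (al k * Real.cos (k * x) + be k * Real.sin (k * x)) := by
    intro x
    have e1 : G x = ∑ p ∈ S, ((a p).re * Real.cos (p.im * x) - (a p).im * Real.sin (p.im * x)) := by
      have := congrArg Complex.re (ha x)
      rw [Complex.ofReal_re, Complex.re_sum] at this
      rw [this]
      refine Finset.sum_congr rfl fun p hp => ?_
      have e : p * x = ((p.im * x : ℝ) : ℂ) * Complex.I := by
        apply Complex.ext <;> simp [(hS p hp).1]
      rw [e, Complex.mul_re, Complex.exp_ofReal_mul_I_re, Complex.exp_ofReal_mul_I_im]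
    rw [e1, ← Finset.sum_fiberwise_of_maps_to (t := T) (g := fun p => |p.im|)
      (fun p hp => Finset.mem_image_of_mem _ hp)]
    refine Finset.sum_congr rfl fun k _ => ?_
    rw [hal, hbe]; simp only
    rw [Finset.sum_mul, Finset.sum_mul, ← Finset.sum_add_distrib]
    refine Finset.sum_congr rfl fun p hp => ?_
    have hk := (Finset.mem_filter.1 hp).2
    subst hk
    rcases lt_trichotomy p.im 0 with h | h | h
    · rw [abs_of_neg h, sign_neg h]; simp; ring
    · simp [h]
    · rw [abs_of_pos h, sign_pos h]; simp; ring
  have hTr : ∀ k ∈ T, k ≠ 0 → 0 < k ∧ symb k ^ 2 = c ^ 2 := by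
    intro k hk hk0
    obtain ⟨p, hp, rfl⟩ := Finset.mem_image.1 hk
    refine ⟨lt_of_le_of_ne (abs_nonneg _) (Ne.symm hk0), symb_of_root c _ hk0 ?_⟩
    have e : p = (p.im : ℂ) * Complex.I := by apply Complex.ext <;> simp [(hS p hp).1]
    have h0 : Dfun c ((p.im : ℂ) * Complex.I) = 0 := by rw [← e]; exact (hS p hp).2
    rcases abs_choice p.im with h | h
    · rw [h]; exact h0
    · rw [h, Complex.ofReal_neg, neg_mul, Dfun_even]; exact h0
  have hal0 : 0 ∈ T → al 0 = 0 := by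
    intro h0
    have hGf : G = fun x => ∑ k ∈ T, (al k * Real.cos (k * x) + be k * Real.sin (k * x)) :=
      funext hGT
    have e1 : Aop (Aop G) 0 = c ^ 2 * G 0 := by
      rw [hAG, hG]; simp only; field_simp
    rw [hGf, Aop_sum T al be, Aop_sum T (fun k => symb k * al k) (fun k => symb k * be k)] at e1
    simp only [mul_zero, Real.cos_zero, Real.sin_zero, mul_one, add_zero] at e1
    rw [Finset.mul_sum, ← sub_eq_zero, ← Finset.sum_sub_distrib,
      Finset.sum_eq_single_of_mem 0 h0] at e1
    · have hs : symb 0 = 1 := by simp [symb]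
      rw [hs] at e1
      have : (1 - c ^ 2) * al 0 = 0 := by linarith
      refine (mul_eq_zero.1 this).resolve_left ?_
      nlinarith
    · intro k hk hk0
      have := (hTr k hk hk0).2
      rw [← this]; ring
  set K := T.erase 0 with hK
  refine ⟨K.card, K.orderEmbOfFin rfl, (K.orderEmbOfFin rfl).strictMono, ?_,
    fun i => al (K.orderEmbOfFin rfl i), fun i => be (K.orderEmbOfFin rfl i), ?_⟩
  · intro i
    have := Finset.mem_erase.1 (K.orderEmbOfFin_mem rfl i)
    exact hTr _ this.2 this.1
  · filter_upwards [hFG] with x hx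
    rw [hx, hGT x]
    have e1 : ∑ k ∈ T, (al k * Real.cos (k * x) + be k * Real.sin (k * x)) =
        ∑ k ∈ K, (al k * Real.cos (k * x) + be k * Real.sin (k * x)) := by
      rw [hK]
      by_cases h0 : 0 ∈ T
      · rw [← Finset.add_sum_erase _ _ h0, hal0 h0]; simp
      · rw [Finset.erase_eq_of_notMem h0]
    rw [e1]
    conv_lhs => rw [← Finset.map_orderEmbOfFin_univ K rfl]
    rw [Finset.sum_map]
    rfl
end

section
/- Let c ∈ (0,1) and let k_c > 0 satisfy a(k_c) = c and m'(k_c) ≠ 0. Then the functions M Y₁ and M Y₂ are bounded on ℝ and satisfy (M Y₁)(x) = 0 and (M Y₂)(x) = 0 for all x with |x| > 1; that is, M Y₁ and M Y₂ are supported in the interval [−1, 1]. -/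
open MeasureTheory Real Filter Topology

/-- The symbol `m(k) = a(k)² - c²`. -/
noncomputable def msymb (c : ℝ) : ℝ → ℝ := fun k => (symb k) ^ 2 - c ^ 2

/-- `Y₁(x) = (√(2π)/m'(k_c)) cos(k_c x) sgn(x)`. -/
noncomputable def Y1 (c kc : ℝ) : ℝ → ℝ :=
  fun x => Real.sqrt (2 * Real.pi) / deriv (msymb c) kc * (Real.cos (kc * x) * Real.sign x)

/-- `Y₂(x) = (√(2π)/m'(k_c)) sin(k_c x) sgn(x)`. -/
noncomputable def Y2 (c kc : ℝ) : ℝ → ℝ :=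
  fun x => Real.sqrt (2 * Real.pi) / deriv (msymb c) kc * (Real.sin (kc * x) * Real.sign x)

lemma Aop_bound_s6 (F : ℝ → ℝ) (K : ℝ) (h : ∀ x, |F x| ≤ K) (x : ℝ) : |Aop F x| ≤ K := by
  have := intervalIntegral.norm_integral_le_of_norm_le_const (f := F) (a := x - 1/2) (b := x + 1/2)
    (C := K) (fun s _ => by simpa using h s)
  have e : |x + 1/2 - (x - 1/2)| = 1 := by ring_nf; norm_num
  rw [e, mul_one] at this
  simpa [Aop] using this

lemma Mop_bound (c : ℝ) (F : ℝ → ℝ) (K : ℝ) (h : ∀ x, |F x| ≤ K) (x : ℝ) :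
    |Mop c F x| ≤ K + c ^ 2 * K := by
  have h1 := Aop_bound_s6 _ K (Aop_bound_s6 F K h) x
  have h2 : |c ^ 2 * F x| ≤ c ^ 2 * K := by
    rw [abs_mul, abs_of_nonneg (sq_nonneg c)]
    exact mul_le_mul_of_nonneg_left (h x) (sq_nonneg c)
  exact (abs_sub _ _).trans (add_le_add h1 h2)

lemma Aop_congr (F G : ℝ → ℝ) (x : ℝ) (h : ∀ t, x - 1/2 ≤ t → t ≤ x + 1/2 → F t = G t) :
    Aop F x = Aop G x := by
  refine intervalIntegral.integral_congr ?_
  intro t ht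
  rw [Set.uIcc_of_le (by linarith)] at ht
  exact h t ht.1 ht.2

lemma Mop_zero (c : ℝ) (F w : ℝ → ℝ) (x : ℝ) (hw : ∀ x, Aop w x = c * w x)
    (h : ∀ t, x - 1 ≤ t → t ≤ x + 1 → F t = w t) : Mop c F x = 0 := by
  have h1 : Aop (Aop F) x = Aop (fun s => c * w s) x := by
    refine Aop_congr _ _ _ fun s h1 h2 => ?_
    rw [← hw]
    exact Aop_congr _ _ _ fun t h3 h4 => h t (by linarith) (by linarith)
  have h2 : Aop (fun s => c * w s) x = c * (c * w x) := by
    rw [← hw]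
    simp only [Aop]
    exact intervalIntegral.integral_const_mul _ _
  rw [Mop, h1, h2, h x (by linarith) (by linarith)]
  ring

lemma eig_cos (c k D : ℝ) (hk : 0 < k) (ha : symb k = c) (x : ℝ) :
    Aop (fun s => D * Real.cos (k * s)) x = c * (D * Real.cos (k * x)) := by
  rw [symb, if_neg hk.ne'] at ha
  simp only [Aop]
  rw [intervalIntegral.integral_const_mul, intervalIntegral.integral_comp_mul_left _ hk.ne',
    integral_cos, ← ha, show k * (x + 1/2) = k * x + k / 2 by ring,
    show k * (x - 1/2) = k * x - k / 2 by ring, Real.sin_add, Real.sin_sub, smul_eq_mul]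
  field_simp
  ring

lemma eig_sin (c k D : ℝ) (hk : 0 < k) (ha : symb k = c) (x : ℝ) :
    Aop (fun s => D * Real.sin (k * s)) x = c * (D * Real.sin (k * x)) := by
  rw [symb, if_neg hk.ne'] at ha
  simp only [Aop]
  rw [intervalIntegral.integral_const_mul, intervalIntegral.integral_comp_mul_left _ hk.ne',
    integral_sin, ← ha, show k * (x + 1/2) = k * x + k / 2 by ring,
    show k * (x - 1/2) = k * x - k / 2 by ring, Real.cos_add, Real.cos_sub, smul_eq_mul]
  field_simp
  ring

lemma abs_aux (D u x : ℝ) (hu : |u| ≤ 1) : |D * (u * Real.sign x)| ≤ |D| := by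
  have hs : |Real.sign x| ≤ 1 := by
    rcases Real.sign_apply_eq x with h | h | h <;> rw [h] <;> norm_num
  rw [abs_mul, abs_mul]
  exact mul_le_of_le_one_right (abs_nonneg D) (mul_le_one₀ hu (abs_nonneg _) hs)

/-- `M Y₁` and `M Y₂` are bounded and supported in `[-1, 1]`. -/
theorem stmt6 (c kc : ℝ) (hc0 : 0 < c) (hc1 : c < 1) (hkc : 0 < kc)
    (ha : symb kc = c) (hm' : deriv (msymb c) kc ≠ 0) :
    (∃ B : ℝ, ∀ x, |Mop c (Y1 c kc) x| ≤ B ∧ |Mop c (Y2 c kc) x| ≤ B) ∧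
    (∀ x : ℝ, 1 < |x| → Mop c (Y1 c kc) x = 0 ∧ Mop c (Y2 c kc) x = 0) := by
  refine ⟨⟨_, fun x => ⟨Mop_bound c _ _ (fun y => abs_aux _ _ y (Real.abs_cos_le_one _)) x,
    Mop_bound c _ _ (fun y => abs_aux _ _ y (Real.abs_sin_le_one _)) x⟩⟩, fun x hx => ?_⟩
  rcases lt_abs.1 hx with h | h
  · refine ⟨Mop_zero c _ _ x (eig_cos c kc (√(2 * π) / deriv (msymb c) kc) hkc ha) ?_,
      Mop_zero c _ _ x (eig_sin c kc (√(2 * π) / deriv (msymb c) kc) hkc ha) ?_⟩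
    · intro t h1 h2
      rw [Y1, Real.sign_of_pos (by linarith), mul_one]
    · intro t h1 h2
      rw [Y2, Real.sign_of_pos (by linarith), mul_one]
  · refine ⟨Mop_zero c _ _ x (eig_cos c kc (-(√(2 * π) / deriv (msymb c) kc)) hkc ha) ?_,
      Mop_zero c _ _ x (eig_sin c kc (-(√(2 * π) / deriv (msymb c) kc)) hkc ha) ?_⟩
    · intro t h1 h2
      rw [Y1, Real.sign_of_neg (by linarith)]
      ring
    · intro t h1 h2
      rw [Y2, Real.sign_of_neg (by linarith)]
      ring
end

section
/- Let c ∈ (0,1) and assume k_c > 0 satisfies a(k_c) = c, m'(k_c) ≠ 0, and m(k) ≠ 0 for all real k ∉ {−k_c, k_c}. Then there exists a constant C_M > 0 such that for every G ∈ L^∞(ℝ) vanishing almost everywhere outside [−1, 1] there exists a unique pair (S, η) ∈ X × ℝ with M S = A²G + η everywhere on ℝ. Moreover, S and η depend linearly on G, and the estimates |η| ≤ C_M ‖A²G‖_∞, ‖S‖_∞ ≤ C_M ‖A²G‖_∞, ‖S'‖_∞ ≤ C_M ‖A G‖_∞, and ‖S''‖_∞ ≤ C_M ‖G‖_∞ hold.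 -/
open MeasureTheory Real Filter Topology

/-- The space `X` of `S ∈ W^{2,∞}(ℝ)` with `S(0) = 0` such that `lim_{x→+∞} S(x)` exists. -/
def IsX (S : ℝ → ℝ) : Prop := IsW2inf S ∧ S 0 = 0 ∧ ∃ l : ℝ, Tendsto S atTop (nhds l)

/-- Division of an analytic function by a linear factor. -/
lemma w_analytic_dslope {f : ℝ → ℝ} (hf : ∀ x, AnalyticAt ℝ f x) (a : ℝ) :
    ∀ x, AnalyticAt ℝ (dslope f a) x := by
  intro x
  by_cases h : x = a
  · subst h
    obtain ⟨p, hp⟩ := hf x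
    exact ⟨_, hp.has_fpower_series_dslope_fslope⟩
  · have h1 : AnalyticAt ℝ (fun y => (y - a)⁻¹ * (f y - f a)) x := by
      refine AnalyticAt.mul (AnalyticAt.inv ?_ (sub_ne_zero.mpr h)) ?_
      · exact analyticAt_id.sub analyticAt_const
      · exact (hf x).sub analyticAt_const
    refine h1.congr ?_
    refine EventuallyEq.trans ?_ (dslope_eventuallyEq_slope_of_ne f h).symm
    exact Eventually.of_forall fun y => by simp [slope_def_field]; ring

/-- Division by `x² - k²`. -/
lemma w_quot {f : ℝ → ℝ} (hf : ∀ x, AnalyticAt ℝ f x) {k : ℝ} (hk : 0 < k)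
    (h1 : f k = 0) (h2 : f (-k) = 0) :
    ∃ g : ℝ → ℝ, (∀ x, AnalyticAt ℝ g x) ∧ (∀ x, f x = (x ^ 2 - k ^ 2) * g x) ∧
      deriv f k = 2 * k * g k := by
  have e1 : ∀ x, f x = (x - k) * dslope f k x := fun x => by
    have := sub_smul_dslope f k x
    rw [h1, smul_eq_mul] at this; linarith
  have z : dslope f k (-k) = 0 := by
    have := e1 (-k)
    rw [h2] at this
    have h3 : (-k - k) ≠ 0 := by linarith
    rcases mul_eq_zero.mp this.symm with h | h
    · exact absurd h h3
    · exact h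
  have e2 : ∀ x, dslope f k x = (x + k) * dslope (dslope f k) (-k) x := fun x => by
    have := sub_smul_dslope (dslope f k) (-k) x
    rw [z, smul_eq_mul] at this; linarith
  refine ⟨dslope (dslope f k) (-k), w_analytic_dslope (w_analytic_dslope hf k) (-k), ?_, ?_⟩
  · intro x; rw [e1, e2]; ring
  · rw [← dslope_same, e2]; ring

lemma w_symb_eq (k : ℝ) : symb k = sinc (k / 2) := by
  unfold symb
  by_cases h : k = 0
  · simp [h]
  · rw [if_neg h, sinc_of_ne_zero (by positivity)]

lemma w_symb_analytic : ∀ x, AnalyticAt ℝ symb x := by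
  intro x
  have : symb = (fun y => dslope sin 0 (y / 2)) := by
    funext k; rw [w_symb_eq, sinc_eq_dslope]
  rw [this]
  have h2 : AnalyticAt ℝ (fun y : ℝ => y / 2) x :=
    analyticAt_id.div analyticAt_const (by norm_num)
  exact (w_analytic_dslope (fun y => Real.analyticAt_sin) 0 (x/2)).fun_comp (f := fun y : ℝ => y / 2) h2

lemma w_symb_neg (k : ℝ) : symb (-k) = symb k := by
  rw [w_symb_eq, w_symb_eq, neg_div, sinc_neg]

lemma w_symb_mul (k : ℝ) : k * symb k = 2 * sin (k / 2) := by
  unfold symb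
  split_ifs with h
  · simp [h]
  · field_simp

lemma w_symb_sq (k : ℝ) : k ^ 2 * symb k ^ 2 = 2 * (1 - cos k) := by
  have h := w_symb_mul k
  have h2 : cos k = 1 - 2 * sin (k/2) ^ 2 := by
    have := Real.cos_two_mul (k/2)
    rw [show 2 * (k/2) = k by ring] at this
    rw [this, Real.cos_sq']; ring
  rw [← mul_pow, h, h2]; ring

lemma w_msymb_analytic (c : ℝ) : ∀ x, AnalyticAt ℝ (msymb c) x := fun x =>
  ((w_symb_analytic x).pow 2).sub analyticAt_const

/-- continuous function which is `O(x⁻²)` -/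
lemma w_integrable {f : ℝ → ℝ} (hf : Continuous f) {R C : ℝ}
    (h : ∀ x, R ≤ |x| → x ^ 2 * |f x| ≤ C) : Integrable f := by
  obtain ⟨D, hD⟩ : ∃ D, ∀ x ∈ Set.Icc (-R) R, ‖f x‖ ≤ D :=
    isCompact_Icc.exists_bound_of_continuousOn hf.continuousOn
  have hI3 : Integrable (fun x : ℝ => (|D| * (1 + R ^ 2)) * (1 + x ^ 2)⁻¹
      + (2 * |C|) * (1 + x ^ 2)⁻¹  +
      (Set.indicator (Set.Icc (-1) 1) (fun x => |f x|) x)) := by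
    refine ((integrable_inv_one_add_sq.const_mul _).add
      (integrable_inv_one_add_sq.const_mul _)).add ?_
    rw [integrable_indicator_iff measurableSet_Icc]
    exact (hf.abs.continuousOn).integrableOn_compact isCompact_Icc
  refine hI3.mono' hf.aestronglyMeasurable (Eventually.of_forall fun x => ?_)
  have p1 : 0 ≤ (|D| * (1 + R ^ 2)) * (1 + x ^ 2)⁻¹ := by positivity
  have p2 : 0 ≤ (2 * |C|) * (1 + x ^ 2)⁻¹ := by positivity
  have p3 : 0 ≤ (Set.indicator (Set.Icc (-1) 1) (fun x => |f x|) x) :=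
    Set.indicator_nonneg (fun _ _ => abs_nonneg _) x
  rw [Real.norm_eq_abs]
  by_cases h1 : |x| ≤ 1
  · have : Set.indicator (Set.Icc (-1) 1) (fun x => |f x|) x = |f x| :=
      Set.indicator_of_mem (show x ∈ Set.Icc (-1) 1 from abs_le.mp h1) _
    linarith
  push Not at h1
  by_cases h2 : R ≤ |x|
  · have h3 := h x h2
    have hx : 1 ≤ x ^ 2 := by rw [← sq_abs]; nlinarith
    have : |f x| ≤ (2 * |C|) * (1 + x ^ 2)⁻¹ := by
      rw [← div_eq_mul_inv, le_div_iff₀ (by positivity)]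
      have := le_abs_self C
      nlinarith [abs_nonneg (f x)]
    linarith
  · push Not at h2
    have h3 := hD x (abs_le.mp h2.le)
    rw [Real.norm_eq_abs] at h3
    have : |f x| ≤ (|D| * (1 + R ^ 2)) * (1 + x ^ 2)⁻¹ := by
      rw [← div_eq_mul_inv, le_div_iff₀ (by positivity)]
      have hx : x ^ 2 ≤ R ^ 2 := by rw [← sq_abs]; nlinarith [abs_nonneg x]
      have := le_abs_self D
      nlinarith [abs_nonneg (f x), abs_nonneg D]
    linarith

lemma w_symb_sq_int : Integrable (fun x => symb x ^ 2) := by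
  refine w_integrable (R := 0) (C := 4) ?_ ?_
  · exact (continuous_iff_continuousAt.mpr fun x => (w_symb_analytic x).continuousAt).pow 2
  · intro x _
    rw [abs_of_nonneg (sq_nonneg _), w_symb_sq]
    linarith [neg_one_le_cos x]

/-- The symbol-side data. -/
lemma w_symbol_data (c kc : ℝ) (hc0 : 0 < c) (hkc : 0 < kc)
    (ha : symb kc = c) (hm' : deriv (msymb c) kc ≠ 0)
    (hroots : ∀ k : ℝ, k ≠ kc → k ≠ -kc → msymb c k ≠ 0) :
    ∃ (g ψ : ℝ → ℝ) (α : ℝ), (∀ x, AnalyticAt ℝ g x) ∧ (∀ x, g x ≠ 0) ∧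
      (∀ x, msymb c x = (x ^ 2 - kc ^ 2) * g x) ∧ Continuous ψ ∧ Integrable ψ ∧ Integrable g ∧
      (∀ x, msymb c x * ψ x = symb x ^ 2 / c ^ 2 - α * kc * g x) := by
  have hm0 : msymb c kc = 0 := by simp [msymb, ha]
  have hm1 : msymb c (-kc) = 0 := by simp [msymb, w_symb_neg, ha]
  obtain ⟨g, hg, hmg, hdg⟩ := w_quot (w_msymb_analytic c) hkc hm0 hm1
  have hgc : Continuous g := continuous_iff_continuousAt.mpr fun x => (hg x).continuousAt
  have hgk : g kc ≠ 0 := by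
    intro h; rw [h, mul_zero] at hdg; exact hm' hdg
  have hgneg : ∀ x, g (-x) = g x := by
    have hd : Dense ({kc, -kc} : Set ℝ)ᶜ :=
      Set.Countable.dense_compl ℝ (Set.to_countable _)
    have := Continuous.ext_on hd (hgc.comp continuous_neg) hgc (by
      intro x hx
      simp only [Set.mem_compl_iff, Set.mem_insert_iff, Set.mem_singleton_iff, not_or] at hx
      have hne : x ^ 2 - kc ^ 2 ≠ 0 := by
        rw [sq_sub_sq]
        refine mul_ne_zero ?_ (sub_ne_zero.mpr hx.1)
        intro h; apply hx.2; linarith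
      have h1 := hmg (-x)
      have h2 := hmg x
      have h3 : msymb c (-x) = msymb c x := by simp [msymb, w_symb_neg]
      rw [h3, h2, neg_sq] at h1
      exact (mul_left_cancel₀ hne h1).symm)
    exact fun x => congrFun this x
  have hg0 : ∀ x, g x ≠ 0 := by
    intro x
    by_cases h1 : x = kc
    · rw [h1]; exact hgk
    by_cases h2 : x = -kc
    · rw [h2, hgneg]; exact hgk
    intro h
    apply hroots x h1 h2
    rw [hmg, h, mul_zero]
  set α : ℝ := 1 / (kc * g kc) with hα
  have hN : ∀ x, AnalyticAt ℝ (fun x => symb x ^ 2 / c ^ 2 - α * kc * g x) x := fun x => by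
    refine AnalyticAt.sub (((w_symb_analytic x).pow 2).div analyticAt_const (by positivity)) ?_
    exact analyticAt_const.mul (hg x)
  obtain ⟨g2, hg2, hNg, -⟩ := w_quot hN hkc (by simp only [ha, hα]; field_simp; ring)
    (by simp only [ha, hα, w_symb_neg, hgneg]; field_simp; ring)
  have hg2c : Continuous g2 := continuous_iff_continuousAt.mpr fun x => (hg2 x).continuousAt
  have hψc : Continuous (fun x => g2 x / g x) := hg2c.div hgc hg0
  have hmψ : ∀ x, msymb c x * (g2 x / g x) = symb x ^ 2 / c ^ 2 - α * kc * g x := by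
    intro x
    rw [hmg, hNg]
    have := hg0 x
    field_simp
  -- bounds at infinity
  have hsc : ∀ x, x ^ 2 * symb x ^ 2 ≤ 4 := fun x => by
    rw [w_symb_sq]; linarith [neg_one_le_cos x]
  set R : ℝ := max (2 * kc) (4 / c) with hR
  have hbig : ∀ x, R ≤ |x| → kc ^ 2 ≤ x ^ 2 / 4 ∧ 0 < x ^ 2 ∧ symb x ^ 2 ≤ c ^ 2 / 4 := by
    intro x hx
    have h1 : 2 * kc ≤ |x| := (le_max_left _ _).trans hx
    have h2 : 4 / c ≤ |x| := (le_max_right _ _).trans hx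
    have h3 : 4 * kc ^ 2 ≤ x ^ 2 := by rw [← sq_abs x]; nlinarith
    rw [div_le_iff₀ hc0] at h2
    have h4 : 16 ≤ x ^ 2 * c ^ 2 := by rw [← sq_abs x, ← mul_pow]; nlinarith
    have h5 : 0 < x ^ 2 := by nlinarith
    refine ⟨by linarith, h5, ?_⟩
    have := hsc x
    have h6 : x ^ 2 * symb x ^ 2 ≤ x ^ 2 * (c ^ 2 / 4) := by linarith
    exact le_of_mul_le_mul_left h6 h5
  have hgint : Integrable g := by
    refine w_integrable hgc (R := R) (C := 2 * c ^ 2) fun x hx => ?_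
    obtain ⟨h1, h2, h3⟩ := hbig x hx
    have h4 : |msymb c x| ≤ c ^ 2 := by
      unfold msymb; rw [abs_le]; constructor <;> nlinarith [sq_nonneg (symb x)]
    rw [hmg, abs_mul, abs_of_nonneg (by nlinarith)] at h4
    nlinarith [abs_nonneg (g x)]
  refine ⟨g, fun x => g2 x / g x, α, hg, hg0, hmg, hψc, ?_, hgint, hmψ⟩
  have hrhs : Continuous (fun x => symb x ^ 2 / c ^ 2 - α * kc * g x) :=
    continuous_iff_continuousAt.mpr fun x => (hN x).continuousAt
  refine w_integrable hψc (R := R) (C := (4 / c ^ 2 + |α * kc| * (2 * c ^ 2)) * (2 / c ^ 2))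
    fun x hx => ?_
  obtain ⟨h1, h2, h3⟩ := hbig x hx
  have h4 : |msymb c x| ≤ c ^ 2 := by
    unfold msymb; rw [abs_le]; constructor <;> nlinarith [sq_nonneg (symb x)]
  have h4' : c ^ 2 / 2 ≤ |msymb c x| := by
    unfold msymb; rw [abs_of_nonpos (by nlinarith)]; nlinarith
  rw [hmg, abs_mul, abs_of_nonneg (by nlinarith)] at h4
  have h5 : x ^ 2 * |g x| ≤ 2 * c ^ 2 := by nlinarith [abs_nonneg (g x)]
  have h6 : |msymb c x| * |g2 x / g x| ≤ symb x ^ 2 / c ^ 2 + |α * kc| * |g x| := by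
    rw [← abs_mul, hmψ, ← abs_mul]
    refine (abs_sub _ _).trans ?_
    rw [abs_of_nonneg (a := symb x ^ 2 / c ^ 2) (by positivity)]
  have h7 : x ^ 2 * (|msymb c x| * |g2 x / g x|) ≤ 4 / c ^ 2 + |α * kc| * (2 * c ^ 2) := by
    have e1 : x ^ 2 * (symb x ^ 2 / c ^ 2) ≤ 4 / c ^ 2 := by
      rw [← mul_div_assoc]; exact div_le_div_of_nonneg_right (hsc x) (by positivity)
    have e2 := mul_le_mul_of_nonneg_left h5 (abs_nonneg (α * kc))
    nlinarith [mul_le_mul_of_nonneg_left h6 h2.le]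
  have h8 : c ^ 2 / 2 * (x ^ 2 * |g2 x / g x|) ≤ x ^ 2 * (|msymb c x| * |g2 x / g x|) := by
    have := mul_le_mul_of_nonneg_right h4' (mul_nonneg h2.le (abs_nonneg (g2 x / g x)))
    linarith
  have h9 := h8.trans h7
  have hc2 : (0:ℝ) < 2 / c ^ 2 := by positivity
  calc x ^ 2 * |g2 x / g x| = (c ^ 2 / 2 * (x ^ 2 * |g2 x / g x|)) * (2 / c ^ 2) := by
        field_simp
    _ ≤ _ := mul_le_mul_of_nonneg_right h9 hc2.le

open scoped FourierTransform

/-- Cosine transform. -/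
noncomputable def wCt (χ : ℝ → ℝ) (x : ℝ) : ℝ := ∫ t, χ t * cos (2 * π * t * x)

lemma wCt_int {χ : ℝ → ℝ} (h : Integrable χ) (x : ℝ) :
    Integrable (fun t => χ t * cos (2 * π * t * x)) := by
  refine h.mul_bdd (c := 1) (by fun_prop) (Eventually.of_forall fun t => ?_)
  exact abs_cos_le_one _

lemma wCt_re {χ : ℝ → ℝ} (h : Integrable χ) (x : ℝ) :
    wCt χ x = (𝓕 (fun t => (χ t : ℂ)) x).re := by
  rw [Real.fourier_real_eq_integral_exp_smul]
  have hi : Integrable (fun v : ℝ => Complex.exp (↑(-2 * π * v * x) * Complex.I) • (χ v : ℂ)) := by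
    refine Integrable.bdd_mul (c := 1) h.ofReal (by fun_prop) (Eventually.of_forall fun t => ?_)
    rw [Complex.norm_exp_ofReal_mul_I]
  have := integral_re hi
  simp only [RCLike.re_to_complex] at this
  rw [← this]
  unfold wCt
  congr 1; funext t
  rw [smul_eq_mul, Complex.re_mul_ofReal, Complex.exp_ofReal_mul_I_re,
    show -2 * π * t * x = -(2 * π * t * x) by ring, cos_neg, mul_comm]

lemma wCt_cont {χ : ℝ → ℝ} (h : Integrable χ) : Continuous (wCt χ) := by
  have : wCt χ = fun x => (𝓕 (fun t => (χ t : ℂ)) x).re := funext (wCt_re h)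
  rw [this]
  refine Complex.continuous_re.comp ?_
  exact VectorFourier.fourierIntegral_continuous Real.continuous_fourierChar
    (by fun_prop) h.ofReal

lemma wCt_tendsto {χ : ℝ → ℝ} (h : Integrable χ) : Tendsto (wCt χ) atTop (𝓝 0) := by
  have : wCt χ = fun x => (𝓕 (fun t => (χ t : ℂ)) x).re := funext (wCt_re h)
  rw [this]
  have h1 := (Real.zero_at_infty_fourier (fun t => (χ t : ℂ))).mono_left
    (atTop_le_cocompact (α := ℝ))
  have := (Complex.continuous_re.tendsto 0).comp h1
  rw [Complex.zero_re] at this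
  exact this

lemma wCt_bound {χ : ℝ → ℝ} (h : Integrable χ) (x : ℝ) : |wCt χ x| ≤ ∫ t, |χ t| := by
  unfold wCt
  rw [← Real.norm_eq_abs]
  refine norm_integral_le_of_norm_le h.abs (Eventually.of_forall fun t => ?_)
  rw [norm_mul]
  exact mul_le_of_le_one_right (norm_nonneg _) (abs_cos_le_one _)

lemma w_fin : IsFiniteMeasure (volume.restrict (Set.uIoc (-(1/2):ℝ) (1/2))) := by
  rw [Set.uIoc_of_le (by norm_num)]; infer_instance

lemma wAop_eq (F : ℝ → ℝ) (x : ℝ) : Aop F x = ∫ s in (-(1/2):ℝ)..(1/2), F (x + s) := by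
  rw [intervalIntegral.integral_comp_add_left]; unfold Aop; congr 1

lemma w_int_cos (t x : ℝ) : ∫ s in (-(1/2):ℝ)..(1/2), cos (2 * π * t * (x + s)) =
    symb (2 * π * t) * cos (2 * π * t * x) := by
  by_cases ht : t = 0
  · simp [ht, symb]; norm_num
  have hp : 2 * π * t ≠ 0 := by positivity
  have hd : ∀ s ∈ Set.uIcc (-(1/2):ℝ) (1/2), HasDerivAt
      (fun s => sin (2 * π * t * (x + s)) / (2 * π * t)) (cos (2 * π * t * (x + s))) s := by
    intro s _
    have h1 : HasDerivAt (fun s => 2 * π * t * (x + s)) (2 * π * t) s := by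
      simpa using ((hasDerivAt_id s).const_add x).const_mul (2 * π * t)
    have := h1.sin.div_const (2 * π * t)
    rwa [mul_div_cancel_right₀ _ hp] at this
  rw [intervalIntegral.integral_eq_sub_of_hasDerivAt hd
    (by apply Continuous.intervalIntegrable; fun_prop)]
  unfold symb
  rw [if_neg hp, ← sub_div, show 2 * π * t * (x + 1/2) = 2 * π * t * x + 2 * π * t / 2 by ring,
    show 2 * π * t * (x + -(1/2)) = 2 * π * t * x - 2 * π * t / 2 by ring, sin_add, sin_sub]
  field_simp; ring

lemma wCt_Aop {χ : ℝ → ℝ} (h : Integrable χ) :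
    Aop (wCt χ) = wCt (fun t => symb (2 * π * t) * χ t) := by
  funext x
  rw [wAop_eq]
  unfold wCt
  rw [intervalIntegral_integral_swap]
  · congr 1; funext t
    rw [intervalIntegral.integral_const_mul, w_int_cos]; ring
  · have := w_fin
    have h1 : Integrable (fun p : ℝ × ℝ => (1:ℝ) * χ p.2)
        ((volume.restrict (Set.uIoc (-(1/2):ℝ) (1/2))).prod volume) :=
      (integrable_const (1:ℝ)).mul_prod h
    simp only [one_mul] at h1
    refine h1.mul_bdd (c := 1) (by fun_prop) (Eventually.of_forall fun t => ?_)
    exact abs_cos_le_one _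

lemma wCt_symb_int {χ : ℝ → ℝ} (h : Integrable χ) :
    Integrable (fun t => symb (2 * π * t) * χ t) := by
  have hc : Continuous symb := continuous_iff_continuousAt.mpr fun x =>
    (w_symb_analytic x).continuousAt
  refine h.bdd_mul (c := 1) (by fun_prop) (Eventually.of_forall fun t => ?_)
  rw [w_symb_eq]; exact abs_sinc_le_one _

lemma wCt_Mop {χ : ℝ → ℝ} (c : ℝ) (h : Integrable χ) :
    Mop c (wCt χ) = wCt (fun t => msymb c (2 * π * t) * χ t) := by
  funext x
  unfold Mop
  rw [wCt_Aop h, wCt_Aop (wCt_symb_int h)]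
  unfold wCt
  rw [← integral_const_mul, ← integral_sub (wCt_int (wCt_symb_int (wCt_symb_int h)) x)
    ((wCt_int h x).const_mul _)]
  congr 1; funext t
  unfold msymb; ring

lemma wCt_inv {f : ℝ → ℝ} (hc : Continuous f) (hi : Integrable f) (he : ∀ x, f (-x) = f x)
    (hF : Integrable (wCt f)) : wCt (wCt f) = f := by
  have hfou : 𝓕 (fun t => (f t : ℂ)) = fun x => (wCt f x : ℂ) := by
    funext x
    refine Complex.ext ?_ ?_
    · rw [← wCt_re hi]; simp
    · rw [Complex.ofReal_im, Real.fourier_real_eq_integral_exp_smul]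
      have hint : Integrable
          (fun v : ℝ => Complex.exp (↑(-2 * π * v * x) * Complex.I) • (f v : ℂ)) := by
        refine Integrable.bdd_mul (c := 1) hi.ofReal (by fun_prop)
          (Eventually.of_forall fun t => ?_)
        rw [Complex.norm_exp_ofReal_mul_I]
      have := integral_im hint
      simp only [RCLike.im_to_complex] at this
      rw [← this]
      have e : ∀ t : ℝ, (Complex.exp (↑(-2 * π * t * x) * Complex.I) • (f t : ℂ)).im =
          - (sin (2 * π * t * x) * f t) := by
        intro t
        rw [smul_eq_mul, Complex.im_mul_ofReal, Complex.exp_ofReal_mul_I_im,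
          show -2 * π * t * x = -(2 * π * t * x) by ring, sin_neg]; ring
      simp_rw [e]
      have h2 := integral_neg_eq_self (fun t => -(sin (2 * π * t * x) * f t)) volume
      have h3 : ∀ t, -(sin (2 * π * -t * x) * f (-t)) = - -(sin (2 * π * t * x) * f t) := by
        intro t
        rw [he, show 2 * π * -t * x = -(2 * π * t * x) by ring, sin_neg]; ring
      simp_rw [h3] at h2
      rw [integral_neg] at h2
      linarith
  have hinv := Continuous.fourierInv_fourier_eq (f := fun t => (f t : ℂ)) (by fun_prop)
    hi.ofReal (by rw [hfou]; exact hF.ofReal)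
  funext x
  have h1 := congrFun hinv x
  rw [hfou, Real.fourierInv_eq'] at h1
  have hint : Integrable (fun v : ℝ => Complex.exp (↑(2 * π * inner ℝ v x) * Complex.I) •
      (wCt f v : ℂ)) := by
    refine Integrable.bdd_mul (c := 1) hF.ofReal (by fun_prop)
      (Eventually.of_forall fun t => ?_)
    rw [Complex.norm_exp_ofReal_mul_I]
  have h2 := integral_re hint
  simp only [RCLike.re_to_complex] at h2
  rw [h1, Complex.ofReal_re] at h2
  rw [← h2]
  show ∫ t, wCt f t * cos (2 * π * t * x) = _
  congr 1; funext t
  rw [smul_eq_mul, Complex.re_mul_ofReal, Complex.exp_ofReal_mul_I_re, mul_comm]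
  congr 2
  simp; ring

/-- The tent function. -/
noncomputable def wTent (x : ℝ) : ℝ := max 0 (1 - |x|)

lemma wTent_cont : Continuous wTent := by unfold wTent; fun_prop

lemma wAop_cont {f : ℝ → ℝ} (hf : Continuous f) : Continuous (Aop f) := by
  have : Aop f = fun x => ∫ s in (-(1/2):ℝ)..(1/2), f (x + s) := funext (wAop_eq f)
  rw [this]
  exact intervalIntegral.continuous_parametric_intervalIntegral_of_continuous' (by fun_prop) _ _

lemma wAop_lin {f g : ℝ → ℝ} (hf : Continuous f) (hg : Continuous g) (a : ℝ) :
    Aop (fun x => f x + a * g x) = fun x => Aop f x + a * Aop g x := by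
  funext x
  unfold Aop
  rw [intervalIntegral.integral_add (hf.intervalIntegrable _ _)
    ((hg.const_mul a).intervalIntegrable _ _), intervalIntegral.integral_const_mul]

lemma wMop_lin {f g : ℝ → ℝ} (hf : Continuous f) (hg : Continuous g) (a c : ℝ) (x : ℝ) :
    Mop c (fun x => f x + a * g x) x = Mop c f x + a * Mop c g x := by
  unfold Mop
  rw [wAop_lin hf hg, wAop_lin (wAop_cont hf) (wAop_cont hg)]
  ring

/-- Aop from an antiderivative -/
lemma wAop_antideriv {F f : ℝ → ℝ} (hF : ∀ x, HasDerivAt F (f x) x) (hf : Continuous f) (x : ℝ) :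
    Aop f x = F (x + 1/2) - F (x - 1/2) :=
  intervalIntegral.integral_eq_sub_of_hasDerivAt (fun y _ => hF y) (hf.intervalIntegrable _ _)

lemma w_min_deriv {F f : ℝ → ℝ} (hF : ∀ x, HasDerivAt F (f x) x) (h0 : f 0 = 0) (x : ℝ) :
    HasDerivAt (fun x => F (min x 0)) (f (min x 0)) x := by
  rcases lt_trichotomy x 0 with h | h | h
  · rw [min_eq_left h.le]
    refine (hF x).congr_of_eventuallyEq ?_
    filter_upwards [Iio_mem_nhds h] with y hy
    rw [min_eq_left (le_of_lt hy)]
  · subst h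
    rw [min_self, h0, hasDerivAt_iff_isLittleO]
    have h1 := hF 0
    rw [h0, hasDerivAt_iff_isLittleO] at h1
    simp only [smul_zero, sub_zero, min_self] at h1 ⊢
    rw [Asymptotics.isLittleO_iff] at h1 ⊢
    intro ε hε
    filter_upwards [h1 hε] with y hy
    rcases le_total y 0 with h | h
    · rw [min_eq_left h]; exact hy
    · rw [min_eq_right h]; simp; positivity
  · rw [min_eq_right h.le, h0]
    refine (hasDerivAt_const x (F 0)).congr_of_eventuallyEq ?_
    filter_upwards [Ioi_mem_nhds h] with y hy
    rw [min_eq_right (le_of_lt hy)]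

/-- The half-line sine. -/
noncomputable def wP (k : ℝ) (x : ℝ) : ℝ := sin (k * min x 0)

lemma wP_cont (k : ℝ) : Continuous (wP k) := by unfold wP; fun_prop

lemma wP_Aop2 {k : ℝ} (hk : 0 < k) (x : ℝ) : Aop (Aop (wP k)) x =
    (fun x => min x 0 / k - sin (k * min x 0) / k ^ 2) (x + 1)
    - 2 * (fun x => min x 0 / k - sin (k * min x 0) / k ^ 2) x
    + (fun x => min x 0 / k - sin (k * min x 0) / k ^ 2) (x - 1) := by
  have hkx : ∀ x, HasDerivAt (fun x => k * x) k x := fun x => by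
    simpa using (hasDerivAt_id x).const_mul k
  have d1 : ∀ x, HasDerivAt (fun x => (1 - cos (k * x)) / k) (sin (k * x)) x := fun x => by
    have := ((hkx x).cos.const_sub 1).div_const k
    convert! this using 1
    rw [eq_div_iff hk.ne']; ring
  have d2 : ∀ x, HasDerivAt (fun x => x / k - sin (k * x) / k ^ 2) ((1 - cos (k * x)) / k) x :=
    fun x => by
      have := ((hasDerivAt_id x).div_const k).sub ((hkx x).sin.div_const (k ^ 2))
      convert! this using 1
      field_simp
  have D1 := w_min_deriv d1 (by simp)
  have D2 := w_min_deriv d2 (by simp)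
  have c1 : Continuous (fun x => (1 - cos (k * min x 0)) / k) := by fun_prop
  have e1 : Aop (wP k) = fun x => (1 - cos (k * min (x + 1/2) 0)) / k +
      (-1) * ((1 - cos (k * min (x - 1/2) 0)) / k) := by
    funext x
    rw [wAop_antideriv (f := wP k) D1 (wP_cont k)]; ring
  rw [e1, wAop_lin (by fun_prop) (by fun_prop)]
  have s1 : Aop (fun x => (1 - cos (k * min (x + 1/2) 0)) / k) x =
     Aop (fun x => (1 - cos (k * min x 0)) / k) (x + 1/2) := by
    rw [wAop_eq, wAop_eq]
    congr 1; funext s; rw [show x + s + 1/2 = x + 1/2 + s by ring]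
  have s2 : Aop (fun x => (1 - cos (k * min (x - 1/2) 0)) / k) x =
     Aop (fun x => (1 - cos (k * min x 0)) / k) (x - 1/2) := by
    rw [wAop_eq, wAop_eq]
    congr 1; funext s; rw [show x + s - 1/2 = x - 1/2 + s by ring]
  simp only
  rw [s1, s2, wAop_antideriv D2 c1, wAop_antideriv D2 c1, show x + 1/2 + 1/2 = x + 1 by ring,
    show x + 1/2 - 1/2 = x by ring, show x - 1/2 + 1/2 = x by ring,
    show x - 1/2 - 1/2 = x - 1 by ring]
  ring

lemma wP_Mop {k c : ℝ} (hk : 0 < k) (hc : k ^ 2 * c ^ 2 = 2 * (1 - cos k)) (x : ℝ) :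
    Mop c (wP k) x = sin (k * wTent x) / k ^ 2 - wTent x / k := by
  unfold Mop
  rw [wP_Aop2 hk]
  have hc' : c ^ 2 = 2 * (1 - cos k) / k ^ 2 := by field_simp; linarith
  rw [hc']
  unfold wP wTent
  simp only
  have t1 : sin (k * (x + 1)) = sin (k * x) * cos k + cos (k * x) * sin k := by
    rw [mul_add, mul_one, sin_add]
  have t2 : sin (k * (x - 1)) = sin (k * x) * cos k - cos (k * x) * sin k := by
    rw [mul_sub, mul_one, sin_sub]
  have t3 : sin (k * (1 - x)) = -(sin (k * x) * cos k - cos (k * x) * sin k) := by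
    rw [← t2, ← sin_neg]; congr 1; ring
  rcases le_total x (-1) with h | h
  · rw [min_eq_left (by linarith : x + 1 ≤ 0), min_eq_left (by linarith : x ≤ 0),
      min_eq_left (by linarith : x - 1 ≤ 0), abs_of_nonpos (by linarith),
      max_eq_left (by linarith), t1, t2, mul_zero, sin_zero]
    field_simp; ring
  rcases le_total x 0 with h1 | h1
  · rw [min_eq_right (by linarith : 0 ≤ x + 1), min_eq_left (by linarith : x ≤ 0),
      min_eq_left (by linarith : x - 1 ≤ 0), abs_of_nonpos (by linarith),
      max_eq_right (by linarith), sub_neg_eq_add, add_comm 1 x, t1, t2,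
      mul_zero, sin_zero]
    field_simp; ring
  rcases le_total x 1 with h2 | h2
  · rw [min_eq_right (by linarith : 0 ≤ x + 1), min_eq_right (by linarith : 0 ≤ x),
      min_eq_left (by linarith : x - 1 ≤ 0), abs_of_nonneg (by linarith),
      max_eq_right (by linarith), t2, t3,
      mul_zero, sin_zero]
    field_simp; ring
  · rw [min_eq_right (by linarith : 0 ≤ x + 1), min_eq_right (by linarith : 0 ≤ x),
      min_eq_right (by linarith : 0 ≤ x - 1), abs_of_nonneg (by linarith),
      max_eq_left (by linarith)]
    simp

/-- the function whose transform is known explicitly -/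
noncomputable def wH (k β γ : ℝ) (x : ℝ) : ℝ := β * wTent x + γ * sin (k * wTent x)

lemma wH_cont (k β γ : ℝ) : Continuous (wH k β γ) := by
  have := wTent_cont
  unfold wH; fun_prop

lemma wH_supp (k β γ : ℝ) : HasCompactSupport (wH k β γ) := by
  refine HasCompactSupport.intro (isCompact_Icc (a := (-1:ℝ)) (b := 1)) fun x hx => ?_
  have : 1 ≤ |x| := by
    by_contra h; push Not at h; exact hx (abs_le.mp h.le)
  unfold wH wTent
  rw [max_eq_left (by linarith)]; simp

lemma wH_Ct {k : ℝ} (β γ : ℝ) (t : ℝ) (h0 : t ≠ 0)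
    (h1 : k ^ 2 - (2 * π * t) ^ 2 ≠ 0) :
    wCt (wH k β γ) t = 2 * β * (1 - cos (2 * π * t)) / (2 * π * t) ^ 2 +
      2 * γ * k * (cos (2 * π * t) - cos k) / (k ^ 2 - (2 * π * t) ^ 2) := by
  have hξ : 2 * π * t ≠ 0 := by positivity
  set ξ := 2 * π * t with hξd
  have e1 : wCt (wH k β γ) t = ∫ x : ℝ, (fun y => (β * max 0 (1 - y) + γ * sin (k * max 0 (1 - y)))
      * cos (ξ * y)) |x| := by
    unfold wCt
    congr 1; funext x
    have : cos (ξ * |x|) = cos (2 * π * x * t) := by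
      rcases abs_choice x with h | h <;> rw [h]
      · congr 1; rw [hξd]; ring
      · rw [← cos_neg]; congr 1; rw [hξd]; ring
    simp only [this]
    rfl
  rw [e1, integral_comp_abs (f := fun y => (β * max 0 (1 - y) + γ * sin (k * max 0 (1 - y)))
      * cos (ξ * y))]
  have e2 : ∫ y in Set.Ioi (0:ℝ), (β * max 0 (1 - y) + γ * sin (k * max 0 (1 - y))) * cos (ξ * y)
      = ∫ y in Set.Ioc (0:ℝ) 1, (β * max 0 (1 - y) + γ * sin (k * max 0 (1 - y))) * cos (ξ * y) := by
    refine setIntegral_eq_of_subset_of_forall_sdiff_eq_zero measurableSet_Ioi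
      (fun y hy => hy.1) fun y hy => ?_
    have : 1 ≤ y := by
      by_contra h; push Not at h; exact hy.2 ⟨hy.1, h.le⟩
    rw [max_eq_left (by linarith)]; simp
  rw [e2, ← intervalIntegral.integral_of_le zero_le_one]
  have e3 : ∫ y in (0:ℝ)..1, (β * max 0 (1 - y) + γ * sin (k * max 0 (1 - y))) * cos (ξ * y) =
      ∫ y in (0:ℝ)..1, (β * (1 - y) + γ * sin (k * (1 - y))) * cos (ξ * y) := by
    refine intervalIntegral.integral_congr fun y hy => ?_
    rw [Set.uIcc_of_le zero_le_one] at hy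
    rw [max_eq_right (by linarith [hy.2])]
  rw [e3]
  have hd : ∀ y ∈ Set.uIcc (0:ℝ) 1, HasDerivAt (fun y =>
      β * ((1 - y) * sin (ξ * y) / ξ - cos (ξ * y) / ξ ^ 2) +
      γ * ((k * (cos (k * (1 - y)) * cos (ξ * y)) - ξ * (sin (k * (1 - y)) * sin (ξ * y)))
        / (k ^ 2 - ξ ^ 2)))
      ((β * (1 - y) + γ * sin (k * (1 - y))) * cos (ξ * y)) y := by
    intro y _
    have a1 : HasDerivAt (fun y : ℝ => ξ * y) ξ y := by
      simpa using (hasDerivAt_id y).const_mul ξ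
    have a2 : HasDerivAt (fun y : ℝ => 1 - y) (-1) y := by
      simpa using (hasDerivAt_id y).const_sub 1
    have a3 : HasDerivAt (fun y : ℝ => k * (1 - y)) (-k) y := by
      simpa using a2.const_mul k
    have b1 := (((a2.mul a1.sin).div_const ξ).sub (a1.cos.div_const (ξ ^ 2))).const_mul β
    have b2 := ((((a3.cos.mul a1.cos).const_mul k).sub
      ((a3.sin.mul a1.sin).const_mul ξ)).div_const (k ^ 2 - ξ ^ 2)).const_mul γ
    convert! b1.add b2 using 1
    field_simp
    ring
  rw [intervalIntegral.integral_eq_sub_of_hasDerivAt hd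
    (by apply Continuous.intervalIntegrable; fun_prop)]
  simp only [sub_self, sub_zero, mul_zero, sin_zero, cos_zero, mul_one, zero_mul, zero_div]
  field_simp
  ring

/-- The kernel. -/
lemma w_kernel (c kc : ℝ) (hc0 : 0 < c) (hkc : 0 < kc)
    (ha : symb kc = c) (hm' : deriv (msymb c) kc ≠ 0)
    (hroots : ∀ k : ℝ, k ≠ kc → k ≠ -kc → msymb c k ≠ 0) :
    ∃ (k : ℝ → ℝ) (K : ℝ), Continuous k ∧ (∀ x, |k x| ≤ K) ∧ Tendsto k atTop (𝓝 0) ∧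
      ∀ x, Mop c k x = wTent x / c ^ 2 := by
  obtain ⟨g, ψ, α, hg, hg0, hmg, hψc, hψi, hgi, hmψ⟩ :=
    w_symbol_data c kc hc0 hkc ha hm' hroots
  have hgc : Continuous g := continuous_iff_continuousAt.mpr fun x => (hg x).continuousAt
  have hsc : Continuous symb := continuous_iff_continuousAt.mpr fun x =>
    (w_symb_analytic x).continuousAt
  have hp : (2 * π) ≠ 0 := by positivity
  have hψ2 : Integrable (fun t => ψ (2 * π * t)) := hψi.comp_mul_left' hp
  have hg2 : Integrable (fun t => g (2 * π * t)) := hgi.comp_mul_left' hp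
  have hs2 : Integrable (fun t => symb (2 * π * t) ^ 2) :=
    w_symb_sq_int.comp_mul_left' hp
  have hck : kc ^ 2 * c ^ 2 = 2 * (1 - cos kc) := by rw [← ha]; exact w_symb_sq kc
  set β : ℝ := 1 / c ^ 2 + α / kc with hβ
  set γ : ℝ := - α / kc ^ 2 with hγ
  have hρi : Integrable (fun t => symb (2 * π * t) ^ 2 / c ^ 2 - α * kc * g (2 * π * t)) :=
    (hs2.div_const _).sub (hg2.const_mul _)
  have hHi : Integrable (wH kc β γ) :=
    (wH_cont kc β γ).integrable_of_hasCompactSupport (wH_supp kc β γ)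
  have hρ : wCt (wH kc β γ) =
      fun t => symb (2 * π * t) ^ 2 / c ^ 2 - α * kc * g (2 * π * t) := by
    have hd : Dense ({0, kc / (2 * π), - kc / (2 * π)} : Set ℝ)ᶜ :=
      Set.Countable.dense_compl ℝ (Set.to_countable _)
    refine Continuous.ext_on hd (wCt_cont hHi) (by fun_prop) fun t ht => ?_
    simp only [Set.mem_compl_iff, Set.mem_insert_iff, Set.mem_singleton_iff, not_or] at ht
    obtain ⟨t0, t1, t2⟩ := ht
    have hne : kc ^ 2 - (2 * π * t) ^ 2 ≠ 0 := by
      rw [sq_sub_sq]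
      refine mul_ne_zero (fun h => t2 ?_) (fun h => t1 ?_)
      · field_simp; linarith
      · field_simp; linarith
    rw [wH_Ct β γ t t0 hne]
    have hξ : 2 * π * t ≠ 0 := by positivity
    have g1 := hmg (2 * π * t)
    have g2 := w_symb_sq (2 * π * t)
    simp only [msymb] at g1
    generalize 2 * π * t = ξ at *
    have g3 : g ξ = - (symb ξ ^ 2 - c ^ 2) / (kc ^ 2 - ξ ^ 2) := by
      field_simp; linarith
    have g4 : cos ξ = 1 - ξ ^ 2 * symb ξ ^ 2 / 2 := by linarith
    have g5 : cos kc = 1 - kc ^ 2 * c ^ 2 / 2 := by linarith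
    rw [g3, g4, g5, hβ, hγ]
    field_simp
    ring
  set k0 := wCt (fun t => ψ (2 * π * t)) with hk0
  have hMk0 : Mop c k0 = wH kc β γ := by
    rw [hk0, wCt_Mop c hψ2]
    have : (fun t => msymb c (2 * π * t) * ψ (2 * π * t)) = wCt (wH kc β γ) := by
      rw [hρ]; funext t; exact hmψ _
    rw [this]
    refine wCt_inv (wH_cont _ _ _) hHi (fun x => ?_) (by rw [hρ]; exact hρi)
    simp [wH, wTent]
  refine ⟨fun x => k0 x + α * wP kc x, (∫ t, |ψ (2 * π * t)|) + |α|, ?_, ?_, ?_, ?_⟩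
  · exact (wCt_cont hψ2).add ((wP_cont kc).const_mul α)
  · intro x
    refine (abs_add_le _ _).trans (add_le_add (wCt_bound hψ2 x) ?_)
    rw [abs_mul]
    exact mul_le_of_le_one_right (abs_nonneg _) (abs_sin_le_one _)
  · have h1 : Tendsto (fun x => α * wP kc x) atTop (𝓝 0) := by
      refine tendsto_const_nhds.congr' ?_
      filter_upwards [eventually_ge_atTop 0] with x hx
      simp [wP, min_eq_right hx]
    simpa using (wCt_tendsto hψ2).add h1
  · intro x
    rw [wMop_lin (wCt_cont hψ2) (wP_cont kc), hMk0, wP_Mop hkc hck]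
    simp only [wH, hβ, hγ]
    field_simp
    ring

/-- Convolution. -/
noncomputable def wcv (f g : ℝ → ℝ) (x : ℝ) : ℝ := ∫ y, f (x - y) * g y

lemma wcv_int {f g : ℝ → ℝ} {C : ℝ} (hf : Measurable f) (hb : ∀ x, |f x| ≤ C)
    (hg : Integrable g) (x : ℝ) : Integrable (fun y => f (x - y) * g y) :=
  hg.bdd_mul (c := C) (hf.comp (by fun_prop)).aestronglyMeasurable
    (Eventually.of_forall fun y => hb _)

lemma wAop_bdd {f : ℝ → ℝ} {C : ℝ} (hb : ∀ x, |f x| ≤ C) (x : ℝ) : |Aop f x| ≤ C := by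
  have := intervalIntegral.norm_integral_le_of_norm_le_const (a := x - 1/2) (b := x + 1/2)
    (f := f) (C := C) (fun y _ => hb y)
  rw [show x + 1/2 - (x - 1/2) = 1 by ring, abs_one, mul_one] at this
  exact this

lemma wcv_Aop {f g : ℝ → ℝ} {C : ℝ} (hf : Measurable f) (hb : ∀ x, |f x| ≤ C)
    (hg : Integrable g) : Aop (wcv f g) = wcv (Aop f) g := by
  funext x
  rw [wAop_eq]
  unfold wcv
  rw [intervalIntegral_integral_swap]
  · congr 1; funext y
    rw [intervalIntegral.integral_mul_const, wAop_eq]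
    congr 2; funext s; congr 1; ring
  · have := w_fin
    have h1 : Integrable (fun p : ℝ × ℝ => (1:ℝ) * g p.2)
        ((volume.restrict (Set.uIoc (-(1/2):ℝ) (1/2))).prod volume) :=
      (integrable_const (1:ℝ)).mul_prod hg
    simp only [one_mul] at h1
    refine h1.bdd_mul (c := C) ?_ (Eventually.of_forall fun t => hb _)
    exact (hf.comp (by fun_prop)).aestronglyMeasurable

lemma wcv_adj {w u : ℝ → ℝ} {C : ℝ} (hw : Continuous w) (hb : ∀ x, |w x| ≤ C)
    (hu : Integrable u) (huc : Continuous u) : wcv w (Aop u) = wcv (Aop w) u := by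
  rw [← wcv_Aop hw.measurable hb hu]
  funext x
  rw [wAop_eq]
  unfold wcv
  have e : ∀ s, ∫ y, w (x + s - y) * u y = ∫ y, w (x - y) * u (y + s) := by
    intro s
    rw [← integral_add_right_eq_self (fun y => w (x + s - y) * u y) s]
    congr 1; funext y; congr 2; ring
  simp_rw [e]
  rw [intervalIntegral_integral_swap]
  · congr 1; funext y
    rw [intervalIntegral.integral_const_mul, wAop_eq]
  · have := w_fin
    have h1 : Integrable (fun p : ℝ × ℝ => u (p.2 + p.1))
        ((volume.restrict (Set.uIoc (-(1/2):ℝ) (1/2))).prod volume) := by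
      rw [integrable_prod_iff (by fun_prop)]
      refine ⟨Eventually.of_forall fun s => hu.comp_add_right s, ?_⟩
      have : ∀ s, ∫ y, ‖u (y + s)‖ = ∫ y, ‖u y‖ := fun s =>
        integral_add_right_eq_self (fun y => ‖u y‖) s
      simp_rw [this]
      exact integrable_const _
    exact h1.bdd_mul (c := C) (by fun_prop) (Eventually.of_forall fun t => hb _)

lemma wAop_int {u : ℝ → ℝ} (hu : Integrable u) (huc : Continuous u) : Integrable (Aop u) := by
  have e : Aop u = fun y => ∫ s in Set.uIoc (-(1/2):ℝ) (1/2), u (y + s) := by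
    funext y
    rw [wAop_eq, intervalIntegral.integral_of_le (by norm_num), Set.uIoc_of_le (by norm_num)]
  rw [e]
  have := w_fin
  have h1 : Integrable (fun p : ℝ × ℝ => u (p.2 + p.1))
      ((volume.restrict (Set.uIoc (-(1/2):ℝ) (1/2))).prod volume) := by
    rw [integrable_prod_iff (by fun_prop)]
    refine ⟨Eventually.of_forall fun s => hu.comp_add_right s, ?_⟩
    have : ∀ s, ∫ y, ‖u (y + s)‖ = ∫ y, ‖u y‖ := fun s =>
      integral_add_right_eq_self (fun y => ‖u y‖) s
    simp_rw [this]
    exact integrable_const _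
  exact h1.integral_prod_right

lemma wMop_cv {f g : ℝ → ℝ} {C : ℝ} (c : ℝ) (hf : Continuous f) (hb : ∀ x, |f x| ≤ C)
    (hg : Integrable g) : Mop c (wcv f g) = wcv (Mop c f) g := by
  funext x
  unfold Mop
  rw [wcv_Aop hf.measurable hb hg, wcv_Aop (wAop_cont hf).measurable (wAop_bdd hb) hg]
  unfold wcv
  rw [← integral_const_mul, ← integral_sub
    (wcv_int (wAop_cont (wAop_cont hf)).measurable (wAop_bdd (wAop_bdd hb)) hg x)
    ((wcv_int hf.measurable hb hg x).const_mul _)]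
  congr 1; funext y; ring

lemma wMop_adj {w u : ℝ → ℝ} {C : ℝ} (c : ℝ) (hw : Continuous w) (hb : ∀ x, |w x| ≤ C)
    (hu : Integrable u) (huc : Continuous u) : wcv w (Mop c u) = wcv (Mop c w) u := by
  rw [← wMop_cv c hw hb hu]
  funext x
  unfold Mop
  rw [wcv_Aop hw.measurable hb hu, ← wcv_adj hw hb hu huc,
    wcv_Aop hw.measurable hb (wAop_int hu huc),
    ← wcv_adj hw hb (wAop_int hu huc) (wAop_cont huc)]
  unfold wcv
  rw [← integral_const_mul, ← integral_sub
    (wcv_int hw.measurable hb (wAop_int (wAop_int hu huc) (wAop_cont huc)) x)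
    ((wcv_int hw.measurable hb hu x).const_mul _)]
  congr 1; funext y; ring

lemma wcv_tendsto {f g : ℝ → ℝ} {C : ℝ} (hf : Measurable f) (hb : ∀ x, |f x| ≤ C)
    (hg : Integrable g) (h0 : Tendsto f atTop (𝓝 0)) : Tendsto (wcv f g) atTop (𝓝 0) := by
  have := tendsto_integral_filter_of_dominated_convergence (μ := volume) (l := atTop)
    (F := fun (x y : ℝ) => f (x - y) * g y) (f := fun _ => 0) (fun y => C * |g y|)
    (Eventually.of_forall fun x => (wcv_int hf hb hg x).aestronglyMeasurable)
    (Eventually.of_forall fun x => Eventually.of_forall fun y => by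
      rw [norm_mul]; exact mul_le_mul_of_nonneg_right (hb _) (norm_nonneg _))
    (hg.abs.const_mul C)
    (Eventually.of_forall fun y => by
      have h1 : Tendsto (fun x : ℝ => x - y) atTop atTop := tendsto_atTop_add_const_right _ _ tendsto_id
      simpa using (h0.comp h1).mul_const (g y))
  simp only [integral_zero] at this
  exact this

lemma wcv_box {Q : ℝ → ℝ} : wcv (Set.indicator (Set.Ico (-(1/2)) (1/2)) 1) Q = Aop Q := by
  funext x
  unfold wcv Aop
  rw [intervalIntegral.integral_of_le (by linarith), ← integral_indicator measurableSet_Ioc]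
  congr 1; funext y
  by_cases h : y ∈ Set.Ioc (x - 1/2) (x + 1/2)
  · rw [Set.indicator_of_mem h, Set.indicator_of_mem]
    · simp
    · exact ⟨by linarith [h.2], by linarith [h.1]⟩
  · rw [Set.indicator_of_notMem h, Set.indicator_of_notMem]
    · simp
    · intro h'; exact h ⟨by linarith [h'.2], by linarith [h'.1]⟩

lemma wAop_box : Aop (Set.indicator (Set.Ico (-(1/2)) (1/2)) 1) = wTent := by
  funext x
  unfold Aop wTent
  rw [intervalIntegral.integral_of_le (by linarith), ← integral_Ico_eq_integral_Ioc,
    setIntegral_indicator measurableSet_Ico, Set.Ico_inter_Ico]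
  simp only [Pi.one_apply, integral_const, smul_eq_mul, mul_one, measureReal_restrict_apply,
    MeasurableSet.univ, Set.univ_inter, Real.volume_real_Ico]
  rw [max_comm]
  congr 1
  rcases le_total x 0 with h | h
  · rw [abs_of_nonpos h, inf_eq_left.mpr (by linarith), sup_eq_right.mpr (by linarith)]; ring
  · rw [abs_of_nonneg h, inf_eq_right.mpr (by linarith), sup_eq_left.mpr (by linarith)]; ring

lemma wcv_tent {Q : ℝ → ℝ} (hQ : Integrable Q) : wcv wTent Q = Aop (Aop Q) := by
  have hm : Measurable (Set.indicator (Set.Ico (-(1/2) : ℝ) (1/2)) (1 : ℝ → ℝ)) :=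
    measurable_one.indicator measurableSet_Ico
  have hb : ∀ x, |Set.indicator (Set.Ico (-(1/2) : ℝ) (1/2)) (1 : ℝ → ℝ) x| ≤ 1 := by
    intro x
    by_cases h : x ∈ Set.Ico (-(1/2) : ℝ) (1/2)
    · rw [Set.indicator_of_mem h]; simp
    · rw [Set.indicator_of_notMem h]; simp
  rw [← wAop_box, ← wcv_Aop hm hb hQ, wcv_box]

lemma wAop_hasDeriv {f : ℝ → ℝ} (hf : Continuous f) (x : ℝ) :
    HasDerivAt (Aop f) (f (x + 1/2) - f (x - 1/2)) x := by
  have hF : ∀ y, HasDerivAt (fun y => ∫ s in (0:ℝ)..y, f s) (f y) y := fun y =>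
    intervalIntegral.integral_hasDerivAt_right (hf.intervalIntegrable _ _)
      (hf.stronglyMeasurableAtFilter _ _) hf.continuousAt
  have e : Aop f = fun x => (∫ s in (0:ℝ)..(x + 1/2), f s) - ∫ s in (0:ℝ)..(x - 1/2), f s :=
    funext fun x => wAop_antideriv hF hf x
  rw [e]
  exact ((hF (x + 1/2)).comp_add_const x (1/2)).sub ((hF (x - 1/2)).comp_sub_const x (1/2))

/-- bound for convolution against something supported in [-2,2] -/
lemma wcv_bdd {f q : ℝ → ℝ} {K B : ℝ} (hb : ∀ x, |f x| ≤ K) (hq : ∀ x, |q x| ≤ B)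
    (h0 : ∀ x, 2 < |x| → q x = 0) (x : ℝ) : |wcv f q x| ≤ 4 * K * B := by
  have hK : 0 ≤ K := (abs_nonneg _).trans (hb 0)
  unfold wcv
  rw [← setIntegral_eq_integral_of_forall_compl_eq_zero (s := Set.Icc (-2) 2)]
  · have := norm_setIntegral_le_of_norm_le_const (μ := volume) (s := Set.Icc (-2:ℝ) 2)
      (f := fun y => f (x - y) * q y) (C := K * B) (by simp) (fun y _ => by
        rw [norm_mul]
        exact mul_le_mul (hb _) (hq _) (norm_nonneg _) hK)
    rw [Real.volume_real_Icc, show max ((2:ℝ) - -2) 0 = 4 by norm_num] at this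
    rw [← Real.norm_eq_abs]
    linarith
  · intro y hy
    rw [h0, mul_zero]
    by_contra h; push Not at h; exact hy (abs_le.mp h)

lemma wcv_lip {f q : ℝ → ℝ} {K L : ℝ} (hf : Continuous f) (hb : ∀ x, |f x| ≤ K)
    (hL : ∀ x y, |q x - q y| ≤ L * |x - y|) (hqc : Continuous q)
    (h0 : ∀ x, 2 < |x| → q x = 0) (x x' : ℝ) :
    |wcv f q x - wcv f q x'| ≤ 8 * K * L * |x - x'| := by
  have hK : 0 ≤ K := (abs_nonneg _).trans (hb 0)
  have e : ∀ x, wcv f q x = ∫ y, f y * q (x - y) := by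
    intro x
    unfold wcv
    rw [← integral_sub_left_eq_self (fun y => f y * q (x - y)) volume x]
    congr 1; funext y; congr 2; ring
  have hqi : Integrable q := hqc.integrable_of_hasCompactSupport
    (HasCompactSupport.intro (isCompact_Icc (a := (-2:ℝ)) (b := 2)) fun x hx => h0 x (by
      by_contra h; push Not at h; exact hx (abs_le.mp h)))
  have hint : ∀ x, Integrable (fun y => f y * q (x - y)) := fun x =>
    (hqi.comp_sub_left x).bdd_mul (c := K) hf.aestronglyMeasurable
      (Eventually.of_forall fun y => hb _)
  rw [e, e, ← integral_sub (hint x) (hint x'),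
    ← setIntegral_eq_integral_of_forall_compl_eq_zero
      (s := Set.Icc (x - 2) (x + 2) ∪ Set.Icc (x' - 2) (x' + 2))]
  · have hfin : volume (Set.Icc (x - 2) (x + 2) ∪ Set.Icc (x' - 2) (x' + 2)) < ⊤ :=
      measure_union_lt_top (by simp) (by simp)
    have := norm_setIntegral_le_of_norm_le_const (μ := volume)
      (f := fun y => f y * q (x - y) - f y * q (x' - y)) (C := K * (L * |x - x'|))
      hfin (fun y _ => by
        rw [← mul_sub, norm_mul]
        refine mul_le_mul (hb _) ?_ (norm_nonneg _) hK
        have := hL (x - y) (x' - y)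
        rwa [show x - y - (x' - y) = x - x' by ring] at this)
    rw [← Real.norm_eq_abs]
    refine this.trans ?_
    have hv := measureReal_union_le (μ := volume) (Set.Icc (x - 2) (x + 2))
      (Set.Icc (x' - 2) (x' + 2))
    rw [Real.volume_real_Icc, Real.volume_real_Icc, show x + 2 - (x - 2) = 4 by ring,
      show x' + 2 - (x' - 2) = 4 by ring, show max (4:ℝ) 0 = 4 by norm_num] at hv
    have hLn : 0 ≤ L * |x - x'| := (abs_nonneg _).trans (hL x x')
    nlinarith [mul_nonneg hK hLn]
  · intro y hy
    rw [Set.mem_union, not_or] at hy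
    rw [h0 (x - y), h0 (x' - y)]
    · simp
    · by_contra h; push Not at h; rw [abs_le] at h
      exact hy.2 ⟨by linarith, by linarith⟩
    · by_contra h; push Not at h; rw [abs_le] at h
      exact hy.1 ⟨by linarith, by linarith⟩

lemma wcv_hasDeriv {f q q' : ℝ → ℝ} (hf : Continuous f)
    (hq : ∀ x, HasDerivAt q (q' x) x) (hqc : Continuous q')
    (h0 : ∀ x, 2 < |x| → q x = 0) (x : ℝ) : HasDerivAt (wcv f q) (wcv f q' x) x := by
  have hs : HasCompactSupport q :=
    (HasCompactSupport.intro (isCompact_Icc (a := (-2:ℝ)) (b := 2)) fun x hx => h0 x (by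
      by_contra h; push Not at h; exact hx (abs_le.mp h)))
  have hd : deriv q = q' := funext fun x => (hq x).deriv
  have hc1 : ContDiff ℝ 1 q := by
    rw [contDiff_one_iff_deriv, hd]
    exact ⟨fun x => (hq x).differentiableAt, hqc⟩
  have := hs.hasDerivAt_convolution_left (ContinuousLinearMap.mul ℝ ℝ) (μ := volume) hc1
    hf.locallyIntegrable x
  rw [hd] at this
  have e : ∀ q : ℝ → ℝ, convolution q f (ContinuousLinearMap.mul ℝ ℝ) volume = wcv f q := by
    intro q; funext x
    unfold wcv convolution
    congr 1; funext y; simp [mul_comm]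
  rwa [e, e] at this

/-- admissible right-hand sides -/
def wGood (G : ℝ → ℝ) : Prop :=
  Measurable G ∧ (∃ B : ℝ, ∀ᵐ x ∂(volume : Measure ℝ), |G x| ≤ B) ∧
    (∀ᵐ x ∂(volume : Measure ℝ), x ∉ Set.Icc (-1 : ℝ) 1 → G x = 0)

lemma wGood.int {G : ℝ → ℝ} (h : wGood G) : Integrable G := by
  obtain ⟨hm, ⟨B, hB⟩, h0⟩ := h
  have h1 : Integrable (Set.indicator (Set.Icc (-1:ℝ) 1) (fun _ => B)) := by
    rw [integrable_indicator_iff measurableSet_Icc]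
    exact integrableOn_const (by simp)
  refine h1.mono' hm.aestronglyMeasurable ?_
  filter_upwards [hB, h0] with x hx hx0
  by_cases hxm : x ∈ Set.Icc (-1:ℝ) 1
  · rw [Set.indicator_of_mem hxm]; exact hx
  · rw [Set.indicator_of_notMem hxm, hx0 hxm]; simp

lemma wA_lip {G : ℝ → ℝ} (h : wGood G) {B : ℝ} (hB : ∀ᵐ x ∂(volume : Measure ℝ), |G x| ≤ B)
    (x y : ℝ) : |Aop G x - Aop G y| ≤ 2 * B * |x - y| := by
  have hi : ∀ a b, IntervalIntegrable G volume a b := fun a b => h.int.intervalIntegrable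
  have hF : ∀ a b, |∫ s in a..b, G s| ≤ B * |b - a| := by
    intro a b
    rw [← Real.norm_eq_abs]
    refine intervalIntegral.norm_integral_le_of_norm_le_const_ae ?_
    filter_upwards [hB] with x hx _ using hx
  have e : Aop G x - Aop G y = (∫ s in (y+1/2)..(x+1/2), G s) - ∫ s in (y-1/2)..(x-1/2), G s := by
    unfold Aop
    have e1 := intervalIntegral.integral_add_adjacent_intervals (hi (y-1/2) (x-1/2))
      (hi (x-1/2) (x+1/2))
    have e2 := intervalIntegral.integral_add_adjacent_intervals (hi (y-1/2) (y+1/2))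
      (hi (y+1/2) (x+1/2))
    linarith
  rw [e]
  refine (abs_sub _ _).trans ?_
  have h1 := hF (y+1/2) (x+1/2)
  have h2 := hF (y-1/2) (x-1/2)
  rw [show x + 1/2 - (y + 1/2) = x - y by ring] at h1
  rw [show x - 1/2 - (y - 1/2) = x - y by ring] at h2
  linarith

lemma wA_cont {G : ℝ → ℝ} (h : wGood G) : Continuous (Aop G) := by
  obtain ⟨B, hB⟩ := h.2.1
  refine (LipschitzWith.of_dist_le_mul (K := Real.toNNReal (2 * B)) fun x y => ?_).continuous
  rw [Real.dist_eq, Real.dist_eq]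
  exact (wA_lip h hB x y).trans (mul_le_mul_of_nonneg_right (Real.le_coe_toNNReal _) (abs_nonneg _))

lemma wA_zero {G : ℝ → ℝ} (h : wGood G) (x : ℝ) (hx : 3/2 < |x|) : Aop G x = 0 := by
  unfold Aop
  refine intervalIntegral.integral_zero_ae ?_
  filter_upwards [h.2.2] with s hs hm
  rw [Set.uIoc_of_le (by linarith)] at hm
  apply hs
  intro h1
  rcases lt_abs.mp hx with h2 | h2
  · linarith [hm.1, h1.2]
  · linarith [hm.2, h1.1]

lemma wQ_zero {G : ℝ → ℝ} (h : wGood G) (x : ℝ) (hx : 2 < |x|) : Aop (Aop G) x = 0 := by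
  unfold Aop
  refine intervalIntegral.integral_zero_ae (Eventually.of_forall fun s hm => ?_)
  rw [Set.uIoc_of_le (by linarith)] at hm
  refine wA_zero h s ?_
  rw [lt_abs]
  rcases lt_abs.mp hx with h2 | h2
  · left; linarith [hm.1]
  · right; linarith [hm.2]

noncomputable def wQ' (G : ℝ → ℝ) (x : ℝ) : ℝ := Aop G (x + 1/2) - Aop G (x - 1/2)

lemma wQ'_zero {G : ℝ → ℝ} (h : wGood G) (x : ℝ) (hx : 2 < |x|) : wQ' G x = 0 := by
  unfold wQ'
  rw [wA_zero h, wA_zero h, sub_zero]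
  · rw [lt_abs]
    rcases lt_abs.mp hx with h2 | h2
    · left; linarith
    · right; linarith
  · rw [lt_abs]
    rcases lt_abs.mp hx with h2 | h2
    · left; linarith
    · right; linarith

noncomputable def wS0 (c : ℝ) (k G : ℝ → ℝ) (x : ℝ) : ℝ :=
  wcv k (Aop (Aop G)) x + (-(1 / c ^ 2)) * Aop (Aop G) x

noncomputable def wS (c : ℝ) (k G : ℝ → ℝ) (x : ℝ) : ℝ := wS0 c k G x - wS0 c k G 0

noncomputable def wD (c : ℝ) (k G : ℝ → ℝ) (x : ℝ) : ℝ :=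
  wcv k (wQ' G) x + (-(1 / c ^ 2)) * wQ' G x

lemma wQ_int {G : ℝ → ℝ} (h : wGood G) : Integrable (Aop (Aop G)) := by
  refine (wAop_cont (wA_cont h)).integrable_of_hasCompactSupport (HasCompactSupport.intro
    (isCompact_Icc (a := (-2:ℝ)) (b := 2)) fun x hx => wQ_zero h x ?_)
  by_contra h; push Not at h; exact hx (abs_le.mp h)

lemma wMop_const (c a x : ℝ) : Mop c (fun _ => a) x = (1 - c ^ 2) * a := by
  have : Aop (fun _ => a) = fun _ => a := by
    funext x; unfold Aop; simp; ring
  unfold Mop; rw [this, this]; ring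

lemma w_exist {c K : ℝ} (hc0 : 0 < c) {k : ℝ → ℝ} (hk : Continuous k) (hK : ∀ x, |k x| ≤ K)
    (hk0 : Tendsto k atTop (𝓝 0)) (hMk : ∀ x, Mop c k x = wTent x / c ^ 2)
    {G : ℝ → ℝ} (h : wGood G) :
    IsX (wS c k G) ∧ (∀ x, Mop c (wS c k G) x = Aop (Aop G) x + -((1 - c ^ 2) * wS0 c k G 0)) ∧
    (∀ B2 : ℝ, (∀ x, |Aop (Aop G) x| ≤ B2) → ∀ x, |wS0 c k G x| ≤ (4 * K + 1 / c ^ 2) * B2) ∧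
    (∀ B1 : ℝ, (∀ x, |Aop G x| ≤ B1) → ∀ x, |deriv (wS c k G) x| ≤ (4 * K + 1 / c ^ 2) * (2 * B1)) ∧
    (∀ B0 : ℝ, 0 ≤ B0 → (∀ᵐ x ∂(volume : Measure ℝ), |G x| ≤ B0) →
      LipschitzWith (Real.toNNReal ((8 * K + 1 / c ^ 2) * (4 * B0))) (deriv (wS c k G))) := by
  have hKn : 0 ≤ K := (abs_nonneg _).trans (hK 0)
  have hAc := wA_cont h
  have hQc := wAop_cont hAc
  have hQ'c : Continuous (wQ' G) := by unfold wQ'; fun_prop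
  have hQi := wQ_int h
  have hQz := wQ_zero h
  have hQ'z := wQ'_zero h
  have hQd : ∀ x, HasDerivAt (Aop (Aop G)) (wQ' G x) x := fun x => wAop_hasDeriv hAc x
  have hD0 : ∀ x, HasDerivAt (wS0 c k G) (wD c k G x) x := fun x =>
    (wcv_hasDeriv hk hQd hQ'c hQz x).add ((hQd x).const_mul _)
  have hD : ∀ x, HasDerivAt (wS c k G) (wD c k G x) x := fun x => (hD0 x).sub_const _
  have hder : deriv (wS c k G) = wD c k G := funext fun x => (hD x).deriv
  have hc2 : (0:ℝ) ≤ 1 / c ^ 2 := by positivity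
  have hcomb : ∀ (q : ℝ → ℝ) (B : ℝ), (∀ x, |q x| ≤ B) → (∀ x, 2 < |x| → q x = 0) → ∀ x,
      |wcv k q x + (-(1 / c ^ 2)) * q x| ≤ (4 * K + 1 / c ^ 2) * B := by
    intro q B hq hz x
    refine (abs_add_le _ _).trans ?_
    rw [abs_mul, abs_neg, abs_of_nonneg hc2]
    have := wcv_bdd hK hq hz x
    have h2 := mul_le_mul_of_nonneg_left (hq x) hc2
    linarith
  have hB2 : ∀ B2 : ℝ, (∀ x, |Aop (Aop G) x| ≤ B2) → ∀ x,
      |wS0 c k G x| ≤ (4 * K + 1 / c ^ 2) * B2 := fun B2 hB => hcomb _ _ hB hQz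
  have hB1 : ∀ B1 : ℝ, (∀ x, |Aop G x| ≤ B1) → ∀ x,
      |deriv (wS c k G) x| ≤ (4 * K + 1 / c ^ 2) * (2 * B1) := by
    intro B1 hB
    rw [hder]
    refine hcomb _ _ (fun x => ?_) hQ'z
    refine (abs_sub _ _).trans ?_
    linarith [hB (x + 1/2), hB (x - 1/2)]
  have hB0 : ∀ B0 : ℝ, 0 ≤ B0 → (∀ᵐ x ∂(volume : Measure ℝ), |G x| ≤ B0) →
      LipschitzWith (Real.toNNReal ((8 * K + 1 / c ^ 2) * (4 * B0))) (deriv (wS c k G)) := by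
    intro B0 hB0 hB
    rw [hder]
    refine LipschitzWith.of_dist_le_mul fun x y => ?_
    rw [Real.dist_eq, Real.dist_eq, Real.coe_toNNReal _ (by positivity)]
    have hL : ∀ x y, |wQ' G x - wQ' G y| ≤ (4 * B0) * |x - y| := by
      intro x y
      have h1 := wA_lip h hB (x + 1/2) (y + 1/2)
      have h2 := wA_lip h hB (x - 1/2) (y - 1/2)
      rw [show x + 1/2 - (y + 1/2) = x - y by ring] at h1
      rw [show x - 1/2 - (y - 1/2) = x - y by ring] at h2
      unfold wQ'
      rw [show Aop G (x + 1/2) - Aop G (x - 1/2) - (Aop G (y + 1/2) - Aop G (y - 1/2)) =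
        (Aop G (x + 1/2) - Aop G (y + 1/2)) - (Aop G (x - 1/2) - Aop G (y - 1/2)) by ring]
      refine (abs_sub _ _).trans ?_
      linarith
    have h1 := wcv_lip hk hK hL hQ'c hQ'z x y
    have h2 := mul_le_mul_of_nonneg_left (hL x y) hc2
    unfold wD
    rw [show wcv k (wQ' G) x + (-(1 / c ^ 2)) * wQ' G x - (wcv k (wQ' G) y +
      (-(1 / c ^ 2)) * wQ' G y) = (wcv k (wQ' G) x - wcv k (wQ' G) y) -
      (1 / c ^ 2) * (wQ' G x - wQ' G y) by ring]
    refine (abs_sub _ _).trans ?_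
    rw [abs_mul, abs_of_nonneg hc2]
    linarith
  obtain ⟨B, hB⟩ := h.2.1
  have hAb : ∃ B1, ∀ x, |Aop G x| ≤ B1 := by
    have hs : HasCompactSupport (Aop G) := HasCompactSupport.intro
      (isCompact_Icc (a := -(3/2:ℝ)) (b := 3/2)) fun x hx => wA_zero h x (by
        by_contra h; push Not at h; exact hx (abs_le.mp h))
    exact hAc.bounded_above_of_compact_support hs
  obtain ⟨B1, hB1'⟩ := hAb
  have hQb := wAop_bdd hB1'
  refine ⟨⟨⟨fun x => (hD x).differentiableAt, ?_, ?_⟩, by simp [wS], ?_⟩, ?_, hB2, hB1, hB0⟩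
  · refine ⟨2 * ((4 * K + 1 / c ^ 2) * B1), fun x => ⟨?_, ?_⟩⟩
    · refine (abs_sub _ _).trans ?_
      linarith [hB2 B1 hQb x, hB2 B1 hQb 0]
    · linarith [hB1 B1 hB1' x]
  · refine ⟨_, hB0 |B| (abs_nonneg _) ?_⟩
    filter_upwards [hB] with x hx using hx.trans (le_abs_self B)
  · refine ⟨0 - wS0 c k G 0, Tendsto.sub_const ?_ _⟩
    have h1 := wcv_tendsto hk.measurable hK hQi hk0
    have h2 : Tendsto (fun x => (-(1 / c ^ 2)) * Aop (Aop G) x) atTop (𝓝 0) := by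
      refine tendsto_const_nhds.congr' ?_
      filter_upwards [eventually_gt_atTop 2] with x hx
      rw [hQz x (lt_of_lt_of_le hx (le_abs_self x)), mul_zero]
    have h3 := h1.add h2
    rw [add_zero] at h3
    exact h3
  · intro x
    have hcc : Continuous (wcv k (Aop (Aop G))) := continuous_iff_continuousAt.mpr fun x =>
      (wcv_hasDeriv hk hQd hQ'c hQz x).continuousAt
    have hS0c : Continuous (wS0 c k G) := continuous_iff_continuousAt.mpr fun x =>
      (hD0 x).continuousAt
    have e1 : wS c k G = fun x => wS0 c k G x + (-1) * (fun _ => wS0 c k G 0) x := by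
      funext x; simp only [wS]; ring
    rw [e1, wMop_lin hS0c continuous_const, wMop_const]
    have e2 : Mop c (wS0 c k G) x = Aop (Aop G) x := by
      show Mop c (fun x => wcv k (Aop (Aop G)) x + (-(1 / c ^ 2)) * Aop (Aop G) x) x = _
      rw [wMop_lin hcc hQc, wMop_cv c hk hK hQi]
      have e3 : wcv (Mop c k) (Aop (Aop G)) x = (1 / c ^ 2) * Aop (Aop (Aop (Aop G))) x := by
        rw [← wcv_tent hQi]
        unfold wcv
        rw [← integral_const_mul]
        congr 1; funext y; rw [hMk]; ring
      rw [e3]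
      unfold Mop
      field_simp
      ring
    rw [e2]; ring

open scoped FourierTransform SchwartzMap ContDiff

lemma wcv_deriv2 {w w' φ φ' : ℝ → ℝ} {C : ℝ} (hw : ∀ x, HasDerivAt w (w' x) x)
    (hb : ∀ x, |w x| ≤ C) (hb' : ∀ x, |w' x| ≤ C) (hφ : ∀ x, HasDerivAt φ (φ' x) x)
    (hi : Integrable φ) (hi' : Integrable φ') (x : ℝ) :
    HasDerivAt (wcv w φ) (wcv w φ' x) x := by
  have hwc : Continuous w := continuous_iff_continuousAt.mpr fun x => (hw x).continuousAt
  have hwm : Measurable w' := by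
    have : w' = deriv w := funext fun x => (hw x).deriv.symm
    rw [this]; exact measurable_deriv w
  have h1 := (hasDerivAt_integral_of_dominated_loc_of_deriv_le (μ := volume) (s := Set.univ)
    (x₀ := x) (bound := fun y => C * |φ y|)
    (F := fun x y => w (x - y) * φ y) (F' := fun x y => w' (x - y) * φ y) univ_mem
    (Eventually.of_forall fun x => (wcv_int hwc.measurable hb hi x).aestronglyMeasurable)
    (wcv_int hwc.measurable hb hi x)
    (wcv_int hwm hb' hi x).aestronglyMeasurable
    (Eventually.of_forall fun y x _ => by
      rw [norm_mul]; exact mul_le_mul_of_nonneg_right (hb' _) (norm_nonneg _))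
    (hi.abs.const_mul C)
    (Eventually.of_forall fun y x _ => by
      have := (hw (x - y)).comp x ((hasDerivAt_id x).sub_const y)
      simp only [mul_one] at this
      exact this.mul_const _)).2
  have h2 := integral_mul_deriv_eq_deriv_mul_of_integrable (u := fun y => w (x - y))
    (u' := fun y => - w' (x - y)) (v := φ) (v' := φ')
    (fun y _ => by
      have := (hw (x - y)).comp y ((hasDerivAt_id y).const_sub x)
      simp only [mul_neg, mul_one] at this
      exact this)
    (fun y _ => hφ y)
    (wcv_int hwc.measurable hb hi' x)
    (by
      have := (wcv_int hwm hb' hi x).neg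
      refine this.congr (Eventually.of_forall fun y => ?_)
      simp)
    (wcv_int hwc.measurable hb hi x)
  have e : wcv w φ' x = ∫ y, w' (x - y) * φ y := by
    unfold wcv; rw [h2, ← integral_neg]; simp
  rw [e]; exact h1

/-- Schwartz data for cosine transforms of test functions. -/
lemma wCt_test {χ : ℝ → ℝ} (hs : HasCompactSupport χ) (hd : ContDiff ℝ ∞ χ) :
    Integrable (wCt χ) ∧ Continuous (wCt χ) ∧ ∃ φ' : ℝ → ℝ,
      Integrable φ' ∧ (∀ x, HasDerivAt (wCt χ) (φ' x) x) ∧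
      Integrable (wCt fun t => -(2 * π * t) ^ 2 * χ t) ∧
      (∀ x, HasDerivAt φ' (wCt (fun t => -(2 * π * t) ^ 2 * χ t) x) x) := by
  have hcc : Continuous χ := hd.continuous
  have hint : Integrable χ := hcc.integrable_of_hasCompactSupport hs
  have hs2 : HasCompactSupport (fun t => (χ t : ℂ)) := hs.comp_left (g := fun x : ℝ => (x:ℂ)) (by simp)
  have hd2 : ContDiff ℝ ∞ (fun t => (χ t : ℂ)) := Complex.ofRealCLM.contDiff.comp hd
  set Φ : 𝓢(ℝ, ℂ) := 𝓕 (hs2.toSchwartzMap hd2) with hΦ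
  have hΦe : (Φ : ℝ → ℂ) = 𝓕 (fun t => (χ t : ℂ)) := by
    rw [hΦ, SchwartzMap.fourier_coe]; rfl
  have hwe : wCt χ = fun x => (Φ x).re := by
    funext x; rw [wCt_re hint, hΦe]
  set Φ1 := SchwartzMap.derivCLM ℝ ℂ Φ with hΦ1
  set Φ2 := SchwartzMap.derivCLM ℝ ℂ Φ1 with hΦ2
  have d1 : ∀ x, HasDerivAt (Φ : ℝ → ℂ) (Φ1 x) x := fun x => by
    rw [hΦ1, SchwartzMap.derivCLM_apply]; exact Φ.hasDerivAt x
  have d2 : ∀ x, HasDerivAt (Φ1 : ℝ → ℂ) (Φ2 x) x := fun x => by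
    rw [hΦ2, SchwartzMap.derivCLM_apply]; exact Φ1.hasDerivAt x
  have re : ∀ {f : ℝ → ℂ} {f' : ℂ} {x : ℝ}, HasDerivAt f f' x →
      HasDerivAt (fun x => (f x).re) f'.re x := fun h =>
    (Complex.reCLM.hasFDerivAt.comp_hasDerivAt _ h)
  have hcs : ∀ g : ℝ → ℂ, Continuous g → Integrable (fun t => g t * (χ t : ℂ)) := fun g hg =>
    (by fun_prop : Continuous (fun t => g t * (χ t : ℂ))).integrable_of_hasCompactSupport
      hs2.mul_left
  have f1 : ∀ x, Φ1 x = 𝓕 (fun t : ℝ => (-2 * π * Complex.I * t) • (χ t : ℂ)) x := fun x => by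
    have := Real.hasDerivAt_fourier (f := fun t => (χ t : ℂ)) hint.ofReal
      (by simpa using hcs (fun t => (t:ℂ)) (by fun_prop)) x
    rw [← hΦe] at this
    exact (d1 x).unique this
  have f2 : ∀ x, Φ2 x = 𝓕 (fun t : ℝ => (-2 * π * Complex.I * t) •
      (-2 * π * Complex.I * t) • (χ t : ℂ)) x := fun x => by
    have := Real.hasDerivAt_fourier (f := fun t : ℝ => (-2 * π * Complex.I * t) • (χ t : ℂ))
      (hcs (fun t => (-2 * π * Complex.I * t)) (by fun_prop))
      (by
        have := hcs (fun t => (t:ℂ) * (-2 * π * Complex.I * t)) (by fun_prop)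
        simpa [mul_assoc] using this) x
    rw [← show (Φ1 : ℝ → ℂ) = _ from funext f1] at this
    exact (d2 x).unique this
  have f3 : (wCt fun t => -(2 * π * t) ^ 2 * χ t) = fun x => (Φ2 x).re := by
    funext x
    rw [wCt_re ((by fun_prop : Continuous fun t => -(2 * π * t) ^ 2 * χ t
      ).integrable_of_hasCompactSupport hs.mul_left), f2]
    congr 1
    refine congrArg (fun f : ℝ → ℂ => 𝓕 f x) (funext fun t => ?_)
    simp only [smul_eq_mul]
    push_cast
    have := Complex.I_sq
    linear_combination (-4 * (π:ℂ)^2 * (t:ℂ)^2 * (χ t:ℂ)) * this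
  refine ⟨?_, wCt_cont hint, fun x => (Φ1 x).re, Φ1.integrable.re, fun x => ?_, ?_, fun x => ?_⟩
  · rw [hwe]; exact Φ.integrable.re
  · rw [hwe]; exact re (d1 x)
  · rw [f3]; exact Φ2.integrable.re
  · rw [f3]; exact re (d2 x)

/-- A solution of the oscillator equation decaying together with its derivative vanishes. -/
lemma w_osc {v v' v'' : ℝ → ℝ} {k : ℝ} (hk : 0 < k) (h1 : ∀ x, HasDerivAt v (v' x) x)
    (h2 : ∀ x, HasDerivAt v' (v'' x) x) (h3 : ∀ x, v'' x = - k ^ 2 * v x)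
    (t1 : Tendsto v atTop (𝓝 0)) (t2 : Tendsto v' atTop (𝓝 0)) (x : ℝ) : v x = 0 := by
  have hE : ∀ x, HasDerivAt (fun x => k ^ 2 * v x ^ 2 + v' x ^ 2) 0 x := fun x => by
    have := (((h1 x).pow 2).const_mul (k ^ 2)).add ((h2 x).pow 2)
    refine this.congr_deriv ?_
    rw [h3]; ring
  have hc := is_const_of_deriv_eq_zero (fun x => (hE x).differentiableAt) (fun x => (hE x).deriv)
  have ht : Tendsto (fun x => k ^ 2 * v x ^ 2 + v' x ^ 2) atTop (𝓝 0) := by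
    have := ((t1.pow 2).const_mul (k ^ 2)).add (t2.pow 2)
    simpa using this
  have h0 : k ^ 2 * v x ^ 2 + v' x ^ 2 = 0 :=
    tendsto_nhds_unique (tendsto_const_nhds.congr fun y => hc x y) ht
  have : k ^ 2 * v x ^ 2 = 0 := by nlinarith [sq_nonneg (v' x), sq_nonneg (k * v x)]
  have hk2 : k ^ 2 ≠ 0 := by positivity
  simpa [hk2, hk.ne'] using this

open scoped FourierTransform SchwartzMap ContDiff

lemma w_test_zero {c kc : ℝ} {g w : ℝ → ℝ} {C : ℝ} (hkc : 0 < kc)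
    (hg : ∀ x, AnalyticAt ℝ g x) (hg0 : ∀ x, g x ≠ 0)
    (hm : ∀ x, msymb c x = (x ^ 2 - kc ^ 2) * g x)
    (hw : Differentiable ℝ w) (hb : ∀ x, |w x| ≤ C ∧ |deriv w x| ≤ C)
    (hMw : ∀ x, Mop c w x = 0) (ht : Tendsto w atTop (𝓝 0))
    {χ : ℝ → ℝ} (hs : HasCompactSupport χ) (hd : ContDiff ℝ ∞ χ) (x : ℝ) :
    wcv w (wCt χ) x = 0 := by
  have hgd : ContDiff ℝ ∞ g := contDiff_iff_contDiffAt.mpr fun x => (hg x).contDiffAt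
  have hθs : HasCompactSupport (fun t => χ t * (g (2 * π * t))⁻¹) := hs.mul_right
  have hθd : ContDiff ℝ ∞ (fun t => χ t * (g (2 * π * t))⁻¹) :=
    hd.mul ((hgd.comp (contDiff_const.mul contDiff_id)).inv fun x => hg0 _)
  obtain ⟨hui, huc, -⟩ := wCt_test hθs hθd
  obtain ⟨hi, hc, φ', hi', d1, hi'', d2⟩ := wCt_test hs hd
  have hχi : Integrable χ := hd.continuous.integrable_of_hasCompactSupport hs
  have hχi2 : Integrable (fun t => -(2 * π * t) ^ 2 * χ t) :=
    ((by fun_prop : Continuous fun t => -(2 * π * t) ^ 2 * χ t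
      ).comp continuous_id |>.integrable_of_hasCompactSupport hs.mul_left)
  have hθi := hθd.continuous.integrable_of_hasCompactSupport (μ := volume) hθs
  have hwd : ∀ x, HasDerivAt w (deriv w x) x := fun x => (hw x).hasDerivAt
  have hb1 : ∀ x, |w x| ≤ C := fun x => (hb x).1
  have v1 := fun x => wcv_deriv2 hwd hb1 (fun x => (hb x).2) d1 hi hi' x
  have v2 := fun x => wcv_deriv2 hwd hb1 (fun x => (hb x).2) d2 hi' hi'' x
  have t1 := wcv_tendsto hw.continuous.measurable hb1 hi ht
  have t2 := wcv_tendsto hw.continuous.measurable hb1 hi' ht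
  refine w_osc hkc v1 v2 (fun x => ?_) t1 t2 x
  have hadj := congrFun (wMop_adj c hw.continuous hb1 hui huc) x
  rw [wCt_Mop c hθi] at hadj
  have e0 : wcv (Mop c w) (wCt fun t => χ t * (g (2 * π * t))⁻¹) x = 0 := by
    unfold wcv; simp [hMw]
  rw [e0] at hadj
  have e1 : (wCt fun t => msymb c (2 * π * t) * (χ t * (g (2 * π * t))⁻¹)) =
      fun y => -(wCt (fun t => -(2 * π * t) ^ 2 * χ t) y) - kc ^ 2 * wCt χ y := by
    funext y
    have : (fun t => msymb c (2 * π * t) * (χ t * (g (2 * π * t))⁻¹)) =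
        fun t => -(-(2 * π * t) ^ 2 * χ t) - kc ^ 2 * χ t := by
      funext t
      rw [hm]
      have := hg0 (2 * π * t)
      field_simp
    rw [this]
    unfold wCt
    rw [← integral_neg, ← integral_const_mul, ← integral_sub (wCt_int hχi2 y).fun_neg
      ((wCt_int hχi y).const_mul _)]
    congr 1; funext t; ring
  rw [e1] at hadj
  have e2 : wcv w (fun y => -(wCt (fun t => -(2 * π * t) ^ 2 * χ t) y) - kc ^ 2 * wCt χ y) x =
      - wcv w (wCt (fun t => -(2 * π * t) ^ 2 * χ t)) x - kc ^ 2 * wcv w (wCt χ) x := by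
    unfold wcv
    rw [← integral_neg, ← integral_const_mul, ← integral_sub
      (wcv_int hw.continuous.measurable hb1 hi'' x).fun_neg
      ((wcv_int hw.continuous.measurable hb1 hi x).const_mul _)]
    congr 1; funext t; ring
  rw [e2] at hadj
  linarith

lemma w_zero {w : ℝ → ℝ} {C : ℝ} (hw : Continuous w) (hb : ∀ x, |w x| ≤ C)
    (h : ∀ χ : ℝ → ℝ, HasCompactSupport χ → ContDiff ℝ ∞ χ → ∀ x, wcv w (wCt χ) x = 0)
    (x : ℝ) : w x = 0 := by
  let b : ContDiffBump (0:ℝ) := ⟨1, 2, by norm_num, by norm_num⟩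
  set χ : ℝ → ℝ := fun x => b x with hχ
  have hs : HasCompactSupport χ := b.hasCompactSupport
  have hd : ContDiff ℝ ∞ χ := b.contDiff
  have hev : ∀ x, χ (-x) = χ x := fun x => b.neg x
  have h1 : χ 0 = 1 := b.one_of_mem_closedBall (by simp [b.rIn_pos.le])
  obtain ⟨hi, hc, -⟩ := wCt_test hs hd
  have hχi : Integrable χ := hd.continuous.integrable_of_hasCompactSupport hs
  have hint : ∫ z, wCt χ z = 1 := by
    have := congrFun (wCt_inv hd.continuous hχi hev hi) 0
    rw [h1] at this
    simpa [wCt] using this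
  have key : ∀ n : ℕ, ∫ z, w (x - z / (n + 1)) * wCt χ z = 0 := fun n => by
    have hn : (0:ℝ) < n + 1 := by positivity
    have hs' : HasCompactSupport (fun t => χ (t / (n + 1))) := by
      have := hs.comp_homeomorph (Homeomorph.mulRight₀ ((n + 1 : ℝ)⁻¹) (by positivity))
      simpa [Function.comp_def, div_eq_mul_inv] using this
    have hd' : ContDiff ℝ ∞ (fun t => χ (t / (n + 1))) := hd.comp (contDiff_id.div_const _)
    have h2 := h _ hs' hd' x
    have e : ∀ y, wCt (fun t => χ (t / (n + 1))) y = (n + 1) * wCt χ ((n + 1) * y) := fun y => by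
      have := Measure.integral_comp_div (fun t => χ t * cos (2 * π * t * ((n + 1) * y))) (n + 1 : ℝ)
      rw [abs_of_pos hn, smul_eq_mul] at this
      unfold wCt
      rw [← this]
      congr 1; funext t
      congr 2; field_simp
    unfold wcv at h2
    simp only [e] at h2
    have e3 := Measure.integral_comp_mul_left (fun z => w (x - z / (n + 1)) * wCt χ z) (n + 1 : ℝ)
    have e4 : ∫ y, w (x - y) * ((n + 1) * wCt χ ((n + 1) * y)) =
        (n + 1) * ∫ y, w (x - (n + 1) * y / (n + 1)) * wCt χ ((n + 1) * y) := by
      rw [← integral_const_mul]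
      congr 1; funext y
      rw [mul_div_cancel_left₀ _ hn.ne']; ring
    rw [e4, e3] at h2
    have : (n + 1 : ℝ) ≠ 0 := hn.ne'
    simpa [abs_of_pos hn, this] using h2
  have hlim : Tendsto (fun n : ℕ => ∫ z, w (x - z / (n + 1)) * wCt χ z) atTop
      (𝓝 (∫ z, w x * wCt χ z)) := by
    refine tendsto_integral_of_dominated_convergence (fun z => C * |wCt χ z|) (fun n => ?_)
      (hi.abs.const_mul C) (fun n => Eventually.of_forall fun z => ?_)
      (Eventually.of_forall fun z => ?_)
    · exact (by fun_prop : Continuous _).aestronglyMeasurable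
    · rw [norm_mul]; exact mul_le_mul_of_nonneg_right (hb _) (norm_nonneg _)
    · refine Tendsto.mul_const _ ?_
      refine (hw.tendsto x).comp ?_
      have := (tendsto_one_div_add_atTop_nhds_zero_nat (𝕜 := ℝ)).const_mul z
      have := this.const_sub x
      simpa [div_eq_mul_inv] using this
  simp only [key] at hlim
  rw [integral_const_mul, hint, mul_one] at hlim
  exact (tendsto_nhds_unique tendsto_const_nhds hlim).symm

lemma wAop_tendsto {f : ℝ → ℝ} {l C : ℝ} (hf : Continuous f) (hb : ∀ x, |f x| ≤ C)
    (h : Tendsto f atTop (𝓝 l)) : Tendsto (Aop f) atTop (𝓝 l) := by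
  have e : Aop f = fun x => ∫ s in (-(1/2):ℝ)..(1/2), f (x + s) := funext (wAop_eq f)
  rw [e]
  have := intervalIntegral.tendsto_integral_filter_of_dominated_convergence (μ := volume)
    (a := -(1/2)) (b := 1/2) (l := atTop) (F := fun x s => f (x + s)) (f := fun _ => l)
    (fun _ => C) (Eventually.of_forall fun x =>
      (by fun_prop : Continuous fun s => f (x + s)).aestronglyMeasurable)
    (Eventually.of_forall fun x => Eventually.of_forall fun s _ => hb _)
    intervalIntegrable_const
    (Eventually.of_forall fun s _ => h.comp (tendsto_atTop_add_const_right _ s tendsto_id))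
  rw [intervalIntegral.integral_const, smul_eq_mul,
    show ((1/2 : ℝ) - -(1/2)) * l = l by ring] at this
  exact this

lemma w_uniq {c kc : ℝ} (hc0 : 0 < c) (hc1 : c < 1) (hkc : 0 < kc)
    (ha : symb kc = c) (hm' : deriv (msymb c) kc ≠ 0)
    (hroots : ∀ k : ℝ, k ≠ kc → k ≠ -kc → msymb c k ≠ 0) {Q S T : ℝ → ℝ} {η ζ : ℝ}
    (hS : IsX S) (hT : IsX T) (hSe : ∀ x, Mop c S x = Q x + η) (hTe : ∀ x, Mop c T x = Q x + ζ) :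
    S = T ∧ η = ζ := by
  obtain ⟨g, -, -, hg, hg0, hm, -⟩ := w_symbol_data c kc hc0 hkc ha hm' hroots
  obtain ⟨⟨hSd, ⟨C1, hC1⟩, -⟩, hS0, l1, hl1⟩ := hS
  obtain ⟨⟨hTd, ⟨C2, hC2⟩, -⟩, hT0, l2, hl2⟩ := hT
  have h1c : 0 < 1 - c ^ 2 := by nlinarith
  set d := (η - ζ) / (1 - c ^ 2) with hd
  have hdm : (1 - c ^ 2) * d = η - ζ := by rw [hd]; field_simp
  set D : ℝ → ℝ := fun x => S x + (-1) * T x with hD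
  have hDd : Differentiable ℝ D := by intro x; exact (hSd x).add ((hTd x).const_mul _)
  have hMD : ∀ x, Mop c D x = η - ζ := fun x => by
    rw [hD, wMop_lin hSd.continuous hTd.continuous, hSe, hTe]; ring
  set w : ℝ → ℝ := fun x => D x + (-1) * (fun _ => d) x with hw
  have hwd : Differentiable ℝ w := by intro x; exact (hDd x).add (differentiableAt_const _)
  have hMw : ∀ x, Mop c w x = 0 := fun x => by
    rw [hw, wMop_lin hDd.continuous continuous_const, hMD, wMop_const, hdm]; ring
  have hder : ∀ x, deriv w x = deriv S x - deriv T x := fun x => by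
    have h1 := (((hSd x).hasDerivAt.add ((hTd x).hasDerivAt.const_mul (-1))).add_const
      ((-1) * d))
    have := h1.deriv
    rw [show w = fun x => S x + (-1) * T x + (-1) * d from rfl]
    refine this.trans ?_; ring
  have hwb : ∀ x, |w x| ≤ C1 + C2 + |d| ∧ |deriv w x| ≤ C1 + C2 + |d| := fun x => by
    constructor
    · rw [show w x = S x - T x - d by simp only [hw, hD]; ring]
      have := abs_sub (S x - T x) d
      have := abs_sub (S x) (T x)
      linarith [(hC1 x).1, (hC2 x).1]
    · rw [hder]
      have := abs_sub (deriv S x) (deriv T x)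
      linarith [(hC1 x).2, (hC2 x).2, abs_nonneg d]
  have hwl : Tendsto w atTop (𝓝 (l1 + (-1) * l2 + (-1) * d)) :=
    (hl1.add (hl2.const_mul (-1))).add_const _
  set l := l1 + (-1) * l2 + (-1) * d with hl
  have hwb1 := fun x => (hwb x).1
  have hAA := wAop_tendsto (wAop_cont hwd.continuous) (wAop_bdd hwb1)
    (wAop_tendsto hwd.continuous hwb1 hwl)
  have hMl : Tendsto (Mop c w) atTop (𝓝 (l - c ^ 2 * l)) := hAA.sub (hwl.const_mul _)
  have hMl0 : l - c ^ 2 * l = 0 := by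
    refine tendsto_nhds_unique hMl ?_
    rw [show Mop c w = fun _ => 0 from funext hMw]; exact tendsto_const_nhds
  have hl0 : l = 0 := by
    have : (1 - c ^ 2) * l = 0 := by linarith
    exact (mul_eq_zero.mp this).resolve_left h1c.ne'
  rw [hl0] at hwl
  have hz := w_zero hwd.continuous hwb1 fun χ hs hd x =>
    w_test_zero hkc hg hg0 hm hwd hwb hMw hwl hs hd x
  have hz' : ∀ x, S x - T x - d = 0 := fun x => by
    rw [← hz x]; simp only [hw, hD]; ring
  have hd0 : d = 0 := by have := hz' 0; rw [hS0, hT0] at this; linarith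
  refine ⟨funext fun x => by have := hz' x; rw [hd0] at this; linarith, ?_⟩
  rw [hd0] at hdm; linarith

lemma wGood.lin {F G : ℝ → ℝ} (hF : wGood F) (hG : wGood G) (a : ℝ) :
    wGood (fun x => F x + a * G x) := by
  obtain ⟨m1, ⟨B1, b1⟩, z1⟩ := hF
  obtain ⟨m2, ⟨B2, b2⟩, z2⟩ := hG
  refine ⟨m1.add (m2.const_mul a), ⟨B1 + |a| * B2, ?_⟩, ?_⟩
  · filter_upwards [b1, b2] with x h1 h2
    refine (abs_add_le _ _).trans ?_
    rw [abs_mul]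
    exact add_le_add h1 (mul_le_mul_of_nonneg_left h2 (abs_nonneg a))
  · filter_upwards [z1, z2] with x h1 h2 hx
    rw [h1 hx, h2 hx]; ring

lemma wGood_zero : wGood (fun _ => 0) :=
  ⟨measurable_const, ⟨0, Eventually.of_forall fun x => by simp⟩, Eventually.of_forall fun x _ => rfl⟩

lemma wS0_lin {c K : ℝ} {k : ℝ → ℝ} (hk : Continuous k) (hK : ∀ x, |k x| ≤ K)
    {F G : ℝ → ℝ} (hF : wGood F) (hG : wGood G) (a : ℝ) (x : ℝ) :
    wS0 c k (fun x => F x + a * G x) x = wS0 c k F x + a * wS0 c k G x := by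
  have e1 : Aop (fun x => F x + a * G x) = fun x => Aop F x + a * Aop G x := by
    funext x
    unfold Aop
    rw [intervalIntegral.integral_add hF.int.intervalIntegrable
      (hG.int.const_mul a).intervalIntegrable, intervalIntegral.integral_const_mul]
  unfold wS0
  rw [e1, wAop_lin (wA_cont hF) (wA_cont hG)]
  have e2 : wcv k (fun x => Aop (Aop F) x + a * Aop (Aop G) x) x =
      wcv k (Aop (Aop F)) x + a * wcv k (Aop (Aop G)) x := by
    unfold wcv
    rw [← integral_const_mul, ← integral_add (wcv_int hk.measurable hK (wQ_int hF) x)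
      ((wcv_int hk.measurable hK (wQ_int hG) x).const_mul a)]
    congr 1; funext y; ring
  rw [e2]; ring

lemma w_linear {c K : ℝ} {k : ℝ → ℝ} (hk : Continuous k) (hK : ∀ x, |k x| ≤ K) :
    ∃ L : (ℝ → ℝ) →ₗ[ℝ] (ℝ → ℝ) × ℝ, ∀ G, wGood G →
      L G = (wS c k G, -((1 - c ^ 2) * wS0 c k G 0)) := by
  have hl := fun {F G : ℝ → ℝ} (hF : wGood F) (hG : wGood G) (a x : ℝ) =>
    wS0_lin (c := c) hk hK hF hG a x
  have eadd : ∀ F G : ℝ → ℝ, F + G = fun x => F x + 1 * G x := fun F G => by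
    funext x; simp
  have esm : ∀ (a : ℝ) (G : ℝ → ℝ), a • G = fun x => (fun _ => (0:ℝ)) x + a * G x := fun a G => by
    funext x; simp
  have hz : ∀ x, wS0 c k (fun _ => 0) x = 0 := fun x => by
    have := hl wGood_zero wGood_zero 1 x
    simp only [mul_zero, add_zero, one_mul] at this
    linarith
  let p : Submodule ℝ (ℝ → ℝ) :=
    { carrier := {G | wGood G}
      add_mem' := fun {F G} hF hG => by
        show wGood (F + G)
        rw [eadd]; exact hF.lin hG 1
      zero_mem' := wGood_zero
      smul_mem' := fun a G hG => by
        show wGood (a • G)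
        rw [esm]; exact wGood_zero.lin hG a }
  let f : p →ₗ[ℝ] (ℝ → ℝ) × ℝ :=
    { toFun := fun G => (wS c k G, -((1 - c ^ 2) * wS0 c k G 0))
      map_add' := fun F G => by
        have h : ∀ x, wS0 c k ((F + G : p) : ℝ → ℝ) x = wS0 c k F x + wS0 c k G x := fun x => by
          have := hl F.2 G.2 1 x
          rw [← eadd, one_mul] at this
          exact this
        refine Prod.ext (funext fun x => ?_) ?_
        · simp only [wS, h, Prod.fst_add, Pi.add_apply]; ring
        · simp only [h, Prod.snd_add]; ring
      map_smul' := fun a G => by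
        have h : ∀ x, wS0 c k ((a • G : p) : ℝ → ℝ) x = a * wS0 c k G x := fun x => by
          have := hl wGood_zero G.2 a x
          rw [← esm, hz, zero_add] at this
          exact this
        refine Prod.ext (funext fun x => ?_) ?_
        · simp only [wS, h, Prod.smul_fst, Pi.smul_apply, smul_eq_mul, RingHom.id_apply]; ring
        · simp only [h, Prod.smul_snd, smul_eq_mul, RingHom.id_apply]; ring }
  obtain ⟨L, hL⟩ := LinearMap.exists_extend f
  refine ⟨L, fun G hG => ?_⟩
  have := LinearMap.congr_fun hL ⟨G, hG⟩
  exact this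

/-- the affine problem `M S = A² G + η` has a unique solution
`(S, η) ∈ X × ℝ` depending linearly on `G`, with estimates `|η| ≤ C_M ‖A²G‖_∞`,
`‖S‖_∞ ≤ C_M ‖A²G‖_∞`, `‖S'‖_∞ ≤ C_M ‖A G‖_∞`, `‖S''‖_∞ ≤ C_M ‖G‖_∞`. -/
theorem stmt8 (c kc : ℝ) (hc0 : 0 < c) (hc1 : c < 1) (hkc : 0 < kc)
    (ha : symb kc = c) (hm' : deriv (msymb c) kc ≠ 0)
    (hroots : ∀ k : ℝ, k ≠ kc → k ≠ -kc → msymb c k ≠ 0) :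
    ∃ CM : ℝ, 0 < CM ∧ ∃ L : (ℝ → ℝ) →ₗ[ℝ] (ℝ → ℝ) × ℝ,
      ∀ G : ℝ → ℝ, Measurable G →
        (∃ B : ℝ, ∀ᵐ x ∂(volume : Measure ℝ), |G x| ≤ B) →
        (∀ᵐ x ∂(volume : Measure ℝ), x ∉ Set.Icc (-1 : ℝ) 1 → G x = 0) →
        (IsX (L G).1 ∧
         (∀ x, Mop c (L G).1 x = Aop (Aop G) x + (L G).2) ∧
         (∀ (S : ℝ → ℝ) (η : ℝ), IsX S → (∀ x, Mop c S x = Aop (Aop G) x + η) →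
            S = (L G).1 ∧ η = (L G).2) ∧
         (∀ B2 : ℝ, (∀ x, |Aop (Aop G) x| ≤ B2) →
            |(L G).2| ≤ CM * B2 ∧ ∀ x, |(L G).1 x| ≤ CM * B2) ∧
         (∀ B1 : ℝ, (∀ x, |Aop G x| ≤ B1) → ∀ x, |deriv (L G).1 x| ≤ CM * B1) ∧
         (∀ B0 : ℝ, 0 ≤ B0 → (∀ᵐ x ∂(volume : Measure ℝ), |G x| ≤ B0) →
            LipschitzWith (Real.toNNReal (CM * B0)) (deriv (L G).1))) := by
  obtain ⟨k, K, hk, hK, hk0, hMk⟩ := w_kernel c kc hc0 hkc ha hm' hroots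
  obtain ⟨L, hL⟩ := w_linear (c := c) hk hK
  have hKn : 0 ≤ K := (abs_nonneg _).trans (hK 0)
  have hcp : (0:ℝ) < 1 / c ^ 2 := by positivity
  have h1c : 0 < 1 - c ^ 2 := by nlinarith
  refine ⟨4 * (8 * K + 1 / c ^ 2), by positivity, L, fun G hm hB h0 => ?_⟩
  have hG : wGood G := ⟨hm, hB, h0⟩
  rw [hL G hG]
  obtain ⟨hX, hEq, e2, e1, e0⟩ := w_exist hc0 hk hK hk0 hMk hG
  generalize 1 / c ^ 2 = r at *
  refine ⟨hX, hEq, fun S η hS hSe => w_uniq hc0 hc1 hkc ha hm' hroots hS hX hSe hEq,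
    fun B2 hB2 => ?_, fun B1 hB1 x => ?_, fun B0 hB0 hB0' => ?_⟩
  · have hn : 0 ≤ B2 := (abs_nonneg _).trans (hB2 0)
    have hKB := mul_nonneg hKn hn
    have hrB := mul_nonneg hcp.le hn
    have h00 := e2 B2 hB2 0
    constructor
    · rw [abs_neg, abs_mul, abs_of_pos h1c]
      have : (1 - c ^ 2) * |wS0 c k G 0| ≤ 1 * |wS0 c k G 0| :=
        mul_le_mul_of_nonneg_right (by nlinarith) (abs_nonneg _)
      linarith
    · intro x
      have := e2 B2 hB2 x
      refine (abs_sub _ _).trans ?_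
      linarith
  · have hn : 0 ≤ B1 := (abs_nonneg _).trans (hB1 0)
    have hKB := mul_nonneg hKn hn
    have hrB := mul_nonneg hcp.le hn
    have := e1 B1 hB1 x
    refine this.trans ?_
    linarith
  · have := e0 B0 hB0 hB0'
    rw [show 4 * (8 * K + r) * B0 = (8 * K + r) * (4 * B0) by ring]
    exact this
end

section
/- Let c ∈ (0,1), let (Ψ_δ)_{δ>0} satisfy Assumption A with constant C_Ψ and I_δ = 0 for all δ > 0, and let R₀ be an unperturbed wave. Then there exist constants C > 0 and δ* > 0, both independent of δ and S, such that for every 0 < δ < δ* and every δ-admissible S, the function G(S) satisfies: ‖G(S)‖_∞ ≤ C; G(S)(x) = 0 for all |x| > Cδ; and |∫_ℝ G(S)(x) dx| ≤ C(1 + ‖S''‖_∞) δ². -/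
open MeasureTheory Real Filter Topology

/-- Assumption A for the family `(Ψ_δ)_{δ>0}` with constant `C_Ψ`. -/
def AssumptionA (Ψ : ℝ → ℝ → ℝ) (CΨ : ℝ) : Prop :=
  0 < CΨ ∧ ∀ δ : ℝ, 0 < δ →
    Ψ δ 0 = 0 ∧ ContDiff ℝ 2 (Ψ δ) ∧
    (∀ r : ℝ, δ ≤ |r| → deriv (Ψ δ) r = Real.sign r) ∧
    (∀ r : ℝ, |deriv (Ψ δ) r| ≤ CΨ) ∧
    (∀ r : ℝ, |deriv (deriv (Ψ δ)) r| ≤ CΨ / δ)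

/-- The quantity `I_δ = ½ ∫_ℝ (Ψ'_δ(r) − sgn r) dr`. -/
noncomputable def Idelta (Ψ : ℝ → ℝ → ℝ) (δ : ℝ) : ℝ :=
  (1 / 2) * ∫ r : ℝ, (deriv (Ψ δ) r - Real.sign r)

/-- An unperturbed wave `R₀`: a `W^{2,∞}` solution of `M R₀ = A²(sgn ∘ R₀) + μ₀` with
`R₀(0) = 0` which leaves a neighbourhood of `0` monotonically and stays away from `0`. -/
def UnperturbedWave (c : ℝ) (R₀ : ℝ → ℝ) : Prop :=
  IsW2inf R₀ ∧ R₀ 0 = 0 ∧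
  (∃ μ₀ : ℝ, ∀ x, Mop c R₀ x = Aop (Aop (fun y => Real.sign (R₀ y))) x + μ₀) ∧
  ∃ x₀ r₀ d₀ : ℝ, 0 < x₀ ∧ 0 < r₀ ∧ 0 < d₀ ∧
    (∀ x, x₀ < x → r₀ < R₀ x) ∧ (∀ x, x < -x₀ → R₀ x < -r₀) ∧
    (∀ x, |x| < x₀ → d₀ < deriv R₀ x)

/-- `δ`-admissibility of a corrector `S` relative to `R₀`. -/
def Admissible (δ : ℝ) (R₀ S : ℝ → ℝ) : Prop :=
  IsW2inf S ∧ S 0 = 0 ∧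
  ∃ xm xp : ℝ, xm < 0 ∧ 0 < xp ∧
    R₀ xm + S xm = -δ ∧ R₀ xp + S xp = δ ∧
    (∀ x, x < xm → R₀ x + S x < -δ) ∧
    (∀ x, xp < x → δ < R₀ x + S x) ∧
    (∀ x, xm < x → x < xp →
      deriv R₀ 0 / 2 < deriv R₀ x + deriv S x ∧ deriv R₀ x + deriv S x < 2 * deriv R₀ 0)

/-- The nonlinear superposition operator `G(S)(x) = Ψ'_δ(R₀(x)+S(x)) − sgn(R₀(x))`. -/
noncomputable def Gop (Ψ : ℝ → ℝ → ℝ) (δ : ℝ) (R₀ S : ℝ → ℝ) : ℝ → ℝ :=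
  fun x => deriv (Ψ δ) (R₀ x + S x) - Real.sign (R₀ x)

lemma aux_split (g f1 f2 : ℝ → ℝ) (a b : ℝ) (ha : a < 0) (hb : 0 < b)
    (hf1 : Continuous f1) (hf2 : Continuous f2)
    (h1 : ∀ x, x ≤ a → g x = 0) (h2 : ∀ x, b < x → g x = 0)
    (h3 : ∀ x, a < x → x < 0 → g x = f1 x) (h4 : ∀ x, 0 < x → x ≤ b → g x = f2 x) :
    ∫ x, g x = (∫ x in a..0, f1 x) + ∫ x in (0:ℝ)..b, f2 x := by
  have hae : g =ᵐ[volume] fun x => (Set.Ioc a 0).indicator f1 x + (Set.Ioc 0 b).indicator f2 x := by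
    have : ∀ᵐ x : ℝ, x ≠ 0 := by
      simp [ae_iff]
    filter_upwards [this] with x hx
    by_cases c1 : x ≤ a
    · rw [h1 x c1, Set.indicator_of_notMem, Set.indicator_of_notMem]
      · simp
      · simp only [Set.mem_Ioc, not_and_or, not_lt]; left; linarith
      · simp only [Set.mem_Ioc, not_and_or, not_lt]; left; linarith
    by_cases c2 : b < x
    · rw [h2 x c2, Set.indicator_of_notMem, Set.indicator_of_notMem]
      · simp
      · simp only [Set.mem_Ioc, not_and_or, not_le]; right; linarith
      · simp only [Set.mem_Ioc, not_and_or, not_le]; right; linarith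
    push Not at c1 c2
    rcases lt_or_gt_of_ne hx with c3 | c3
    · rw [h3 x c1 c3, Set.indicator_of_mem, Set.indicator_of_notMem]
      · simp
      · simp only [Set.mem_Ioc, not_and_or, not_lt]; left; linarith
      · exact ⟨c1, c3.le⟩
    · rw [h4 x c3 c2, Set.indicator_of_notMem, Set.indicator_of_mem]
      · simp
      · exact ⟨c3, c2⟩
      · simp only [Set.mem_Ioc, not_and_or, not_le]; right; linarith
  rw [integral_congr_ae hae, integral_add, integral_indicator measurableSet_Ioc,
    integral_indicator measurableSet_Ioc, intervalIntegral.integral_of_le ha.le,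
    intervalIntegral.integral_of_le hb.le]
  · rw [integrable_indicator_iff measurableSet_Ioc]
    exact (hf1.integrableOn_Icc).mono_set Set.Ioc_subset_Icc_self
  · rw [integrable_indicator_iff measurableSet_Ioc]
    exact (hf2.integrableOn_Icc).mono_set Set.Ioc_subset_Icc_self

lemma aux_est (f R' : ℝ → ℝ) (a b q B L : ℝ) (hab : a ≤ b) (hf : Continuous f)
    (hR : Continuous R') (hB : ∀ x, |f x| ≤ B) (hL : ∀ x, a ≤ x → x ≤ b → |q - R' x| ≤ L) :
    |q * (∫ x in a..b, f x) - ∫ x in a..b, f x * R' x| ≤ B * L * (b - a) := by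
  have hB0 : 0 ≤ B := (abs_nonneg _).trans (hB 0)
  rw [← intervalIntegral.integral_const_mul, ← intervalIntegral.integral_sub
    (Continuous.intervalIntegrable (by fun_prop) _ _)
    (Continuous.intervalIntegrable (by fun_prop) _ _)]
  have := intervalIntegral.norm_integral_le_of_norm_le_const (a := a) (b := b)
    (f := fun x => q * f x - f x * R' x) (C := B * L) (by
      intro x hx
      rw [Set.uIoc_of_le hab] at hx
      have e : q * f x - f x * R' x = f x * (q - R' x) := by ring
      rw [e, Real.norm_eq_abs, abs_mul]
      exact mul_le_mul (hB x) (hL x hx.1.le hx.2) (abs_nonneg _) hB0)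
  rwa [Real.norm_eq_abs, abs_of_nonneg (sub_nonneg.2 hab)] at this

lemma aux_sign (R : ℝ → ℝ) (x₀ r₀ d₀ : ℝ) (hd : Differentiable ℝ R) (h0 : R 0 = 0)
    (hx : 0 < x₀) (hr : 0 < r₀) (hd0 : 0 < d₀)
    (h1 : ∀ x, x₀ < x → r₀ < R x) (h2 : ∀ x, x < -x₀ → R x < -r₀)
    (h3 : ∀ x, |x| < x₀ → d₀ < deriv R x) :
    (∀ x, 0 < x → 0 < R x) ∧ (∀ x, x < 0 → R x < 0) := by
  have hm : StrictMonoOn R (Set.Icc (-x₀) x₀) := by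
    apply strictMonoOn_of_deriv_pos (convex_Icc _ _) hd.continuous.continuousOn
    intro x hx
    rw [interior_Icc] at hx
    exact hd0.trans (h3 x (abs_lt.2 hx))
  constructor
  · intro x hx1
    by_cases c : x₀ < x
    · exact hr.trans (h1 x c)
    · rw [← h0]
      exact hm ⟨by linarith, hx.le⟩ ⟨by linarith, by linarith⟩ hx1
  · intro x hx1
    by_cases c : x < -x₀
    · linarith [h2 x c]
    · rw [← h0]
      exact hm ⟨by linarith, by linarith⟩ ⟨by linarith, hx.le⟩ hx1

/-- bounds on `G(S)` for `δ`-admissible `S`: `‖G(S)‖_∞ ≤ C`, `G(S)` is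
supported in `[-Cδ, Cδ]`, and `|∫ G(S)| ≤ C(1 + ‖S''‖_∞) δ²`. -/
theorem stmt9 (c : ℝ) (hc0 : 0 < c) (hc1 : c < 1)
    (Ψ : ℝ → ℝ → ℝ) (CΨ : ℝ) (hA : AssumptionA Ψ CΨ)
    (hI : ∀ δ : ℝ, 0 < δ → Idelta Ψ δ = 0)
    (R₀ : ℝ → ℝ) (hR₀ : UnperturbedWave c R₀) :
    ∃ C δs : ℝ, 0 < C ∧ 0 < δs ∧
      ∀ δ : ℝ, 0 < δ → δ < δs → ∀ S : ℝ → ℝ, Admissible δ R₀ S →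
        (∀ x, |Gop Ψ δ R₀ S x| ≤ C) ∧
        (∀ x : ℝ, C * δ < |x| → Gop Ψ δ R₀ S x = 0) ∧
        (∀ K : NNReal, LipschitzWith K (deriv S) →
          |∫ x : ℝ, Gop Ψ δ R₀ S x| ≤ C * (1 + (K : ℝ)) * δ ^ 2) := by
  obtain ⟨hCΨ, hA⟩ := hA
  obtain ⟨⟨hRd, -, K₀, hK₀⟩, hR0, -, x₀, r₀, d₀, hx₀, hr₀, hd₀, hRp, hRm, hRD⟩ := hR₀
  obtain ⟨hpos, hneg⟩ := aux_sign R₀ x₀ r₀ d₀ hRd hR0 hx₀ hr₀ hd₀ hRp hRm hRD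
  have hD : 0 < deriv R₀ 0 := hd₀.trans (hRD 0 (by simpa using hx₀))
  set D := deriv R₀ 0 with hDdef
  set E := (CΨ + 1) * ((K₀ : ℝ) + 1) * (16 / D ^ 3) with hE
  have hE0 : 0 < E := by positivity
  have hDi : 0 < 2 / D := by positivity
  refine ⟨(CΨ + 1) + 2 / D + E, 1, by positivity, one_pos, ?_⟩
  rintro δ hδ - S ⟨⟨hSd, -, KS, hKS⟩, hS0, xm, xp, hxm, hxp, hRxm, hRxp, hlt, hgt, hder⟩
  obtain ⟨hΨ0, hΨC, hΨs, hΨb, -⟩ := hA δ hδ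
  have hΨd : Differentiable ℝ (Ψ δ) := hΨC.differentiable (by norm_num)
  have hΨc : Continuous (deriv (Ψ δ)) := hΨC.continuous_deriv (by norm_num)
  have hsb : ∀ y, |Real.sign y| ≤ 1 := by
    intro y
    rcases Real.sign_apply_eq y with h | h | h <;> rw [h] <;> norm_num
  set R : ℝ → ℝ := fun x => R₀ x + S x with hR
  have hRR : ∀ x, HasDerivAt R (deriv R₀ x + deriv S x) x := fun x =>
    (hRd x).hasDerivAt.add (hSd x).hasDerivAt
  have hRcont : Continuous R := hRd.continuous.add hSd.continuous
  have hRat0 : R 0 = 0 := by simp [hR, hR0, hS0]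
  have hR'c : Continuous (fun x => deriv R₀ x + deriv S x) := hK₀.continuous.add hKS.continuous
  have hxp2 : xp ≤ 2 / D * δ := by
    obtain ⟨ξ, hξ, he⟩ := exists_hasDerivAt_eq_slope R (fun x => deriv R₀ x + deriv S x) hxp
      hRcont.continuousOn (fun x _ => hRR x)
    have h1 := (hder ξ (hxm.trans hξ.1) hξ.2).1
    rw [he, hRat0, show R xp = δ from hRxp, sub_zero, sub_zero, lt_div_iff₀ hxp] at h1
    rw [div_mul_eq_mul_div, le_div_iff₀ hD]; linarith
  have hxm2 : -xm ≤ 2 / D * δ := by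
    obtain ⟨ξ, hξ, he⟩ := exists_hasDerivAt_eq_slope R (fun x => deriv R₀ x + deriv S x) hxm
      hRcont.continuousOn (fun x _ => hRR x)
    have h1 := (hder ξ hξ.1 (hξ.2.trans hxp)).1
    rw [he, hRat0, show R xm = -δ from hRxm, lt_div_iff₀ (by linarith)] at h1
    rw [div_mul_eq_mul_div, le_div_iff₀ hD]; linarith
  have hsp : ∀ x, δ ≤ x → deriv (Ψ δ) x = 1 := fun x hx => by
    rw [hΨs x (hx.trans (le_abs_self x)), Real.sign_of_pos (by linarith)]
  have hsm : ∀ x, x ≤ -δ → deriv (Ψ δ) x = -1 := fun x hx => by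
    rw [hΨs x (by rw [abs_of_neg (by linarith)]; linarith), Real.sign_of_neg (by linarith)]
  have hGp : ∀ x, xp < x → Gop Ψ δ R₀ S x = 0 := fun x hx => by
    rw [Gop, hsp _ (hgt x hx).le, Real.sign_of_pos (hpos x (hxp.trans hx)), sub_self]
  have hGm : ∀ x, x ≤ xm → Gop Ψ δ R₀ S x = 0 := fun x hx => by
    have : R₀ x + S x ≤ -δ := by
      rcases hx.lt_or_eq with h | h
      · exact (hlt x h).le
      · rw [h]; exact hRxm.le
    rw [Gop, hsm _ this, Real.sign_of_neg (hneg x (hx.trans_lt hxm)), sub_self]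
  refine ⟨?_, ?_, ?_⟩
  · intro x
    have h1 := abs_sub (deriv (Ψ δ) (R₀ x + S x)) (Real.sign (R₀ x))
    have h2 := hΨb (R₀ x + S x)
    have h3 := hsb (R₀ x)
    unfold Gop
    linarith
  · intro x hx
    have h1 : 2 / D * δ < |x| := by
      refine lt_of_le_of_lt ?_ hx
      gcongr
      linarith
    rcases lt_abs.1 h1 with h | h
    · exact hGp x (by linarith)
    · exact hGm x (by linarith)
  · intro K hK
    set f1 : ℝ → ℝ := fun x => deriv (Ψ δ) (R x) + 1 with hf1
    set f2 : ℝ → ℝ := fun x => deriv (Ψ δ) (R x) - 1 with hf2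
    have hf1c : Continuous f1 := (hΨc.comp hRcont).add continuous_const
    have hf2c : Continuous f2 := (hΨc.comp hRcont).sub continuous_const
    have hint := aux_split (Gop Ψ δ R₀ S) f1 f2 xm xp hxm hxp hf1c hf2c hGm hGp
      (fun x _ h => by simp [Gop, hf1, Real.sign_of_neg (hneg x h), hR])
      (fun x h _ => by simp [Gop, hf2, Real.sign_of_pos (hpos x h), hR])
    have hΨeq : Ψ δ δ - Ψ δ (-δ) = 0 := by
      have h1 := hI δ hδ
      rw [Idelta, aux_split _ (fun r => deriv (Ψ δ) r + 1) (fun r => deriv (Ψ δ) r - 1) (-δ) δ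
        (by linarith) hδ (by fun_prop) (by fun_prop)
        (fun x h => by rw [hsm x h, Real.sign_of_neg (by linarith), sub_self])
        (fun x h => by rw [hsp x h.le, Real.sign_of_pos (by linarith), sub_self])
        (fun x _ h => by rw [Real.sign_of_neg h]; ring)
        (fun x h _ => by rw [Real.sign_of_pos h])] at h1
      rw [intervalIntegral.integral_eq_sub_of_hasDerivAt (f := fun r => Ψ δ r + r)
          (fun x _ => (hΨd x).hasDerivAt.add (hasDerivAt_id' x))
          (Continuous.intervalIntegrable (by fun_prop) _ _),
        intervalIntegral.integral_eq_sub_of_hasDerivAt (f := fun r => Ψ δ r - r)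
          (fun x _ => (hΨd x).hasDerivAt.sub (hasDerivAt_id' x))
          (Continuous.intervalIntegrable (by fun_prop) _ _)] at h1
      linarith
    have hi1 : ∫ x in xm..0, f1 x * (deriv R₀ x + deriv S x) = -Ψ δ (-δ) + δ := by
      rw [intervalIntegral.integral_eq_sub_of_hasDerivAt (f := fun x => Ψ δ (R x) + R x)
          (fun x _ => ?_) (Continuous.intervalIntegrable (by fun_prop) _ _)]
      · rw [hRat0, show R xm = -δ from hRxm, hΨ0]; ring
      · convert ((hΨd (R x)).hasDerivAt.comp x (hRR x)).add (hRR x) using 1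
        · rfl
        · simp only [hf1]; ring
    have hi2 : ∫ x in (0:ℝ)..xp, f2 x * (deriv R₀ x + deriv S x) = Ψ δ δ - δ := by
      rw [intervalIntegral.integral_eq_sub_of_hasDerivAt (f := fun x => Ψ δ (R x) - R x)
          (fun x _ => ?_) (Continuous.intervalIntegrable (by fun_prop) _ _)]
      · rw [hRat0, show R xp = δ from hRxp, hΨ0]; ring
      · convert ((hΨd (R x)).hasDerivAt.comp x (hRR x)).sub (hRR x) using 1
        · rfl
        · simp only [hf2]; ring
    set q := D + deriv S 0 with hq
    have hqD : D / 2 < q := (hder 0 hxm hxp).1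
    set L := ((K₀ : ℝ) + K) * (2 / D * δ) with hL
    have hLb : ∀ x, xm ≤ x → x ≤ xp → |q - (deriv R₀ x + deriv S x)| ≤ L := by
      intro x h1 h2
      have hx : |x| ≤ 2 / D * δ := abs_le.2 ⟨by linarith, by linarith⟩
      have e1 := hK₀.dist_le_mul 0 x
      have e2 := hK.dist_le_mul 0 x
      rw [Real.dist_eq, Real.dist_eq, zero_sub, abs_neg] at e1 e2
      have e3 := abs_add_le (deriv R₀ 0 - deriv R₀ x) (deriv S 0 - deriv S x)
      have e4 : q - (deriv R₀ x + deriv S x)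
        = (deriv R₀ 0 - deriv R₀ x) + (deriv S 0 - deriv S x) := by rw [hq, hDdef]; ring
      rw [e4]
      have e5 : ((K₀ : ℝ) + K) * |x| ≤ L := by rw [hL]; gcongr
      linarith
    have b1 := aux_est f1 _ xm 0 q (CΨ + 1) L hxm.le hf1c hR'c (fun x => by
      have := abs_add_le (deriv (Ψ δ) (R x)) 1
      rw [abs_one] at this
      linarith [hΨb (R x)]) (fun x h1 h2 => hLb x h1 (h2.trans hxp.le))
    have b2 := aux_est f2 _ 0 xp q (CΨ + 1) L hxp.le hf2c hR'c (fun x => by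
      have := abs_sub (deriv (Ψ δ) (R x)) 1
      rw [abs_one] at this
      linarith [hΨb (R x)]) (fun x h1 h2 => hLb x (hxm.le.trans h1) h2)
    rw [hi1] at b1
    rw [hi2] at b2
    rw [hint]
    set J1 := ∫ x in xm..0, f1 x
    set J2 := ∫ x in (0:ℝ)..xp, f2 x
    have hL0 : 0 ≤ L := by positivity
    have hqJ : q * |J1 + J2| ≤ (CΨ + 1) * L * (4 / D * δ) := by
      have e : q * (J1 + J2) = (q * J1 - (-Ψ δ (-δ) + δ)) + (q * J2 - (Ψ δ δ - δ)) := by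
        linarith
      have e2 : q * |J1 + J2| = |q * (J1 + J2)| := by
        rw [abs_mul, abs_of_pos (by linarith [half_pos hD] : 0 < q)]
      rw [e2, e]
      refine (abs_add_le _ _).trans ?_
      have e3 : (CΨ + 1) * L * (xp - xm) ≤ (CΨ + 1) * L * (4 / D * δ) := by
        gcongr
        have : 4 / D * δ = 2 / D * δ + 2 / D * δ := by ring
        linarith
      linarith
    have hJ : D / 2 * |J1 + J2| ≤ (CΨ + 1) * L * (4 / D * δ) :=
      (mul_le_mul_of_nonneg_right hqD.le (abs_nonneg _)).trans hqJ
    have hJ2 : |J1 + J2| ≤ (CΨ + 1) * ((K₀ : ℝ) + K) * (16 / D ^ 3) * δ ^ 2 := by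
      have e : (CΨ + 1) * L * (4 / D * δ)
          = D / 2 * ((CΨ + 1) * ((K₀ : ℝ) + K) * (16 / D ^ 3) * δ ^ 2) := by
        rw [hL]; field_simp; ring
      rw [e] at hJ
      exact le_of_mul_le_mul_left hJ (by positivity)
    refine hJ2.trans (mul_le_mul_of_nonneg_right ?_ (by positivity))
    have e1 : (K₀ : ℝ) + K ≤ (K₀ + 1) * (1 + K) := by
      nlinarith [K₀.coe_nonneg, K.coe_nonneg, mul_nonneg K₀.coe_nonneg K.coe_nonneg]
    calc (CΨ + 1) * ((K₀ : ℝ) + K) * (16 / D ^ 3)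
        ≤ (CΨ + 1) * ((K₀ + 1) * (1 + K)) * (16 / D ^ 3) := by gcongr
      _ = E * (1 + K) := by rw [hE]; ring
      _ ≤ (CΨ + 1 + 2 / D + E) * (1 + K) :=
        mul_le_mul_of_nonneg_right (by linarith) (by positivity)
end
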